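/- arXiv:1712.04916 — 2 statements merged into one kernel-verified Lean document; each statement's English description precedes it below -/
import Mathlib

section
/- Let n ≥ 2, let a ∈ (0,∞)ⁿ have pairwise distinct entries, and let s ∈ ℂⁿ satisfy Re(s_j − s_{j+1}) ≥ 2 for all j = 1,…,n−1 (with s_{n+1} := −n−1). Then f_n(s, D(a)) = [(2n−2)!/(n−1)!] · (∏_{j=1}^n a_j)^{s_n+n−1} · ∫_{(0,∞)^{n−1}} (Δ_{n−1}(x²)/Δ_n(a²)) · det M(x,a) · f_{n−1}(s', D(x)) dx, where s' := (s_1 − s_n − n, …, s_{n−1} − s_n − n) ∈ ℂ^{n−1}, and M(x,a) is the n×n matrix whose first row has all entries equal to 1 and whose (j+1,k)-entry, for j = 1,…,n−1 and k = 1,…,n, equals (a_k − x_j)·1{a_k ≥ x_j}. -/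
open MeasureTheory Matrix
open scoped BigOperators

noncomputable section

instance matrixMeasurableSpace {l : Type*} [Fintype l] : MeasurableSpace (Matrix l l ℝ) :=
  inferInstanceAs (MeasurableSpace (l → l → ℝ))

/-- The orthogonal group `O(m)` as a subtype of `m × m` real matrices. -/
abbrev OG (m : ℕ) := Matrix.orthogonalGroup (Fin m) ℝ

/-- `t ^ w` for a real `t ≥ 0` and complex `w`, with the convention `0 ^ w = 0`. -/
def cpw (t : ℝ) (w : ℂ) : ℂ := if t = 0 then 0 else Complex.exp (w * Real.log t)

/-- The `2n × 2n` real antisymmetric matrix `D(a) = diag(a₁ J, …, aₙ J)`,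
`J = [[0,1],[-1,0]]`. -/
def Dmat {n : ℕ} (a : Fin n → ℝ) : Matrix (Fin (2 * n)) (Fin (2 * n)) ℝ :=
  Matrix.of fun i j =>
    if i.val / 2 = j.val / 2 then
      a ⟨i.val / 2, by have := i.isLt; omega⟩ *
        (if i.val % 2 = 0 ∧ j.val % 2 = 1 then 1
          else if i.val % 2 = 1 ∧ j.val % 2 = 0 then -1 else 0)
    else 0

/-- Vandermonde product `Δ_m(x) = ∏_{j<k} (x_k - x_j)`. -/
def vdm {m : ℕ} {R : Type*} [CommRing R] (x : Fin m → R) : R :=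
  ∏ p ∈ Finset.univ.filter (fun p : Fin m × Fin m => p.1 < p.2), (x p.2 - x p.1)

/-- `s_{n+1} := -n-1` convention: the `j`-th exponent `(s_j - s_{j+1})/2 - 1`. -/
def expo (n : ℕ) (s : Fin n → ℂ) (j : Fin n) : ℂ :=
  (s j - (if h : j.val + 1 < n then s ⟨j.val + 1, h⟩ else -(n : ℂ) - 1)) / 2 - 1

/-- The spherical-type group integral
`f_n(s,X) = ∫_{O(2n)} ∏_j det((kXkᵀ)_{[2j]})^{(s_j-s_{j+1})/2-1} d*k`. -/
def sphInt (n : ℕ) (μ : Measure (OG (2 * n))) (s : Fin n → ℂ)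
    (X : Matrix (Fin (2 * n)) (Fin (2 * n)) ℝ) : ℂ :=
  ∫ k : OG (2 * n), ∏ j : Fin n,
    cpw ((((k : Matrix (Fin (2 * n)) (Fin (2 * n)) ℝ) * X *
        (k : Matrix (Fin (2 * n)) (Fin (2 * n)) ℝ)ᵀ).submatrix
          (Fin.castLE (by have := j.isLt; omega : 2 * (j.val + 1) ≤ 2 * n))
          (Fin.castLE (by have := j.isLt; omega : 2 * (j.val + 1) ≤ 2 * n))).det)
      (expo n s j) ∂μ

/-- A bounded measurable `O(m)`-invariant test function on antisymmetric matrices. -/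
def IsInvTest (m : ℕ) (φ : Matrix (Fin m) (Fin m) ℝ → ℝ) : Prop :=
  Measurable φ ∧ (∃ C, ∀ X, |φ X| ≤ C) ∧
    ∀ X : Matrix (Fin m) (Fin m) ℝ, Xᵀ = -X →
      ∀ k ∈ Matrix.orthogonalGroup (Fin m) ℝ, φ (k * X * kᵀ) = φ X

/-- The matrix `M(x,a)`: first row all ones, `(j+1,k)` entry `(a_k - x_j)·1{a_k ≥ x_j}`. -/
def Mxa {n : ℕ} (x : Fin (n - 1) → ℝ) (a : Fin n → ℝ) (hn : 2 ≤ n) :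
    Matrix (Fin n) (Fin n) ℝ :=
  Matrix.of fun b c =>
    if hb : b.val = 0 then 1
    else
      if x ⟨b.val - 1, by have := b.isLt; omega⟩ ≤ a c then
        a c - x ⟨b.val - 1, by have := b.isLt; omega⟩
      else 0

open scoped ENNReal

/-!
Remove from `k D(a) kᵀ` the last row and column, twice. If `S` is a skew-symmetric matrix and `k` is
Haar distributed, the corner of `k S kᵀ` depends only on the last row of `k`, a uniform unit vector,
and the eigenvalue moduli of the corner are the roots of a secular equation whose weights are the
squared lengths of the components of that vector in the eigenspaces of `S²`. A Gaussian vector makes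
these squared lengths independent Gamma variables, and the change of variables from roots to weights
has a Cauchy determinant as its Jacobian. This gives the joint density of the eigenvalue moduli of
the corner: for `S = D(a)` it is carried by the `b` interlacing `a`, for `S = 0 ⊕ D(b)` by the `x`
interlacing `(0, b)`. In the product of the two densities the factors depending on `b` cancel, so
integrating out `b` leaves the volume of a box, which is `det M(x, a)` for sorted `x` and `a`. As
the corner can be conjugated by an independent Haar distributed matrix without changing its law, the
`2m × 2m` corner of `k D(a) kᵀ` is distributed as `k' D(x) k'ᵀ` with `x` of this density, and the
integrand of `f_n` is a function of this corner times a power of `det D(a)`.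
-/

/-! ### Conjugation by orthogonal matrices and corners -/

instance borelSpace_realMatrix {ι : Type*} [Fintype ι] : BorelSpace (Matrix ι ι ℝ) :=
  inferInstanceAs (BorelSpace (ι → ι → ℝ))

instance secondCountableTopology_realMatrix {ι : Type*} [Finite ι] :
    SecondCountableTopology (Matrix ι ι ℝ) :=
  inferInstanceAs (SecondCountableTopology (ι → ι → ℝ))

instance compactSpace_OG {N : ℕ} : CompactSpace (OG N) := by
  refine isCompact_iff_compactSpace.mp <| IsCompact.of_isClosed_subset
    (isCompact_univ_pi fun _ => isCompact_univ_pi fun _ => isCompact_Icc (a := (-1 : ℝ)) (b := 1))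
    (isClosed_unitary (R := Matrix (Fin N) (Fin N) ℝ)) fun A hA i _ j _ => ?_
  exact abs_le.mp (entry_norm_bound_of_unitary (𝕜 := ℝ) hA i j)

lemma isMulRightInvariant_of_isHaarMeasure {G : Type*} [Group G] [TopologicalSpace G]
    [IsTopologicalGroup G] [CompactSpace G] [MeasurableSpace G] [BorelSpace G] (μ : Measure G)
    [μ.IsHaarMeasure] [IsProbabilityMeasure μ] : μ.IsMulRightInvariant where
  map_mul_right_eq_self g :=
    have : IsProbabilityMeasure (μ.map (· * g)) :=
      Measure.isProbabilityMeasure_map (by fun_prop)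
    Measure.isHaarMeasure_eq_of_isProbabilityMeasure _ _

lemma exists_isHaarMeasure_isProbabilityMeasure (G : Type*) [Group G] [TopologicalSpace G]
    [IsTopologicalGroup G] [CompactSpace G] [MeasurableSpace G] [BorelSpace G] :
    ∃ ν : Measure G, ν.IsHaarMeasure ∧ IsProbabilityMeasure ν :=
  ⟨Measure.haarMeasure ⊤, inferInstance, ⟨Measure.haarMeasure_self (G := G) (K₀ := ⊤)⟩⟩

lemma measurable_matrix_iff {α ι : Type*} [MeasurableSpace α] [Fintype ι]
    {f : α → Matrix ι ι ℝ} : Measurable f ↔ ∀ i j, Measurable fun x => f x i j := by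
  refine ⟨fun hf i j => ?_, fun hf => measurable_pi_lambda _ fun i => measurable_pi_lambda _ (hf i)⟩
  exact (measurable_pi_apply j).comp ((measurable_pi_apply i).comp hf)

section Conjugation

variable {N : ℕ}

lemma mul_transpose_OG (k : OG N) :
    (k : Matrix (Fin N) (Fin N) ℝ) * (k : Matrix (Fin N) (Fin N) ℝ)ᵀ = 1 :=
  (mem_orthogonalGroup_iff _ _).1 k.2

lemma transpose_mul_OG (k : OG N) :
    (k : Matrix (Fin N) (Fin N) ℝ)ᵀ * (k : Matrix (Fin N) (Fin N) ℝ) = 1 :=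
  (mem_orthogonalGroup_iff' _ _).1 k.2

lemma abs_det_OG (k : OG N) : |(k : Matrix (Fin N) (Fin N) ℝ).det| = 1 := by
  have h := congrArg det (mul_transpose_OG k)
  rw [det_mul, det_transpose, det_one] at h
  rcases mul_self_eq_one_iff.1 h with h | h <;> simp [h]

/-- The action `X ↦ k X kᵀ` of the orthogonal group on square matrices. -/
def orthConj (k : OG N) (X : Matrix (Fin N) (Fin N) ℝ) : Matrix (Fin N) (Fin N) ℝ :=
  (k : Matrix (Fin N) (Fin N) ℝ) * X * (k : Matrix (Fin N) (Fin N) ℝ)ᵀ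

/-- The matrix with its last row and column removed. -/
def corner {R : Type*} (X : Matrix (Fin (N + 1)) (Fin (N + 1)) R) : Matrix (Fin N) (Fin N) R :=
  X.submatrix Fin.castSucc Fin.castSucc

lemma orthConj_mul (k h : OG N) (X : Matrix (Fin N) (Fin N) ℝ) :
    orthConj (k * h) X = orthConj k (orthConj h X) := by
  simp [orthConj, Matrix.mul_assoc, Matrix.transpose_mul]

lemma det_orthConj (k : OG N) (X : Matrix (Fin N) (Fin N) ℝ) : (orthConj k X).det = X.det := by
  have h := congrArg det (mul_transpose_OG k)
  rw [det_mul, det_one] at h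
  rw [orthConj, det_mul, det_mul, mul_right_comm, h, one_mul]

lemma transpose_orthConj_of_skew (k : OG N) {X : Matrix (Fin N) (Fin N) ℝ} (hX : Xᵀ = -X) :
    (orthConj k X)ᵀ = -orthConj k X := by
  simp [orthConj, Matrix.transpose_mul, hX, Matrix.mul_assoc]

lemma transpose_corner_of_skew {X : Matrix (Fin (N + 1)) (Fin (N + 1)) ℝ} (hX : Xᵀ = -X) :
    (corner X)ᵀ = -corner X := by
  rw [corner, transpose_submatrix, hX]; rfl

lemma measurable_orthConj {α : Type*} [MeasurableSpace α] {f : α → OG N}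
    {g : α → Matrix (Fin N) (Fin N) ℝ} (hf : Measurable f) (hg : Measurable g) :
    Measurable fun x => orthConj (f x) (g x) := by
  have hcont : Continuous fun p : OG N × Matrix (Fin N) (Fin N) ℝ => orthConj p.1 p.2 := by
    unfold orthConj
    fun_prop
  have hmeas := hcont.measurable
  exact hmeas.comp (f := fun x => (f x, g x)) (hf.prodMk hg)

lemma measurable_corner : Measurable (corner (N := N) (R := ℝ)) := by
  have hcont : Continuous (corner (N := N) (R := ℝ)) := by unfold corner; fun_prop
  exact hcont.measurable

lemma measurable_corner_orthConj (X : Matrix (Fin (N + 1)) (Fin (N + 1)) ℝ) :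
    Measurable fun k : OG (N + 1) => corner (orthConj k X) :=
  measurable_corner.comp (measurable_orthConj measurable_id measurable_const)

/-- The embedding `h ↦ h ⊕ 1` of `O(N)` into `O(N + 1)` as the stabilizer of the last basis
vector. -/
def embLast (h : OG N) : OG (N + 1) :=
  ⟨reindex finSumFinEquiv finSumFinEquiv
      (fromBlocks (h : Matrix (Fin N) (Fin N) ℝ) 0 0 (1 : Matrix (Fin 1) (Fin 1) ℝ)), by
    rw [mem_orthogonalGroup_iff, transpose_reindex, fromBlocks_transpose, reindex_apply,
      reindex_apply, submatrix_mul_equiv, fromBlocks_multiply]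
    simp [mul_transpose_OG]⟩

@[simp] lemma embLast_castSucc_castSucc (h : OG N) (i j : Fin N) :
    (embLast h).1 i.castSucc j.castSucc = h.1 i j := by
  simp [embLast]

@[simp] lemma embLast_castSucc_last (h : OG N) (i : Fin N) :
    (embLast h).1 i.castSucc (Fin.last N) = 0 := by
  simp [embLast]

lemma embLast_last (h : OG N) :
    (embLast h).1 (Fin.last N) = Pi.single (Fin.last N) 1 := by
  ext j
  induction j using Fin.lastCases <;>
    simp [embLast]

lemma corner_orthConj_embLast (h : OG N) (X : Matrix (Fin (N + 1)) (Fin (N + 1)) ℝ) :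
    corner (orthConj (embLast h) X) = orthConj h (corner X) := by
  ext i j
  simp [corner, orthConj, Matrix.mul_apply, Fin.sum_univ_castSucc]

lemma exists_eq_embLast_of_last_row {k : OG (N + 1)}
    (hk : k.1 (Fin.last N) = Pi.single (Fin.last N) 1) : ∃ h : OG N, k = embLast h := by
  have hcol (i : Fin N) : k.1 i.castSucc (Fin.last N) = 0 := by
    simpa [Matrix.mul_apply, Fin.sum_univ_castSucc, hk] using
      congrFun₂ (mul_transpose_OG k) i.castSucc (Fin.last N)
  have horth : corner k.1 * (corner k.1)ᵀ = 1 := by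
    ext i j
    simpa [Matrix.mul_apply, Fin.sum_univ_castSucc, hcol, Matrix.one_apply, corner] using
      congrFun₂ (mul_transpose_OG k) i.castSucc j.castSucc
  refine ⟨⟨corner k.1, (mem_orthogonalGroup_iff _ _).2 horth⟩, Subtype.ext ?_⟩
  ext i j
  induction i using Fin.lastCases with
  | last => rw [hk, embLast_last]
  | cast i => induction j using Fin.lastCases <;> simp [hcol, corner]

lemma exists_eq_embLast_mul_of_last_row_eq {k g : OG (N + 1)}
    (h : k.1 (Fin.last N) = g.1 (Fin.last N)) : ∃ e : OG N, k = embLast e * g := by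
  obtain ⟨e, he⟩ := exists_eq_embLast_of_last_row (k := k * g⁻¹) <| by
    calc (k.1 * g.1ᵀ) (Fin.last N) = (g.1 * g.1ᵀ) (Fin.last N) := by
          ext j; simp only [Matrix.mul_apply, h]
      _ = Pi.single (Fin.last N) 1 := by
          rw [mul_transpose_OG]; ext j; simp [Matrix.one_apply, Pi.single_apply, eq_comm]
  exact ⟨e, by rw [← he, inv_mul_cancel_right]⟩

end Conjugation

section OrbitAverage

variable {N : ℕ}

/-- The average of `φ` over the orthogonal conjugates of a matrix. -/
def orbitAvg (ν : Measure (OG N)) (φ : Matrix (Fin N) (Fin N) ℝ → ℝ≥0∞)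
    (Y : Matrix (Fin N) (Fin N) ℝ) : ℝ≥0∞ := ∫⁻ h, φ (orthConj h Y) ∂ν

lemma measurable_orbitAvg (ν : Measure (OG N)) [SFinite ν]
    {φ : Matrix (Fin N) (Fin N) ℝ → ℝ≥0∞} (hφ : Measurable φ) : Measurable (orbitAvg ν φ) :=
  (hφ.comp (measurable_orthConj measurable_snd measurable_fst)).lintegral_prod_right'

lemma orbitAvg_orthConj (ν : Measure (OG N)) [ν.IsMulRightInvariant]
    (φ : Matrix (Fin N) (Fin N) ℝ → ℝ≥0∞) (g : OG N) (Y : Matrix (Fin N) (Fin N) ℝ) :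
    orbitAvg ν φ (orthConj g Y) = orbitAvg ν φ Y := by
  simp_rw [orbitAvg, ← orthConj_mul]
  exact lintegral_mul_right_eq_self (fun h => φ (orthConj h Y)) g

lemma lintegral_corner_eq_lintegral_orbitAvg (μ : Measure (OG (N + 1))) [SFinite μ]
    [μ.IsMulLeftInvariant] (ν : Measure (OG N)) [IsProbabilityMeasure ν]
    {φ : Matrix (Fin N) (Fin N) ℝ → ℝ≥0∞} (hφ : Measurable φ)
    (X : Matrix (Fin (N + 1)) (Fin (N + 1)) ℝ) :
    ∫⁻ k, φ (corner (orthConj k X)) ∂μ = ∫⁻ k, orbitAvg ν φ (corner (orthConj k X)) ∂μ := by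
  have hmeas : AEMeasurable (Function.uncurry fun (k : OG (N + 1)) (h : OG N) =>
      φ (orthConj h (corner (orthConj k X)))) (μ.prod ν) :=
    (hφ.comp (measurable_orthConj measurable_snd
      ((measurable_corner_orthConj X).comp measurable_fst))).aemeasurable
  have hinv (h : OG N) : ∫⁻ k, φ (corner (orthConj (embLast h * k) X)) ∂μ =
      ∫⁻ k, φ (corner (orthConj k X)) ∂μ :=
    lintegral_mul_left_eq_self (fun k => φ (corner (orthConj k X))) (embLast h)
  simp_rw [orbitAvg]
  rw [lintegral_lintegral_swap hmeas]
  simp_rw [← corner_orthConj_embLast, ← orthConj_mul, hinv, lintegral_const, measure_univ, mul_one]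

end OrbitAverage

/-! ### Householder reflections and the Gaussian law of the last row -/

section UnitVector

variable {ι : Type*} [Fintype ι]

lemma dotProduct_self_pos {v : ι → ℝ} (hv : v ≠ 0) : 0 < v ⬝ᵥ v := by
  simpa using dotProduct_self_star_pos_iff.2 hv

/-- The Euclidean normalization of a vector; it is `0` at `v = 0`. -/
def unitVec (v : ι → ℝ) : ι → ℝ := (√(v ⬝ᵥ v))⁻¹ • v

lemma unitVec_dotProduct_self {v : ι → ℝ} (hv : v ≠ 0) : unitVec v ⬝ᵥ unitVec v = 1 := by
  have hpos := dotProduct_self_pos hv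
  rw [unitVec, smul_dotProduct, dotProduct_smul, smul_eq_mul, smul_eq_mul, ← mul_assoc, ← mul_inv,
    Real.mul_self_sqrt hpos.le, inv_mul_cancel₀ hpos.ne']

lemma unitVec_smul (v : ι → ℝ) {c : ℝ} (hc : 0 < c) : unitVec (c • v) = unitVec v := by
  rw [unitVec, unitVec, smul_dotProduct, dotProduct_smul, smul_eq_mul, smul_eq_mul, ← mul_assoc,
    Real.sqrt_mul (by positivity), Real.sqrt_mul_self hc.le, smul_smul, mul_inv,
    mul_right_comm, inv_mul_cancel₀ hc.ne', one_mul]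

lemma unitVec_of_dotProduct_self {v : ι → ℝ} (hv : v ⬝ᵥ v = 1) : unitVec v = v := by
  simp [unitVec, hv]

end UnitVector

section Householder

variable {ι : Type*} [Fintype ι] [DecidableEq ι]

/-- The reflection in the hyperplane orthogonal to `w`; it is the identity at `w = 0`. -/
def householder (w : ι → ℝ) : Matrix ι ι ℝ := 1 - (2 / (w ⬝ᵥ w)) • vecMulVec w w

lemma transpose_householder (w : ι → ℝ) : (householder w)ᵀ = householder w := by
  simp [householder, transpose_vecMulVec]

lemma householder_mulVec (w v : ι → ℝ) :
    householder w *ᵥ v = v - (2 / (w ⬝ᵥ w) * (w ⬝ᵥ v)) • w := by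
  simp [householder, sub_mulVec, smul_mulVec, vecMulVec_mulVec, smul_smul]

lemma householder_mul_self (w : ι → ℝ) : householder w * householder w = 1 := by
  refine ext_of_mulVec_single fun i => ?_
  rw [← mulVec_mulVec, householder_mulVec, householder_mulVec, one_mulVec]
  rcases eq_or_ne w 0 with rfl | hw
  · simp
  · have := (dotProduct_self_pos hw).ne'
    rw [dotProduct_sub, dotProduct_smul, smul_eq_mul, sub_sub, ← add_smul, sub_eq_self]
    convert zero_smul ℝ w using 2
    field_simp
    ring

lemma householder_sub_mulVec {u v : ι → ℝ} (h : u ⬝ᵥ u = v ⬝ᵥ v) :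
    householder (u - v) *ᵥ v = u := by
  rcases eq_or_ne u v with rfl | huv
  · simp [householder_mulVec]
  · have hpos := (dotProduct_self_pos (sub_ne_zero.2 huv)).ne'
    have hdot : (u - v) ⬝ᵥ (u - v) = -2 * ((u - v) ⬝ᵥ v) := by
      simp only [sub_dotProduct, dotProduct_sub, h, dotProduct_comm v u]
      ring
    have hcoef : 2 / ((u - v) ⬝ᵥ (u - v)) * ((u - v) ⬝ᵥ v) = -1 := by
      rw [hdot] at hpos ⊢
      have := right_ne_zero_of_mul hpos
      field_simp
    rw [householder_mulVec, hcoef, neg_one_smul, sub_neg_eq_add, add_sub_cancel]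

/-- An orthogonal matrix, depending measurably on `v ≠ 0`, whose last row is the direction
of `v`. -/
def lastRowReflection {N : ℕ} (v : Fin (N + 1) → ℝ) : OG (N + 1) :=
  ⟨householder (unitVec v - Pi.single (Fin.last N) 1), (mem_orthogonalGroup_iff _ _).2 <| by
    rw [transpose_householder, householder_mul_self]⟩

variable {N : ℕ}

lemma lastRowReflection_last {v : Fin (N + 1) → ℝ} (hv : v ≠ 0) :
    (lastRowReflection v).1 (Fin.last N) = unitVec v := by
  have hnorm : unitVec v ⬝ᵥ unitVec v =
      Pi.single (Fin.last N) 1 ⬝ᵥ (Pi.single (Fin.last N) 1 : Fin (N + 1) → ℝ) := by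
    simp [unitVec_dotProduct_self hv]
  rw [← householder_sub_mulVec hnorm, mulVec_single_one, ← row_transpose, transpose_householder]
  rfl

lemma lastRowReflection_smul (v : Fin (N + 1) → ℝ) {c : ℝ} (hc : 0 < c) :
    lastRowReflection (c • v) = lastRowReflection v := by
  simp only [lastRowReflection, unitVec_smul v hc]

lemma measurable_lastRowReflection : Measurable (lastRowReflection (N := N)) := by
  refine Measurable.subtype_mk (measurable_matrix_iff.2 fun i j => ?_)
  simp only [householder, unitVec, Matrix.sub_apply, Matrix.smul_apply, vecMulVec_apply,
    dotProduct, Pi.sub_apply, Pi.smul_apply]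
  fun_prop

end Householder

section GaussianRow

/-- The unnormalized standard Gaussian density `exp (-|v|²)`. -/
def gaussWeight {ι : Type*} [Fintype ι] (v : ι → ℝ) : ℝ≥0∞ :=
  ENNReal.ofReal (Real.exp (-(v ⬝ᵥ v)))

lemma measurable_gaussWeight {ι : Type*} [Fintype ι] : Measurable (gaussWeight (ι := ι)) := by
  unfold gaussWeight dotProduct
  fun_prop

variable {N : ℕ}

lemma gaussWeight_vecMul (v : Fin N → ℝ) (k : OG N) : gaussWeight (v ᵥ* k.1) = gaussWeight v := by
  rw [gaussWeight, gaussWeight, ← dotProduct_mulVec, ← vecMul_transpose, vecMul_vecMul,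
    mul_transpose_OG, vecMul_one]

lemma measurable_vecMul : Measurable fun p : (Fin N → ℝ) × OG N => p.1 ᵥ* p.2.1 :=
  (continuous_fst.matrix_vecMul (continuous_subtype_val.comp continuous_snd)).measurable

lemma lintegral_vecMul (k : OG N) {f : (Fin N → ℝ) → ℝ≥0∞} (hf : Measurable f) :
    ∫⁻ v, f (v ᵥ* k.1) = ∫⁻ v, f v := by
  have hdet : |k.1ᵀ.det| = 1 := by rw [det_transpose, abs_det_OG]
  have hmap := Real.map_matrix_volume_pi_eq_smul_volume_pi (M := k.1ᵀ)
    (abs_pos.1 (hdet ▸ one_pos))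
  rw [abs_inv, hdet, inv_one, ENNReal.ofReal_one, one_smul] at hmap
  conv_rhs => rw [← hmap]
  rw [lintegral_map hf (LinearMap.continuous_of_finiteDimensional _).measurable]
  simp only [toLin'_apply, mulVec_transpose]

variable (μ : Measure (OG (N + 1))) [μ.IsMulLeftInvariant]

lemma lintegral_vecMul_eq_lintegral_last_row {F : (Fin (N + 1) → ℝ) → ℝ≥0∞}
    (hF : ∀ (c : ℝ) v, 0 < c → F (c • v) = F v) {v : Fin (N + 1) → ℝ} (hv : v ≠ 0) :
    ∫⁻ k : OG (N + 1), F (v ᵥ* k.1) ∂μ = ∫⁻ k : OG (N + 1), F (k.1 (Fin.last N)) ∂μ := by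
  rw [← lintegral_mul_left_eq_self (fun k : OG (N + 1) => F (k.1 (Fin.last N)))
    (lastRowReflection v)]
  refine lintegral_congr fun k => ?_
  have hrow : ((lastRowReflection v * k : OG (N + 1)).1 (Fin.last N)) = unitVec v ᵥ* k.1 := by
    rw [← lastRowReflection_last hv]; rfl
  rw [hrow, unitVec, smul_vecMul, hF _ _ (inv_pos.2 (Real.sqrt_pos.2 (dotProduct_self_pos hv)))]

/-- Both sides compute the integral of `gaussWeight v * F (v ᵥ* k)` over `v` and `k`. -/
lemma lintegral_gaussWeight_mul_lintegral_last_row [IsProbabilityMeasure μ]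
    {F : (Fin (N + 1) → ℝ) → ℝ≥0∞} (hFm : Measurable F)
    (hF : ∀ (c : ℝ) v, 0 < c → F (c • v) = F v) :
    (∫⁻ v : Fin (N + 1) → ℝ, gaussWeight v) * ∫⁻ k : OG (N + 1), F (k.1 (Fin.last N)) ∂μ =
      ∫⁻ v, gaussWeight v * F v := by
  have hmeas : AEMeasurable (Function.uncurry fun v (k : OG (N + 1)) =>
      gaussWeight v * F (v ᵥ* k.1)) (volume.prod μ) :=
    ((measurable_gaussWeight.comp measurable_fst).mul (hFm.comp measurable_vecMul)).aemeasurable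
  have hne : ∀ᵐ v : Fin (N + 1) → ℝ, v ≠ 0 := by simp [ae_iff]
  calc (∫⁻ v : Fin (N + 1) → ℝ, gaussWeight v) * ∫⁻ k : OG (N + 1), F (k.1 (Fin.last N)) ∂μ
      = ∫⁻ v : Fin (N + 1) → ℝ, ∫⁻ k : OG (N + 1), gaussWeight v * F (v ᵥ* k.1) ∂μ := by
        rw [← lintegral_mul_const _ measurable_gaussWeight]
        refine lintegral_congr_ae (hne.mono fun v hv => ?_)
        have hrow : Measurable fun k : OG (N + 1) => F (v ᵥ* k.1) :=
          hFm.comp (measurable_vecMul.comp measurable_prodMk_left)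
        simp only [lintegral_const_mul _ hrow, lintegral_vecMul_eq_lintegral_last_row μ hF hv]
    _ = ∫⁻ k : OG (N + 1), (∫⁻ v, gaussWeight (v ᵥ* k.1) * F (v ᵥ* k.1)) ∂μ := by
        rw [lintegral_lintegral_swap hmeas]
        simp_rw [gaussWeight_vecMul]
    _ = ∫⁻ v, gaussWeight v * F v := by
        have hk (k : OG (N + 1)) := lintegral_vecMul k (measurable_gaussWeight.mul hFm)
        simp only [Pi.mul_apply] at hk
        simp_rw [hk, lintegral_const, measure_univ, mul_one]

lemma lintegral_gaussWeight_mul_lintegral_corner [IsProbabilityMeasure μ]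
    {Φ : Matrix (Fin N) (Fin N) ℝ → ℝ≥0∞} (hΦ : Measurable Φ)
    (hinv : ∀ (h : OG N) Y, Φ (orthConj h Y) = Φ Y) (X : Matrix (Fin (N + 1)) (Fin (N + 1)) ℝ) :
    (∫⁻ v : Fin (N + 1) → ℝ, gaussWeight v) * ∫⁻ k, Φ (corner (orthConj k X)) ∂μ =
      ∫⁻ v, gaussWeight v * Φ (corner (orthConj (lastRowReflection v) X)) := by
  have hrow (k : OG (N + 1)) : Φ (corner (orthConj k X)) =
      Φ (corner (orthConj (lastRowReflection (k.1 (Fin.last N))) X)) := by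
    have hunit : k.1 (Fin.last N) ⬝ᵥ k.1 (Fin.last N) = 1 := by
      simpa [Matrix.mul_apply'] using congrFun₂ (mul_transpose_OG k) (Fin.last N) (Fin.last N)
    have hne : k.1 (Fin.last N) ≠ 0 := by
      intro h; simp [h] at hunit
    obtain ⟨e, he⟩ := exists_eq_embLast_mul_of_last_row_eq (k := k)
      (g := lastRowReflection (k.1 (Fin.last N)))
      (by rw [lastRowReflection_last hne, unitVec_of_dotProduct_self hunit])
    conv_lhs => rw [he, orthConj_mul, corner_orthConj_embLast, hinv]
  rw [lintegral_congr hrow]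
  exact lintegral_gaussWeight_mul_lintegral_last_row μ
    (hΦ.comp ((measurable_corner_orthConj X).comp measurable_lastRowReflection))
    fun c v hc => by simp only [Function.comp_apply, lastRowReflection_smul v hc]

end GaussianRow

/-! ### Normal forms of skew-symmetric matrices -/

section Skew

variable {ι : Type*} [Fintype ι] {C : Matrix ι ι ℝ}

lemma dotProduct_mulVec_of_skew (hC : Cᵀ = -C) (v w : ι → ℝ) :
    v ⬝ᵥ (C *ᵥ w) = -((C *ᵥ v) ⬝ᵥ w) := by
  rw [dotProduct_mulVec, ← mulVec_transpose, hC, neg_mulVec, neg_dotProduct]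

lemma dotProduct_mulVec_self_of_skew (hC : Cᵀ = -C) (v : ι → ℝ) : v ⬝ᵥ (C *ᵥ v) = 0 := by
  have h := dotProduct_mulVec_of_skew hC v v
  rw [dotProduct_comm (C *ᵥ v)] at h
  linarith

lemma dotProduct_eq_zero_of_skew {v w : ι → ℝ} {x y : ℝ} (hC : Cᵀ = -C)
    (hv : C *ᵥ (C *ᵥ v) = x • v) (hw : C *ᵥ (C *ᵥ w) = y • w) (hxy : x ≠ y) : v ⬝ᵥ w = 0 := by
  have h : v ⬝ᵥ (C *ᵥ (C *ᵥ w)) = (C *ᵥ (C *ᵥ v)) ⬝ᵥ w := by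
    rw [dotProduct_mulVec_of_skew hC, dotProduct_mulVec_of_skew hC, neg_neg]
  rw [hv, hw, dotProduct_smul, smul_dotProduct, smul_eq_mul, smul_eq_mul] at h
  exact (mul_eq_zero.1 (show (x - y) * (v ⬝ᵥ w) = 0 by linarith)).resolve_left (sub_ne_zero.2 hxy)

end Skew

section BlockForm

variable {m : ℕ}

/-- The pairing `(p, j) ↦ 2j + p` of the rows of `D(b)` into `2 × 2` blocks. -/
def pairEquiv (m : ℕ) : Fin 2 × Fin m ≃ Fin (2 * m) :=
  (Equiv.prodComm _ _).trans (finProdFinEquiv.trans (finCongr (mul_comm m 2)))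

/-- The index of the `2 × 2` block of `D(b)` that contains row `i`. -/
def blockOf (i : Fin (2 * m)) : Fin m := ((pairEquiv m).symm i).2

@[simp] lemma blockOf_pairEquiv (p : Fin 2 × Fin m) : blockOf (pairEquiv m p) = p.2 := by
  rw [blockOf, Equiv.symm_apply_apply]

lemma pairEquiv_val (p : Fin 2 × Fin m) : (pairEquiv m p).val = p.1 + 2 * p.2 := rfl

/-- The block `c J` of the normal form, `J = [[0,1],[-1,0]]`. -/
def skewBlock (c : ℝ) : Matrix (Fin 2) (Fin 2) ℝ := !![0, c; -c, 0]

lemma transpose_skewBlock (c : ℝ) : (skewBlock c)ᵀ = -skewBlock c := by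
  ext i j; fin_cases i <;> fin_cases j <;> simp [skewBlock]

lemma skewBlock_mul_self (c : ℝ) : skewBlock c * skewBlock c = diagonal fun _ => -c ^ 2 := by
  ext i j; fin_cases i <;> fin_cases j <;> simp [skewBlock, pow_two]

lemma Dmat_eq_submatrix_blockDiagonal (b : Fin m → ℝ) :
    Dmat b = (blockDiagonal fun j => skewBlock (b j)).submatrix
      (pairEquiv m).symm (pairEquiv m).symm := by
  ext i j
  obtain ⟨⟨p, i⟩, rfl⟩ := (pairEquiv m).surjective i
  obtain ⟨⟨q, j⟩, rfl⟩ := (pairEquiv m).surjective j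
  have hp : ∀ (p : Fin 2) (l : Fin m), (p.val + 2 * l.val) / 2 = l := by intro p l; omega
  have hq : ∀ (p : Fin 2) (l : Fin m), (p.val + 2 * l.val) % 2 = p := by intro p l; omega
  simp only [Dmat, of_apply, submatrix_apply, Equiv.symm_apply_apply, blockDiagonal_apply,
    pairEquiv_val, hp, hq, Fin.val_inj, skewBlock]
  fin_cases p <;> fin_cases q <;> simp

lemma transpose_Dmat (b : Fin m → ℝ) : (Dmat b)ᵀ = -Dmat b := by
  simp_rw [Dmat_eq_submatrix_blockDiagonal, transpose_submatrix, blockDiagonal_transpose,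
    transpose_skewBlock]
  exact congrArg (submatrix · _ _) (blockDiagonal_neg fun j => skewBlock (b j))

lemma Dmat_mul_self (b : Fin m → ℝ) :
    Dmat b * Dmat b = -diagonal (fun i => b (blockOf i) ^ 2) := by
  rw [Dmat_eq_submatrix_blockDiagonal, submatrix_mul_equiv, ← blockDiagonal_mul]
  simp_rw [skewBlock_mul_self]
  rw [blockDiagonal_diagonal, submatrix_diagonal_equiv, diagonal_neg]
  rfl

/-- `0 ⊕ D(b)`, the normal form of a skew-symmetric matrix of odd size. -/
def oddDmat (b : Fin m → ℝ) : Matrix (Fin (2 * m + 1)) (Fin (2 * m + 1)) ℝ :=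
  Matrix.of (Fin.cons 0 fun i => Fin.cons 0 (Dmat b i))

@[simp] lemma oddDmat_succ_succ (b : Fin m → ℝ) (i j : Fin (2 * m)) :
    oddDmat b i.succ j.succ = Dmat b i j := by simp [oddDmat]

@[simp] lemma oddDmat_succ_zero (b : Fin m → ℝ) (i : Fin (2 * m)) :
    oddDmat b i.succ 0 = 0 := by simp [oddDmat]

@[simp] lemma oddDmat_zero (b : Fin m → ℝ) (i : Fin (2 * m + 1)) : oddDmat b 0 i = 0 := by
  simp [oddDmat]

lemma transpose_oddDmat (b : Fin m → ℝ) : (oddDmat b)ᵀ = -oddDmat b := by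
  ext i j
  cases i using Fin.cases with
  | zero => cases j using Fin.cases <;> simp
  | succ i =>
    cases j using Fin.cases with
    | zero => simp
    | succ j => simpa using congrFun₂ (transpose_Dmat b) i j

lemma oddDmat_mul_self (b : Fin m → ℝ) :
    oddDmat b * oddDmat b =
      -diagonal (Fin.cons 0 fun i : Fin (2 * m) => b (blockOf i) ^ 2) := by
  ext i j
  rw [Matrix.mul_apply, Fin.sum_univ_succ]
  cases i using Fin.cases with
  | zero => cases j using Fin.cases <;> simp [(Fin.succ_ne_zero _).symm]
  | succ i =>
    cases j using Fin.cases with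
    | zero => simp
    | succ j =>
      have h := congrFun₂ (Dmat_mul_self b) i j
      rw [Matrix.mul_apply] at h
      simpa [diagonal_apply] using h

end BlockForm

section NormalForm

variable {m : ℕ} {ι : Type*} [Fintype ι] {C : Matrix ι ι ℝ}

/-- The matrix whose columns, indexed by pairs `(p, j)`, are `v_j` for `p = 0` and `w_j` for
`p = 1`: the change of basis to the normal form. -/
def pairFrame (v w : Fin m → ι → ℝ) : Matrix ι (Fin 2 × Fin m) ℝ :=
  Matrix.of fun l p => ![v p.2, w p.2] p.1 l

lemma transpose_pairFrame_mul_self {v w : Fin m → ι → ℝ}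
    (hvv : ∀ i j, v i ⬝ᵥ v j = if i = j then 1 else 0)
    (hww : ∀ i j, w i ⬝ᵥ w j = if i = j then 1 else 0) (hvw : ∀ i j, v i ⬝ᵥ w j = 0) :
    (pairFrame v w)ᵀ * pairFrame v w = 1 := by
  ext ⟨p, i⟩ ⟨q, j⟩
  have hentry : ((pairFrame v w)ᵀ * pairFrame v w) (p, i) (q, j) =
      ![v i, w i] p ⬝ᵥ ![v j, w j] q := rfl
  rw [hentry]
  fin_cases p <;> fin_cases q <;>
    simp [hvv, hww, hvw, dotProduct_comm (w i) (v j), Matrix.one_apply]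

lemma mul_pairFrame {b : Fin m → ℝ} {v w : Fin m → ι → ℝ}
    (hv : ∀ j, C *ᵥ v j = (-b j) • w j) (hw : ∀ j, C *ᵥ w j = b j • v j) :
    C * pairFrame v w = pairFrame v w * blockDiagonal fun j => skewBlock (b j) := by
  ext l ⟨p, j⟩
  have hcol : (C * pairFrame v w) l (p, j) = (C *ᵥ ![v j, w j] p) l := rfl
  rw [hcol, Matrix.mul_apply (M := pairFrame v w), Fintype.sum_prod_type_right,
    Finset.sum_eq_single j (fun i _ hij => by simp [blockDiagonal_apply, hij]) (by simp),
    Fin.sum_univ_two]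
  fin_cases p <;> simp [blockDiagonal_apply, pairFrame, skewBlock, hv, hw, mul_comm]

lemma dotProduct_eq_ite_of_skew (hC : Cᵀ = -C) {b : Fin m → ℝ} (hinj : Function.Injective b)
    {v : Fin m → ι → ℝ} (hv : ∀ j, v j ⬝ᵥ v j = 1) (hev : ∀ j, C *ᵥ (C *ᵥ v j) = b j • v j)
    (i j : Fin m) : v i ⬝ᵥ v j = if i = j then 1 else 0 := by
  split_ifs with h
  · rw [h, hv]
  · exact dotProduct_eq_zero_of_skew hC (hev i) (hev j) fun h' => h (hinj h')

lemma dotProduct_mulVec_eq_zero_of_skew (hC : Cᵀ = -C) {b : Fin m → ℝ}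
    (hinj : Function.Injective b) {v : Fin m → ι → ℝ} (hev : ∀ j, C *ᵥ (C *ᵥ v j) = b j • v j)
    (i j : Fin m) : v i ⬝ᵥ (C *ᵥ v j) = 0 := by
  by_cases h : i = j
  · rw [h, dotProduct_mulVec_self_of_skew hC]
  · exact dotProduct_eq_zero_of_skew hC (hev i) (by rw [hev j, mulVec_smul])
      fun h' => h (hinj h')

lemma exists_skew_frame (hC : Cᵀ = -C) {b : Fin m → ℝ} (hb : ∀ j, 0 < b j)
    (hinj : Function.Injective b)
    (hev : ∀ j, ∃ v : ι → ℝ, v ≠ 0 ∧ C *ᵥ (C *ᵥ v) = (-(b j ^ 2)) • v) :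
    ∃ H : Matrix ι (Fin (2 * m)) ℝ, Hᵀ * H = 1 ∧ C * H = H * Dmat b := by
  choose u hu hCu using hev
  set v : Fin m → ι → ℝ := fun j => unitVec (u j)
  set w : Fin m → ι → ℝ := fun j => (-(b j)⁻¹) • (C *ᵥ v j)
  have hb0 (j) : b j ≠ 0 := (hb j).ne'
  have hsq : Function.Injective fun j => -(b j ^ 2) := fun i j h =>
    hinj ((pow_left_inj₀ (hb i).le (hb j).le two_ne_zero).1 (neg_inj.1 h))
  have hCCv (j) : C *ᵥ (C *ᵥ v j) = (-(b j ^ 2)) • v j := by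
    rw [show v j = unitVec (u j) from rfl, unitVec, mulVec_smul, mulVec_smul, hCu, smul_comm]
  have hvv := dotProduct_eq_ite_of_skew hC hsq (fun j => unitVec_dotProduct_self (hu j)) hCCv
  have hvw (i j) : v i ⬝ᵥ w j = 0 := by
    rw [dotProduct_smul, dotProduct_mulVec_eq_zero_of_skew hC hsq hCCv, smul_zero]
  have hww (i j) : w i ⬝ᵥ w j = if i = j then 1 else 0 := by
    rw [smul_dotProduct, dotProduct_smul, dotProduct_mulVec_of_skew hC, hCCv, smul_dotProduct, hvv]
    rcases eq_or_ne i j with rfl | h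
    · have := hb0 i
      simp only [↓reduceIte, smul_eq_mul]
      field_simp
    · simp [h]
  have hCv (j) : C *ᵥ v j = (-b j) • w j := by
    rw [smul_smul, neg_mul_neg, mul_inv_cancel₀ (hb0 j), one_smul]
  have hCw (j) : C *ᵥ w j = b j • v j := by
    rw [mulVec_smul, hCCv, smul_smul]
    have := hb0 j
    congr 1
    field_simp
  refine ⟨(pairFrame v w).submatrix id (pairEquiv m).symm, ?_, ?_⟩
  · rw [transpose_submatrix, ← submatrix_mul _ _ _ id _ Function.bijective_id,
      transpose_pairFrame_mul_self hvv hww hvw, submatrix_one_equiv]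
  · rw [Dmat_eq_submatrix_blockDiagonal, submatrix_mul_equiv, ← mul_pairFrame hCv hCw]
    rfl

end NormalForm

section NormalFormOG

lemma exists_eq_orthConj_of_mul_eq {N : ℕ} {C D K : Matrix (Fin N) (Fin N) ℝ} (hK : Kᵀ * K = 1)
    (hCK : C * K = K * D) : ∃ h : OG N, C = orthConj h D := by
  refine ⟨⟨K, (mem_orthogonalGroup_iff' _ _).2 hK⟩, ?_⟩
  change C = K * D * Kᵀ
  rw [← hCK, Matrix.mul_assoc, mul_eq_one_comm.1 hK, Matrix.mul_one]

variable {m : ℕ}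

/-- `T b` is a normal form, up to orthogonal conjugation, of the skew-symmetric matrices whose
square has the eigenvalues `-b_j²`. -/
def IsSkewNormalForm {N : ℕ} (T : (Fin m → ℝ) → Matrix (Fin N) (Fin N) ℝ) : Prop :=
  ∀ C : Matrix (Fin N) (Fin N) ℝ, Cᵀ = -C → ∀ b : Fin m → ℝ, (∀ j, 0 < b j) →
    Function.Injective b →
    (∀ j, ∃ v : Fin N → ℝ, v ≠ 0 ∧ C *ᵥ (C *ᵥ v) = (-(b j ^ 2)) • v) →
    ∃ h : OG N, C = orthConj h (T b)

lemma isSkewNormalForm_Dmat : IsSkewNormalForm (Dmat (n := m)) := by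
  intro C hC b hb hinj hev
  obtain ⟨H, hH, hCH⟩ := exists_skew_frame hC hb hinj hev
  exact exists_eq_orthConj_of_mul_eq hH hCH

lemma exists_unit_mulVec_eq_zero_of_skew {C : Matrix (Fin (2 * m + 1)) (Fin (2 * m + 1)) ℝ}
    (hC : Cᵀ = -C) : ∃ e : Fin (2 * m + 1) → ℝ, e ⬝ᵥ e = 1 ∧ C *ᵥ e = 0 := by
  have hdet : C.det = 0 := by
    have h := congrArg Matrix.det hC
    rw [det_transpose, det_neg, Fintype.card_fin, Odd.neg_one_pow ⟨m, rfl⟩] at h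
    linarith
  obtain ⟨z, hz0, hz⟩ := exists_mulVec_eq_zero_iff.2 hdet
  exact ⟨unitVec z, unitVec_dotProduct_self hz0, by rw [unitVec, mulVec_smul, hz, smul_zero]⟩

lemma vecMul_eq_zero_of_mul_eq_mul_Dmat {ι : Type*} [Fintype ι] {C : Matrix ι ι ℝ}
    {H : Matrix ι (Fin (2 * m)) ℝ} {b : Fin m → ℝ} (hb : ∀ j, b j ≠ 0) (hCH : C * H = H * Dmat b)
    {e : ι → ℝ} (he : e ᵥ* C = 0) : e ᵥ* H = 0 := by
  have h1 : e ᵥ* H ᵥ* Dmat b = 0 := by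
    rw [vecMul_vecMul, ← hCH, ← vecMul_vecMul, he, zero_vecMul]
  have h2 : e ᵥ* H ᵥ* (Dmat b * Dmat b) = 0 := by rw [← vecMul_vecMul, h1, zero_vecMul]
  ext i
  have h3 := congrFun h2 i
  rw [Dmat_mul_self, vecMul_neg, Pi.neg_apply, vecMul_diagonal] at h3
  simpa [hb] using h3

lemma isSkewNormalForm_oddDmat : IsSkewNormalForm (oddDmat (m := m)) := by
  intro C hC b hb hinj hev
  obtain ⟨H, hH, hCH⟩ := exists_skew_frame hC hb hinj hev
  obtain ⟨e, he, hCe⟩ := exists_unit_mulVec_eq_zero_of_skew hC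
  have heH : e ᵥ* H = 0 := vecMul_eq_zero_of_mul_eq_mul_Dmat (fun j => (hb j).ne') hCH
    (by rw [← mulVec_transpose, hC, neg_mulVec, hCe, neg_zero])
  set K : Matrix (Fin (2 * m + 1)) (Fin (2 * m + 1)) ℝ :=
    Matrix.of fun i => Fin.cons (e i) (H i) with hK
  have hKK : Kᵀ * K = 1 := by
    ext i j
    rw [Matrix.mul_apply]
    cases i using Fin.cases with
    | zero =>
      cases j using Fin.cases with
      | zero => simpa [hK, dotProduct] using he
      | succ j =>
        simpa [hK, vecMul, dotProduct, Matrix.one_apply, (Fin.succ_ne_zero _).symm]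
          using congrFun heH j
    | succ i =>
      cases j using Fin.cases with
      | zero => simpa [hK, vecMul, dotProduct, Matrix.one_apply, mul_comm] using congrFun heH i
      | succ j => simpa [hK, Matrix.mul_apply, Matrix.one_apply] using congrFun₂ hH i j
  refine exists_eq_orthConj_of_mul_eq hKK ?_
  ext i j
  rw [Matrix.mul_apply, Matrix.mul_apply, Fin.sum_univ_succ (f := fun l => K i l * oddDmat b l j)]
  cases j using Fin.cases with
  | zero => simpa [hK, mulVec, dotProduct] using congrFun hCe i
  | succ j => simpa [hK, Matrix.mul_apply] using congrFun₂ hCH i j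

end NormalFormOG

section SecularEquation

variable {N : ℕ} {X : Matrix (Fin (N + 1)) (Fin (N + 1)) ℝ} {g : Fin (N + 1) → ℝ}

lemma corner_mulVec_init (hg : g (Fin.last N) = 0) :
    corner X *ᵥ (Fin.init g : Fin N → ℝ) = (Fin.init (X *ᵥ g) : Fin N → ℝ) := by
  ext i
  simp [mulVec, dotProduct, corner, Fin.init, Fin.sum_univ_castSucc, hg]

lemma corner_mulVec_mulVec_init (hX : Xᵀ = -X) {t : ℝ} (hg : g (Fin.last N) = 0)
    (hXg : X *ᵥ (X *ᵥ g) = Pi.single (Fin.last N) 1 - t • g) :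
    corner X *ᵥ (corner X *ᵥ (Fin.init g : Fin N → ℝ)) = (-t) • (Fin.init g : Fin N → ℝ) := by
  have hlast : (X *ᵥ g) (Fin.last N) = 0 := by
    have h : (X *ᵥ g) (Fin.last N) = (X *ᵥ (X *ᵥ g) + t • g) ⬝ᵥ (X *ᵥ g) := by
      rw [hXg, sub_add_cancel, single_one_dotProduct]
    rw [h, add_dotProduct, smul_dotProduct, dotProduct_comm, dotProduct_mulVec_self_of_skew hX,
      dotProduct_mulVec_self_of_skew hX, smul_zero, add_zero]
  rw [corner_mulVec_init hg, corner_mulVec_init hlast, hXg]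
  ext i
  simp [Fin.init, (Fin.castSucc_lt_last i).ne]

/-- With `u` the last row of `k`, the secular equation `hsec` says that the image under `k` of the
vector `(u_i / (t - d_i))_i` has last coordinate `0`; the rest of this image is the eigenvector. -/
lemma exists_corner_eigenvector (k : OG (N + 1)) {D : Matrix (Fin (N + 1)) (Fin (N + 1)) ℝ}
    (hD : Dᵀ = -D) {d : Fin (N + 1) → ℝ} (hD2 : D * D = -diagonal d) {t : ℝ}
    (ht : ∀ i, t - d i ≠ 0) (hsec : ∑ i, k.1 (Fin.last N) i ^ 2 / (t - d i) = 0) :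
    ∃ v : Fin N → ℝ, v ≠ 0 ∧
      corner (orthConj k D) *ᵥ (corner (orthConj k D) *ᵥ v) = (-t) • v := by
  set q : Fin (N + 1) → ℝ := fun i => k.1 (Fin.last N) i / (t - d i) with hq
  have hsq : orthConj k D * orthConj k D = k.1 * (D * D) * k.1ᵀ := by
    simp only [orthConj, Matrix.mul_assoc]
    rw [← Matrix.mul_assoc k.1ᵀ k.1, transpose_mul_OG, Matrix.one_mul]
  have hdiag : (-diagonal d) *ᵥ q = k.1 (Fin.last N) - t • q := by
    ext i
    have := ht i
    simp only [hq, neg_mulVec, Pi.neg_apply, mulVec_diagonal, Pi.sub_apply, Pi.smul_apply,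
      smul_eq_mul]
    field_simp
    ring
  have hrow : k.1 *ᵥ k.1 (Fin.last N) = Pi.single (Fin.last N) 1 := by
    ext i
    have h := congrFun₂ (mul_transpose_OG k) i (Fin.last N)
    rwa [Matrix.mul_apply', Matrix.one_apply, ← Pi.single_apply] at h
  have hXg : orthConj k D *ᵥ (orthConj k D *ᵥ (k.1 *ᵥ q)) =
      Pi.single (Fin.last N) 1 - t • (k.1 *ᵥ q) := by
    rw [mulVec_mulVec, hsq, mulVec_mulVec, Matrix.mul_assoc, transpose_mul_OG, Matrix.mul_one,
      hD2, ← mulVec_mulVec, hdiag, mulVec_sub, mulVec_smul, hrow]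
  have hlast : (k.1 *ᵥ q) (Fin.last N) = 0 := by
    rw [← hsec, mulVec, dotProduct]
    exact Finset.sum_congr rfl fun i _ => by simp only [hq]; ring
  refine ⟨Fin.init (k.1 *ᵥ q), fun h => ?_,
    corner_mulVec_mulVec_init (transpose_orthConj_of_skew k hD) hlast hXg⟩
  have hg : k.1 *ᵥ q = 0 := by
    ext i
    cases i using Fin.lastCases with
    | last => exact hlast
    | cast i => exact congrFun h i
  simpa [hg] using congrFun hXg (Fin.last N)

end SecularEquation

/-! ### The secular equation as a change of variables -/

section SecularWeight

open Lagrange (nodal nodalWeight)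

variable {m : ℕ} {α : Fin (m + 1) → ℝ}

lemma sum_eval_mul_nodalWeight (hα : Function.Injective α) {P : Polynomial ℝ}
    (hP : P.degree < (m + 1 : ℕ)) :
    ∑ j, P.eval (α j) * nodalWeight Finset.univ α j = P.coeff m := by
  have h := Lagrange.coeff_eq_sum (s := Finset.univ) (v := α) hα.injOn (P := P) (by simpa using hP)
  simp only [Finset.card_univ, Fintype.card_fin, Nat.add_sub_cancel] at h
  simp only [h, nodalWeight, Finset.prod_inv_distrib, div_eq_mul_inv]

lemma degree_nodal_univ (β : Fin m → ℝ) : (nodal Finset.univ β).degree = m := by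
  simp [Lagrange.degree_nodal]

lemma coeff_nodal_univ (β : Fin m → ℝ) : (nodal Finset.univ β).coeff m = 1 := by
  have h : (nodal Finset.univ β).Monic := Lagrange.nodal_monic
  rwa [Polynomial.Monic, Polynomial.leadingCoeff,
    Polynomial.natDegree_eq_of_degree_eq_some (degree_nodal_univ β)] at h

lemma degree_nodal_erase_lt (β : Fin m → ℝ) (l : Fin m) :
    (nodal (Finset.univ.erase l) β).degree < m := by
  rw [Lagrange.degree_nodal, Finset.card_erase_of_mem (Finset.mem_univ l), Finset.card_univ,
    Fintype.card_fin]
  exact_mod_cast Nat.sub_lt l.pos one_pos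

/-- The residue `σ ∏ᵢ (α_j - β_i) / ∏_{i ≠ j} (α_j - α_i)` at `α_j` of the rational function with
poles `α`, zeros `β` and leading behaviour `σ / t`. -/
def secularWeight (α : Fin (m + 1) → ℝ) (σ : ℝ) (β : Fin m → ℝ) (j : Fin (m + 1)) : ℝ :=
  σ * (∏ i, (α j - β i)) * nodalWeight Finset.univ α j

lemma sum_secularWeight (hα : Function.Injective α) (σ : ℝ) (β : Fin m → ℝ) :
    ∑ j, secularWeight α σ β j = σ := by
  have h := sum_eval_mul_nodalWeight hα (P := nodal Finset.univ β)
    (by rw [degree_nodal_univ]; exact_mod_cast m.lt_succ_self)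
  simp only [coeff_nodal_univ, Lagrange.eval_nodal] at h
  simp only [secularWeight, mul_assoc]
  rw [← Finset.mul_sum, h, mul_one]

lemma sum_secularWeight_div (hα : Function.Injective α) (σ : ℝ) (β : Fin m → ℝ) (l : Fin m)
    (hl : ∀ j, β l - α j ≠ 0) : ∑ j, secularWeight α σ β j / (β l - α j) = 0 := by
  have h := sum_eval_mul_nodalWeight hα (P := nodal (Finset.univ.erase l) β)
    ((degree_nodal_erase_lt β l).trans (by exact_mod_cast m.lt_succ_self))
  rw [Polynomial.coeff_eq_zero_of_degree_lt (degree_nodal_erase_lt β l)] at h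
  simp only [Lagrange.eval_nodal] at h
  have hterm (j) : secularWeight α σ β j / (β l - α j) =
      -σ * ((∏ i ∈ Finset.univ.erase l, (α j - β i)) * nodalWeight Finset.univ α j) := by
    rw [secularWeight, ← Finset.mul_prod_erase _ _ (Finset.mem_univ l)]
    have := hl j
    field_simp
    ring
  simp_rw [hterm]
  rw [← Finset.mul_sum, h, mul_zero]

/-- `β` strictly interlaces `α`. -/
def Interlaces (α : Fin (m + 1) → ℝ) (β : Fin m → ℝ) : Prop :=
  ∀ i, α i.castSucc < β i ∧ β i < α i.succ

lemma Interlaces.strictMono {β : Fin m → ℝ} (hα : Monotone α) (h : Interlaces α β) :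
    StrictMono β := fun i j hij =>
  (h i).2.trans_le ((hα (Fin.succ_le_castSucc_iff.2 hij)).trans (h j).1.le)

lemma Interlaces.sub_ne_zero {β : Fin m → ℝ} (hα : Monotone α) (h : Interlaces α β) (i : Fin m)
    (j : Fin (m + 1)) : β i - α j ≠ 0 := by
  rw [_root_.sub_ne_zero]
  rcases le_or_gt j i.castSucc with hj | hj
  · exact ((hα hj).trans_lt (h i).1).ne'
  · exact ((h i).2.trans_le (hα (Fin.castSucc_lt_iff_succ_le.1 hj))).ne

lemma nodalWeight_eq_prod_succAbove (j : Fin (m + 1)) :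
    nodalWeight Finset.univ α j = ∏ i, (α j - α (j.succAbove i))⁻¹ := by
  have h : (Finset.univ.erase j : Finset (Fin (m + 1))) = Finset.univ.image j.succAbove := by
    rw [Fin.image_succAbove_univ]; ext; simp
  rw [nodalWeight, h, Finset.prod_image fun _ _ _ _ h => Fin.succAbove_right_injective h]

lemma secularWeight_pos (hα : StrictMono α) {σ : ℝ} (hσ : 0 < σ) {β : Fin m → ℝ}
    (h : Interlaces α β) (j : Fin (m + 1)) : 0 < secularWeight α σ β j := by
  rw [secularWeight, mul_assoc, nodalWeight_eq_prod_succAbove, ← Finset.prod_mul_distrib]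
  refine mul_pos hσ (Finset.prod_pos fun i _ => ?_)
  rcases lt_or_ge i.castSucc j with hij | hij
  · rw [Fin.succAbove_of_castSucc_lt _ _ hij]
    exact mul_pos (sub_pos.2 ((h i).2.trans_le (hα.monotone (Fin.castSucc_lt_iff_succ_le.1 hij))))
      (inv_pos.2 (sub_pos.2 (hα hij)))
  · rw [Fin.succAbove_of_le_castSucc _ _ hij]
    exact mul_pos_of_neg_of_neg (sub_neg.2 ((hα.monotone hij).trans_lt (h i).1))
      (inv_lt_zero.2 (sub_neg.2 (hα (hij.trans_lt Fin.castSucc_lt_succ))))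

lemma nodalWeight_castSucc_mul_nodalWeight_succ_neg (hα : StrictMono α) (l : Fin m) :
    nodalWeight Finset.univ α l.castSucc * nodalWeight Finset.univ α l.succ < 0 := by
  have hl : α l.castSucc < α l.succ := hα Fin.castSucc_lt_succ
  have hmem : l.succ ∈ Finset.univ.erase l.castSucc := by simp [Fin.castSucc_lt_succ.ne']
  have hmem' : l.castSucc ∈ Finset.univ.erase l.succ := by simp [Fin.castSucc_lt_succ.ne]
  rw [nodalWeight, nodalWeight, ← Finset.mul_prod_erase _ _ hmem,
    ← Finset.mul_prod_erase _ _ hmem', Finset.erase_right_comm, mul_mul_mul_comm,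
    ← Finset.prod_mul_distrib]
  refine mul_neg_of_neg_of_pos (mul_neg_of_neg_of_pos (inv_lt_zero.2 (sub_neg.2 hl))
    (inv_pos.2 (sub_pos.2 hl))) (Finset.prod_pos fun i hi => ?_)
  obtain ⟨hi1, hi2, -⟩ := Finset.mem_erase.1 hi |>.imp_right Finset.mem_erase.1
  rw [← _root_.mul_inv]
  refine inv_pos.2 ?_
  rcases lt_or_gt_of_ne hi1 with h | h
  · have := hα h
    exact mul_pos (by linarith) (by linarith)
  · have := hα (lt_of_le_of_ne (Fin.castSucc_lt_iff_succ_le.1 h) hi2.symm)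
    exact mul_pos_of_neg_of_neg (by linarith) (by linarith)

lemma nodal_eq_of_secularWeight_eq (hα : Function.Injective α) {σ : ℝ} (hσ : σ ≠ 0)
    {β β' : Fin m → ℝ} (h : secularWeight α σ β = secularWeight α σ β') :
    nodal Finset.univ β = nodal Finset.univ β' := by
  have hdeg (γ : Fin m → ℝ) : (nodal Finset.univ γ).degree <
      ((Finset.univ : Finset (Fin (m + 1))).card : WithBot ℕ) := by
    rw [degree_nodal_univ, Finset.card_univ, Fintype.card_fin]
    exact_mod_cast m.lt_succ_self
  refine Polynomial.eq_of_degrees_lt_of_eval_index_eq (v := α) Finset.univ hα.injOn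
    (hdeg β) (hdeg β') fun j hj => ?_
  rw [Lagrange.eval_nodal, Lagrange.eval_nodal]
  exact mul_left_cancel₀ hσ
    (mul_right_cancel₀ (Lagrange.nodalWeight_ne_zero hα.injOn hj) (congrFun h j))

lemma eq_of_nodal_eq {β β' : Fin m → ℝ} (hα : Monotone α) (hβ : Interlaces α β)
    (hβ' : Interlaces α β') (h : nodal Finset.univ β = nodal Finset.univ β') : β = β' := by
  ext i
  have hroot : (nodal Finset.univ β').eval (β i) = 0 :=
    h ▸ Lagrange.eval_nodal_at_node (Finset.mem_univ i)
  rw [Lagrange.eval_nodal] at hroot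
  obtain ⟨l, -, hl⟩ := Finset.prod_eq_zero_iff.1 hroot
  rw [sub_eq_zero] at hl
  rcases lt_trichotomy i l with hil | rfl | hil
  · have := hα (Fin.succ_le_castSucc_iff.2 hil)
    linarith [(hβ i).2, (hβ' l).1]
  · exact hl
  · have := hα (Fin.succ_le_castSucc_iff.2 hil)
    linarith [(hβ i).1, (hβ' l).2]

lemma eq_nodal_of_roots {β : Fin m → ℝ} (hβ : Function.Injective β) {P : Polynomial ℝ}
    (hP : P.degree < (m + 1 : ℕ)) (hc : P.coeff m = 1) (hr : ∀ i, P.eval (β i) = 0) :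
    P = nodal Finset.univ β := by
  refine Polynomial.eq_of_degree_sub_lt_of_eval_index_eq (v := β) Finset.univ hβ.injOn ?_ ?_
  · rw [Finset.card_univ, Fintype.card_fin, Polynomial.degree_lt_iff_coeff_zero]
    intro k hk
    rw [Polynomial.coeff_sub]
    rcases hk.eq_or_lt with rfl | hlt
    · rw [hc, coeff_nodal_univ, sub_self]
    · rw [Polynomial.coeff_eq_zero_of_degree_lt (hP.trans_le (by exact_mod_cast hlt)),
        Polynomial.coeff_eq_zero_of_degree_lt (by rw [degree_nodal_univ]; exact_mod_cast hlt),
        sub_self]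
  · intro i hi
    rw [hr, Lagrange.eval_nodal_at_node hi]

lemma exists_interlacing_roots (hα : Monotone α) {P : Polynomial ℝ}
    (hP : ∀ l : Fin m, P.eval (α l.castSucc) * P.eval (α l.succ) < 0) :
    ∃ β, Interlaces α β ∧ ∀ l, P.eval (β l) = 0 := by
  have hroot (l : Fin m) : ∃ β, (α l.castSucc < β ∧ β < α l.succ) ∧ P.eval β = 0 := by
    have hle : α l.castSucc ≤ α l.succ := hα Fin.castSucc_lt_succ.le
    rcases mul_neg_iff.1 (hP l) with ⟨h1, h2⟩ | ⟨h1, h2⟩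
    · exact intermediate_value_Ioo' hle (f := fun t => P.eval t) P.continuous.continuousOn ⟨h2, h1⟩
    · exact intermediate_value_Ioo hle (f := fun t => P.eval t) P.continuous.continuousOn ⟨h1, h2⟩
  choose β hβ hβ0 using hroot
  exact ⟨β, hβ, hβ0⟩

/-- Interpolating the prescribed values at `α` gives a monic polynomial of degree `m` whose values
alternate in sign, hence with interlacing roots. -/
lemma exists_secularWeight_eq (hα : StrictMono α) {r : Fin (m + 1) → ℝ} (hr : ∀ j, 0 < r j) :
    ∃ β, Interlaces α β ∧ secularWeight α (∑ j, r j) β = r := by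
  have hinj := hα.injective
  have hσ : 0 < ∑ j, r j := Finset.sum_pos (fun j _ => hr j) ⟨0, Finset.mem_univ _⟩
  set σ := ∑ j, r j with hσ_def
  set w := nodalWeight Finset.univ α
  have hw (j) : w j ≠ 0 := Lagrange.nodalWeight_ne_zero hinj.injOn (Finset.mem_univ j)
  set P := Lagrange.interpolate Finset.univ α fun j => r j / σ / w j
  have hPeval (j) : P.eval (α j) = r j / σ / w j :=
    Lagrange.eval_interpolate_at_node _ hinj.injOn (Finset.mem_univ j)
  have hPdeg : P.degree < (m + 1 : ℕ) := by
    rw [← Fintype.card_fin (m + 1), ← Finset.card_univ]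
    exact Lagrange.degree_interpolate_lt _ hinj.injOn
  have hPcoeff : P.coeff m = 1 := by
    rw [← sum_eval_mul_nodalWeight hinj hPdeg, ← div_self hσ.ne', hσ_def, Finset.sum_div]
    exact Finset.sum_congr rfl fun j _ => by rw [hPeval, div_mul_cancel₀ _ (hw j)]
  obtain ⟨β, hβ, hroot⟩ := exists_interlacing_roots hα.monotone (P := P) fun l => by
    rw [hPeval, hPeval, div_mul_div_comm]
    exact div_neg_of_pos_of_neg (mul_pos (div_pos (hr _) hσ) (div_pos (hr _) hσ))
      (nodalWeight_castSucc_mul_nodalWeight_succ_neg hα l)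
  have hP := eq_nodal_of_roots (hβ.strictMono hα.monotone).injective hPdeg hPcoeff hroot
  refine ⟨β, hβ, funext fun j => ?_⟩
  rw [secularWeight, ← Lagrange.eval_nodal, ← hP, hPeval, mul_assoc, div_mul_cancel₀ _ (hw j),
    mul_div_cancel₀ _ hσ.ne']

end SecularWeight

section Vandermonde

variable {m : ℕ} {R : Type*} [CommRing R]

lemma vdm_eq_det_vandermonde (x : Fin m → R) : vdm x = (vandermonde x).det := by
  rw [det_vandermonde, vdm, Finset.prod_filter, ← Finset.univ_product_univ, Finset.prod_product]
  refine Finset.prod_congr rfl fun i _ => ?_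
  rw [← Finset.prod_filter]
  exact Finset.prod_congr (by ext; simp) fun _ _ => rfl

lemma vdm_pos {x : Fin m → ℝ} (h : StrictMono x) : 0 < vdm x :=
  Finset.prod_pos fun p hp => sub_pos.2 (h (by simpa using hp))

lemma vdm_cons (τ : R) (β : Fin m → R) :
    vdm (Fin.cons τ β : Fin (m + 1) → R) = (∏ i, (β i - τ)) * vdm β := by
  rw [vdm_eq_det_vandermonde, vdm_eq_det_vandermonde, det_vandermonde, det_vandermonde,
    Fin.prod_univ_succ]
  congr 1
  · rw [Fin.prod_Ioi_zero]; simp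
  · refine Finset.prod_congr rfl fun i _ => ?_
    rw [Fin.prod_Ioi_succ]; simp

lemma abs_prod_prod_erase_sub (x : Fin m → ℝ) :
    |∏ j, ∏ i ∈ Finset.univ.erase j, (x j - x i)| = |vdm x| ^ 2 := by
  have hcompl (i : Fin m) : Finset.univ.erase i = ({i}ᶜ : Finset (Fin m)) := by ext; simp
  simp_rw [vdm_eq_det_vandermonde, det_vandermonde, Finset.abs_prod]
  calc ∏ j, ∏ i ∈ Finset.univ.erase j, |x j - x i| = ∏ j, ∏ i ∈ {j}ᶜ, |x i - x j| := by
        simp_rw [hcompl, abs_sub_comm]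
    _ = ∏ i, ∏ j ∈ Finset.Ioi i, |x j - x i| * |x i - x j| :=
        (Finset.prod_prod_Ioi_mul_eq_prod_prod_off_diag fun i j => |x i - x j|).symm
    _ = _ := by simp_rw [← Finset.prod_pow, fun i j => abs_sub_comm (x i) (x j), sq]

end Vandermonde

section SecularMap

open Lagrange (nodal nodalWeight)

variable {m : ℕ}

/-- The polynomials `∏ᵢ (t - β_i)` and `∏_{i ≠ l} (t - β_i)`, which are up to scalars the
derivatives of `σ ∏ᵢ (t - β_i)` with respect to `σ` and `β_l`. -/
def nodalFamily (β : Fin m → ℝ) : Fin (m + 1) → Polynomial ℝ :=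
  Fin.cons (nodal Finset.univ β) fun l => nodal (Finset.univ.erase l) β

lemma natDegree_nodalFamily_lt (β : Fin m → ℝ) (c : Fin (m + 1)) :
    (nodalFamily β c).natDegree < m + 1 := by
  cases c using Fin.cases with
  | zero => simp [nodalFamily, Lagrange.natDegree_nodal]
  | succ l => simp [nodalFamily, Lagrange.natDegree_nodal]

lemma det_eval_nodalFamily (β : Fin m → ℝ) (γ : Fin (m + 1) → ℝ) :
    (Matrix.of fun j c => (nodalFamily β c).eval (γ j)).det =
      vdm γ * (Matrix.of fun (l : Fin (m + 1)) c => (nodalFamily β c).coeff l).det := by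
  rw [vdm_eq_det_vandermonde, ← det_mul]
  congr 1
  ext j c
  rw [of_apply, Matrix.mul_apply, Polynomial.eval_eq_sum_range' (natDegree_nodalFamily_lt β c),
    ← Fin.sum_univ_eq_sum_range fun i => (nodalFamily β c).coeff i * γ j ^ i]
  exact Finset.sum_congr rfl fun l _ => by rw [vandermonde_apply, of_apply, mul_comm]

lemma det_eval_nodalFamily_cons (β : Fin m → ℝ) (τ : ℝ) :
    (Matrix.of fun j c => (nodalFamily β c).eval ((Fin.cons τ β : Fin (m + 1) → ℝ) j)).det =
      (∏ i, (τ - β i)) * ∏ j, ∏ i ∈ Finset.univ.erase j, (β j - β i) := by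
  rw [det_of_isUpperTriangular, Fin.prod_univ_succ]
  · simp only [of_apply, nodalFamily, Fin.cons_zero, Fin.cons_succ, Lagrange.eval_nodal]
  · intro i j hij
    cases i using Fin.cases with
    | zero => exact absurd hij (Fin.not_lt_zero _)
    | succ i =>
      rw [of_apply, Fin.cons_succ]
      cases j using Fin.cases with
      | zero => exact Lagrange.eval_nodal_at_node (Finset.mem_univ i)
      | succ j =>
        exact Lagrange.eval_nodal_at_node
          (Finset.mem_erase.2 ⟨(Fin.succ_lt_succ_iff.1 hij).ne', Finset.mem_univ i⟩)

/-- The coefficient matrix does not depend on the evaluation points, so its determinant can be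
read off at the points `(τ, β)`, where the matrix of values is triangular. -/
lemma abs_det_eval_nodalFamily {β : Fin m → ℝ} (hβ : Function.Injective β)
    (γ : Fin (m + 1) → ℝ) :
    |(Matrix.of fun j c => (nodalFamily β c).eval (γ j)).det| = |vdm γ| * |vdm β| := by
  obtain ⟨τ, hτ⟩ := Infinite.exists_notMem_finset (Finset.univ.image β)
  have hprod : ∏ i, (τ - β i) ≠ 0 := Finset.prod_ne_zero_iff.2 fun i _ h =>
    hτ (sub_eq_zero.1 h ▸ Finset.mem_image_of_mem _ (Finset.mem_univ i))
  have hvdm : vdm β ≠ 0 := by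
    rw [vdm_eq_det_vandermonde]; exact det_vandermonde_ne_zero_iff.2 hβ
  have hcoeff := det_eval_nodalFamily β (Fin.cons τ β)
  rw [det_eval_nodalFamily_cons, vdm_cons] at hcoeff
  have habs := congrArg abs hcoeff
  rw [abs_mul, abs_mul, abs_mul, abs_prod_prod_erase_sub, Finset.abs_prod, Finset.abs_prod] at habs
  simp_rw [abs_sub_comm _ τ] at habs
  rw [← Finset.abs_prod, mul_assoc, sq] at habs
  rw [det_eval_nodalFamily, abs_mul,
    mul_left_cancel₀ (abs_ne_zero.2 hvdm) (mul_left_cancel₀ (abs_ne_zero.2 hprod) habs)]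

/-- `secularWeight` in the coordinates `y = (σ, x)` with `β = x²`. -/
def secularMap (α : Fin (m + 1) → ℝ) (y : Fin (m + 1) → ℝ) : Fin (m + 1) → ℝ :=
  secularWeight α (y 0) fun i => y i.succ ^ 2

/-- The Jacobian matrix of `secularMap α` at `y`. -/
def secularJacobian (α : Fin (m + 1) → ℝ) (y : Fin (m + 1) → ℝ) :
    Matrix (Fin (m + 1)) (Fin (m + 1)) ℝ :=
  Matrix.of fun j c => nodalWeight Finset.univ α j *
    ((Fin.cons 1 fun i => -(2 * y 0 * y i.succ) : Fin (m + 1) → ℝ) c *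
      (nodalFamily (fun i => y i.succ ^ 2) c).eval (α j))

lemma abs_prod_nodalWeight (α : Fin (m + 1) → ℝ) :
    |∏ j, nodalWeight Finset.univ α j| = (|vdm α| ^ 2)⁻¹ := by
  simp_rw [nodalWeight, Finset.prod_inv_distrib]
  rw [abs_inv, abs_prod_prod_erase_sub]

lemma abs_det_secularJacobian {α y : Fin (m + 1) → ℝ} (hα : StrictMono α) (h0 : 0 < y 0)
    (hy : ∀ i : Fin m, 0 < y i.succ) (hs : StrictMono fun i : Fin m => y i.succ ^ 2) :
    |(secularJacobian α y).det| = y 0 ^ m * (∏ i : Fin m, 2 * y i.succ) *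
      (vdm (fun i : Fin m => y i.succ ^ 2) / vdm α) := by
  have hdet : (secularJacobian α y).det = (∏ j, nodalWeight Finset.univ α j) *
      ((∏ i : Fin m, -(2 * y 0 * y i.succ)) *
        (Matrix.of fun j c => (nodalFamily (fun i => y i.succ ^ 2) c).eval (α j)).det) := by
    rw [← one_mul (∏ i : Fin m, _), ← Fin.prod_cons, ← det_mul_row, ← det_mul_column]
    rfl
  have hprod : |∏ i : Fin m, -(2 * y 0 * y i.succ)| = y 0 ^ m * ∏ i : Fin m, 2 * y i.succ := by
    have hfactor (i : Fin m) : |-(2 * y 0 * y i.succ)| = y 0 * (2 * y i.succ) := by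
      rw [abs_neg, abs_of_pos (mul_pos (mul_pos two_pos h0) (hy i))]; ring
    simp_rw [Finset.abs_prod, hfactor]
    simp [Finset.prod_mul_distrib]
  rw [hdet, abs_mul, abs_mul, abs_det_eval_nodalFamily hs.injective, abs_prod_nodalWeight, hprod,
    abs_of_pos (vdm_pos hα), abs_of_pos (vdm_pos hs)]
  have := (vdm_pos hα).ne'
  field_simp

lemma hasFDerivAt_secularMap (α : Fin (m + 1) → ℝ) (y : Fin (m + 1) → ℝ) :
    HasFDerivAt (secularMap α)
      (LinearMap.toContinuousLinearMap (Matrix.toLin' (secularJacobian α y))) y := by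
  rw [hasFDerivAt_pi']
  intro j
  have hcoord (i : Fin (m + 1)) := hasFDerivAt_apply (𝕜 := ℝ) (F' := fun _ => ℝ) i y
  have hprod := HasFDerivAt.finsetProd (u := Finset.univ) fun (i : Fin m) _ =>
    ((hcoord i.succ).pow 2).const_sub (α j)
  refine (((hcoord 0).mul hprod).mul_const (nodalWeight Finset.univ α j)).congr_fderiv ?_
  ext v
  simp only [secularJacobian, ContinuousLinearMap.coe_comp, Function.comp,
    ContinuousLinearMap.proj_apply, LinearMap.coe_toContinuousLinearMap', toLin'_apply, mulVec,
    dotProduct, of_apply, Fin.sum_univ_succ]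
  simp only [nodalFamily, Fin.cons_zero, Fin.cons_succ, Lagrange.eval_nodal]
  simp only [_root_.smul_apply, _root_.add_apply, _root_.sum_apply, _root_.neg_apply,
    ContinuousLinearMap.proj_apply, smul_eq_mul, nsmul_eq_mul, mul_add, Finset.mul_sum]
  rw [add_comm]
  congr 1
  · ring
  · exact Finset.sum_congr rfl fun i _ => by push_cast; ring

/-- Admissible coordinates `y = (σ, x)`: `σ > 0` and `x` interlaces `a`. -/
def interlaceDomain (a : Fin (m + 1) → ℝ) : Set (Fin (m + 1) → ℝ) :=
  {y | 0 < y 0 ∧ Interlaces a fun i => y i.succ}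

lemma measurableSet_interlaceDomain (a : Fin (m + 1) → ℝ) :
    MeasurableSet (interlaceDomain a) := by
  simp only [interlaceDomain, Interlaces]
  measurability

variable {a : Fin (m + 1) → ℝ}

lemma strictMono_sq (ha : StrictMono a) (h0 : 0 ≤ a 0) : StrictMono fun j => a j ^ 2 :=
  fun i _ h => pow_lt_pow_left₀ (ha h) (h0.trans (ha.monotone (Fin.zero_le i))) two_ne_zero

lemma Interlaces.pos {x : Fin m → ℝ} (ha : Monotone a) (h0 : 0 ≤ a 0) (h : Interlaces a x)
    (i : Fin m) : 0 < x i :=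
  (h0.trans (ha (Fin.zero_le _))).trans_lt (h i).1

lemma interlaces_sq_iff {x : Fin m → ℝ} (ha : Monotone a) (h0 : 0 ≤ a 0) (hx : ∀ i, 0 ≤ x i) :
    (Interlaces (fun j => a j ^ 2) fun i => x i ^ 2) ↔ Interlaces a x := by
  have ha0 (j) : 0 ≤ a j := h0.trans (ha (Fin.zero_le j))
  simp only [Interlaces, pow_lt_pow_iff_left₀ (ha0 _) (hx _) two_ne_zero,
    pow_lt_pow_iff_left₀ (hx _) (ha0 _) two_ne_zero]

lemma injOn_secularMap (ha : StrictMono a) (h0 : 0 ≤ a 0) :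
    Set.InjOn (secularMap fun j => a j ^ 2) (interlaceDomain a) := by
  intro y hy y' hy' h
  have hα := strictMono_sq ha h0
  have hpos (z) (hz : z ∈ interlaceDomain a) (i : Fin m) : 0 ≤ z i.succ :=
    (hz.2.pos ha.monotone h0 i).le
  have hσ : y 0 = y' 0 := by
    rw [← sum_secularWeight hα.injective (y 0) fun i => y i.succ ^ 2,
      ← sum_secularWeight hα.injective (y' 0) fun i => y' i.succ ^ 2]
    exact congrArg (fun r => ∑ j, r j) h
  have hβ := eq_of_nodal_eq hα.monotone
    ((interlaces_sq_iff ha.monotone h0 (hpos y hy)).2 hy.2)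
    ((interlaces_sq_iff ha.monotone h0 (hpos y' hy')).2 hy'.2)
    (nodal_eq_of_secularWeight_eq hα.injective hy.1.ne' (h.trans (by rw [secularMap, hσ])))
  ext i
  cases i using Fin.cases with
  | zero => exact hσ
  | succ i => exact (pow_left_inj₀ (hpos y hy i) (hpos y' hy' i) two_ne_zero).1 (congrFun hβ i)

/-- The open positive orthant. -/
def posOrthant (m : ℕ) : Set (Fin m → ℝ) := {r | ∀ j, 0 < r j}

lemma image_secularMap (ha : StrictMono a) (h0 : 0 ≤ a 0) :
    secularMap (fun j => a j ^ 2) '' interlaceDomain a = posOrthant (m + 1) := by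
  have hα := strictMono_sq ha h0
  apply Set.Subset.antisymm
  · rintro _ ⟨y, hy, rfl⟩ j
    exact secularWeight_pos hα hy.1
      ((interlaces_sq_iff ha.monotone h0 fun i => (hy.2.pos ha.monotone h0 i).le).2 hy.2) j
  · intro r hr
    obtain ⟨β, hβ, hr_eq⟩ := exists_secularWeight_eq hα hr
    have hsq (i) : √(β i) ^ 2 = β i := Real.sq_sqrt ((sq_nonneg _).trans (hβ i).1.le)
    refine ⟨Fin.cons (∑ j, r j) fun i => √(β i),
      ⟨Finset.sum_pos (fun j _ => hr j) ⟨0, Finset.mem_univ _⟩, ?_⟩, ?_⟩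
    · refine (interlaces_sq_iff ha.monotone h0 fun i => ?_).1 ?_
      · exact Real.sqrt_nonneg _
      · simpa only [Fin.cons_succ, hsq] using hβ
    · simpa only [secularMap, Fin.cons_zero, Fin.cons_succ, hsq] using hr_eq

lemma lintegral_posOrthant_eq_lintegral_secularMap (ha : StrictMono a) (h0 : 0 ≤ a 0)
    (f : (Fin (m + 1) → ℝ) → ℝ≥0∞) :
    ∫⁻ r in posOrthant (m + 1), f r =
      ∫⁻ y in interlaceDomain a, ENNReal.ofReal (y 0 ^ m * (∏ i : Fin m, 2 * y i.succ) *
        (vdm (fun i : Fin m => y i.succ ^ 2) / vdm (fun j => a j ^ 2))) *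
          f (secularMap (fun j => a j ^ 2) y) := by
  rw [← image_secularMap ha h0, lintegral_image_eq_lintegral_abs_det_fderiv_mul volume
    (measurableSet_interlaceDomain a)
    (fun y _ => (hasFDerivAt_secularMap _ y).hasFDerivWithinAt) (injOn_secularMap ha h0)]
  refine setLIntegral_congr_fun (measurableSet_interlaceDomain a) fun y hy => ?_
  have hpos (i) : 0 < y (Fin.succ i) := hy.2.pos ha.monotone h0 i
  have hsq : Interlaces (fun j => a j ^ 2) fun i => y i.succ ^ 2 :=
    (interlaces_sq_iff ha.monotone h0 fun i => (hpos i).le).2 hy.2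
  have hα := strictMono_sq ha h0
  rw [LinearMap.det_toContinuousLinearMap, LinearMap.det_toLin',
    abs_det_secularJacobian hα hy.1 hpos (hsq.strictMono hα.monotone)]

end SecularMap

/-! ### Radial integrals -/

section ProductMeasures

lemma lintegral_pi_prod {n : ℕ} {X : Fin n → Type*} [∀ i, MeasurableSpace (X i)]
    (μ : ∀ i, Measure (X i)) [∀ i, SigmaFinite (μ i)] {f : ∀ i, X i → ℝ≥0∞}
    (hf : ∀ i, Measurable (f i)) :
    ∫⁻ x, ∏ i, f i (x i) ∂Measure.pi μ = ∏ i, ∫⁻ t, f i t ∂μ i := by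
  induction n with
  | zero => simp
  | succ n ih =>
    have hcons := (measurePreserving_piFinSuccAbove μ 0).symm
    have hprod : Measurable fun y : ∀ i : Fin n, X i.succ => ∏ i, f i.succ (y i) := by fun_prop
    rw [← hcons.lintegral_comp (by fun_prop), Fin.prod_univ_succ, ← ih _ fun i => hf i.succ,
      ← lintegral_prod_mul (hf 0).aemeasurable hprod.aemeasurable]
    simp only [Fin.prod_univ_succ]
    rfl

lemma pi_withDensity {n : ℕ} {X : Fin n → Type*} [∀ i, MeasurableSpace (X i)]
    (μ : ∀ i, Measure (X i)) [∀ i, SigmaFinite (μ i)] {f : ∀ i, X i → ℝ≥0∞}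
    (hf : ∀ i, Measurable (f i)) [∀ i, SigmaFinite ((μ i).withDensity (f i))] :
    Measure.pi (fun i => (μ i).withDensity (f i)) =
      (Measure.pi μ).withDensity fun x => ∏ i, f i (x i) := by
  refine Measure.pi_eq fun s hs => ?_
  rw [withDensity_apply _ (.univ_pi hs), Measure.restrict_pi_pi, lintegral_pi_prod _ hf]
  exact Finset.prod_congr rfl fun i _ => (withDensity_apply _ (hs i)).symm

lemma measurePreserving_eval_fiber {ι J : Type*} [Fintype ι] [Fintype J] [DecidableEq J]
    (κ : ι → J) :
    MeasurePreserving (fun (w : ∀ j, {i // κ i = j} → ℝ) i => w (κ i) ⟨i, rfl⟩) := by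
  refine ⟨by fun_prop, (Measure.pi_eq fun s hs => ?_).symm⟩
  rw [Measure.map_apply (by fun_prop) (.univ_pi hs)]
  have hbox : (fun (w : ∀ j, {i // κ i = j} → ℝ) i => w (κ i) ⟨i, rfl⟩) ⁻¹' Set.univ.pi s =
      Set.univ.pi fun j => Set.univ.pi fun i : {i // κ i = j} => s i := by
    ext w
    simp only [Set.mem_preimage, Set.mem_pi, Set.mem_univ, true_implies, Subtype.forall]
    exact ⟨fun h j i hij => by subst hij; exact h i, fun h i => h _ i rfl⟩
  simp_rw [hbox, volume_pi, Measure.pi_pi]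
  exact Fintype.prod_fiberwise κ fun i => volume (s i)

end ProductMeasures

section SquaredNorm

variable {ι : Type*} [Fintype ι]

/-- The density on `(0, ∞)` of the image of Lebesgue measure on `ℝ^d` under `v ↦ ‖v‖²`. -/
def sqNormDensity (d : ℕ) (t : ℝ) : ℝ≥0∞ :=
  ENNReal.ofReal (√Real.pi ^ d / Real.Gamma (d / 2) * t ^ ((d : ℝ) / 2 - 1))

lemma measurable_sqNormDensity (d : ℕ) : Measurable (sqNormDensity d) := by
  unfold sqNormDensity
  fun_prop

lemma volume_sum_sq_le [Nonempty ι] {t : ℝ} (ht : 0 ≤ t) :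
    volume {v : ι → ℝ | ∑ i, v i ^ 2 ≤ t} = ENNReal.ofReal
      (√Real.pi ^ Fintype.card ι / Real.Gamma (Fintype.card ι / 2 + 1) *
        t ^ ((Fintype.card ι : ℝ) / 2)) := by
  have hball : (WithLp.toLp 2) ⁻¹' Metric.closedBall (0 : EuclideanSpace ℝ ι) √t =
      {v : ι → ℝ | ∑ i, v i ^ 2 ≤ t} := by
    ext v
    simp [EuclideanSpace.norm_eq, Real.sqrt_le_sqrt_iff ht]
  rw [← hball, (PiLp.volume_preserving_toLp ι).measure_preimage
    measurableSet_closedBall.nullMeasurableSet, EuclideanSpace.volume_closedBall,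
    ← ENNReal.ofReal_pow (Real.sqrt_nonneg t), ← ENNReal.ofReal_mul (by positivity), mul_comm]
  congr 2
  rw [Real.sqrt_eq_rpow t, ← Real.rpow_mul_natCast ht]
  ring_nf

lemma lintegral_Ioc_sqNormDensity {d : ℕ} (hd : 0 < d) {t : ℝ} (ht : 0 ≤ t) :
    ∫⁻ s in Set.Ioc 0 t, sqNormDensity d s = ENNReal.ofReal
      (√Real.pi ^ d / Real.Gamma (d / 2 + 1) * t ^ ((d : ℝ) / 2)) := by
  have hd2 : (0 : ℝ) < d / 2 := by positivity
  have hint : IntervalIntegrable (fun s => √Real.pi ^ d / Real.Gamma (d / 2) *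
      s ^ ((d : ℝ) / 2 - 1)) volume 0 t :=
    (intervalIntegral.intervalIntegrable_rpow' (by linarith)).const_mul _
  unfold sqNormDensity
  rw [← ofReal_integral_eq_lintegral_ofReal hint.1, ← intervalIntegral.integral_of_le ht,
    intervalIntegral.integral_const_mul, integral_rpow (Or.inl (by linarith)),
    Real.Gamma_add_one hd2.ne', sub_add_cancel, Real.zero_rpow hd2.ne', sub_zero]
  · congr 1
    have := (Real.Gamma_pos_of_pos hd2).ne'
    field_simp
  · filter_upwards [ae_restrict_mem measurableSet_Ioc] with s hs
    have := hs.1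
    have := Real.Gamma_pos_of_pos hd2
    simp only [Pi.zero_apply]
    positivity

lemma map_sum_sq_volume [Nonempty ι] :
    (volume : Measure (ι → ℝ)).map (fun v => ∑ i, v i ^ 2) =
      (volume.restrict (Set.Ioi 0)).withDensity (sqNormDensity (Fintype.card ι)) := by
  have hle {t : ℝ} (ht : 0 ≤ t) :
      (volume : Measure (ι → ℝ)).map (fun v => ∑ i, v i ^ 2) (Set.Iic t) = ENNReal.ofReal
        (√Real.pi ^ Fintype.card ι / Real.Gamma (Fintype.card ι / 2 + 1) *
          t ^ ((Fintype.card ι : ℝ) / 2)) := by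
    rw [Measure.map_apply (by fun_prop) measurableSet_Iic, ← volume_sum_sq_le ht]
    rfl
  refine Measure.ext_of_generateFrom_of_iUnion (Set.range Set.Iic) (fun n : ℕ => Set.Iic (n : ℝ))
    (borel_eq_generateFrom_Iic ℝ ▸ BorelSpace.measurable_eq) isPiSystem_Iic
    (Set.iUnion_eq_univ_iff.2 exists_nat_ge) (fun n => ⟨n, rfl⟩)
    (fun n => by rw [hle n.cast_nonneg]; exact ENNReal.ofReal_ne_top) ?_
  rintro _ ⟨t, rfl⟩
  rw [withDensity_apply _ measurableSet_Iic, Measure.restrict_restrict measurableSet_Iic,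
    Set.inter_comm, Set.Ioi_inter_Iic]
  rcases le_or_gt 0 t with ht | ht
  · rw [hle ht, lintegral_Ioc_sqNormDensity Fintype.card_pos ht]
  · have hempty : (fun v : ι → ℝ => ∑ i, v i ^ 2) ⁻¹' Set.Iic t = ∅ :=
      Set.eq_empty_of_forall_notMem fun v hv =>
        (ht.trans_le (Finset.sum_nonneg fun i _ => sq_nonneg (v i))).not_ge hv
    rw [Measure.map_apply (by fun_prop) measurableSet_Iic, hempty, Set.Ioc_eq_empty_of_le ht.le]
    simp

lemma lintegral_Ioi_exp_neg_mul_rpow {s : ℝ} (hs : 0 < s) :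
    ∫⁻ t in Set.Ioi (0 : ℝ), ENNReal.ofReal (Real.exp (-t) * t ^ (s - 1)) =
      ENNReal.ofReal (Real.Gamma s) := by
  rw [Real.Gamma_eq_integral hs,
    ofReal_integral_eq_lintegral_ofReal (Real.GammaIntegral_convergent hs)]
  filter_upwards [ae_restrict_mem measurableSet_Ioi] with t ht
  have : 0 < t := ht
  simp only [Pi.zero_apply]
  positivity

lemma lintegral_gaussWeight [Nonempty ι] :
    ∫⁻ v : ι → ℝ, gaussWeight v = ENNReal.ofReal (√Real.pi ^ Fintype.card ι) := by
  have hcard : (0 : ℝ) < Fintype.card ι / 2 := by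
    have := Fintype.card_pos (α := ι)
    positivity
  have hmap := lintegral_map (μ := (volume : Measure (ι → ℝ)))
    (f := fun t => ENNReal.ofReal (Real.exp (-t))) (by fun_prop)
    (show Measurable fun v : ι → ℝ => ∑ i, v i ^ 2 by fun_prop)
  simp_rw [gaussWeight, dotProduct, ← sq, ← hmap]
  rw [map_sum_sq_volume, lintegral_withDensity_eq_lintegral_mul _ (measurable_sqNormDensity _)
    (by fun_prop)]
  have hΓ := Real.Gamma_pos_of_pos hcard
  have hdens (t : ℝ) : (sqNormDensity (Fintype.card ι) * fun t => ENNReal.ofReal (Real.exp (-t))) t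
      = ENNReal.ofReal (√Real.pi ^ Fintype.card ι / Real.Gamma (Fintype.card ι / 2)) *
        ENNReal.ofReal (Real.exp (-t) * t ^ ((Fintype.card ι : ℝ) / 2 - 1)) := by
    rw [Pi.mul_apply, sqNormDensity, ← ENNReal.ofReal_mul' (Real.exp_nonneg _),
      ← ENNReal.ofReal_mul (by positivity)]
    ring_nf
  simp_rw [hdens]
  rw [lintegral_const_mul _ (by fun_prop), lintegral_Ioi_exp_neg_mul_rpow hcard,
    ← ENNReal.ofReal_mul (by positivity), div_mul_cancel₀ _ hΓ.ne']

end SquaredNorm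

section BlockSquares

variable {ι : Type*} [Fintype ι] {m : ℕ} (κ : ι → Fin m)

/-- The squared norms of the parts of `v` supported on the fibres of `κ`. -/
def blockSq (v : ι → ℝ) (j : Fin m) : ℝ := ∑ i : {i // κ i = j}, v i ^ 2

lemma measurable_blockSq : Measurable (blockSq κ) := by
  unfold blockSq
  fun_prop

lemma sum_blockSq_mul (f : Fin m → ℝ) (v : ι → ℝ) :
    ∑ j, blockSq κ v j * f j = ∑ i, v i ^ 2 * f (κ i) := by
  simp_rw [blockSq, Finset.sum_mul]
  rw [← Fintype.sum_fiberwise κ]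
  exact Finset.sum_congr rfl fun j _ => Finset.sum_congr rfl fun i _ => by rw [i.2]

variable {κ}

lemma map_blockSq_volume (hκ : Function.Surjective κ) :
    (volume : Measure (ι → ℝ)).map (blockSq κ) =
      (volume.restrict (posOrthant m)).withDensity
        fun r => ∏ j, sqNormDensity (Fintype.card {i // κ i = j}) (r j) := by
  have (j : Fin m) : Nonempty {i // κ i = j} := ⟨⟨_, (hκ j).choose_spec⟩⟩
  have hnorm (j : Fin m) := map_sum_sq_volume (ι := {i // κ i = j})
  have horthant : posOrthant m = Set.univ.pi fun _ => Set.Ioi 0 := by ext; simp [posOrthant]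
  have hσ (j : Fin m) : SigmaFinite ((volume.restrict (Set.Ioi 0)).withDensity
      (sqNormDensity (Fintype.card {i // κ i = j}))) :=
    SigmaFinite.withDensity_of_ne_top' fun _ => ENNReal.ofReal_ne_top
  have hσ' (j : Fin m) : SigmaFinite ((volume : Measure ({i // κ i = j} → ℝ)).map
      fun v => ∑ i, v i ^ 2) := hnorm j ▸ hσ j
  rw [horthant, volume_pi (α := fun _ : Fin m => ℝ), Measure.restrict_pi_pi,
    ← pi_withDensity _ fun j => measurable_sqNormDensity _,
    ← (measurePreserving_eval_fiber κ).map_eq, Measure.map_map (measurable_blockSq κ) (by fun_prop)]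
  simp_rw [← hnorm]
  have hmeas (j : Fin m) : Measurable fun v : {i // κ i = j} → ℝ => ∑ i, v i ^ 2 := by fun_prop
  rw [← Measure.pi_map_pi fun j => (hmeas j).aemeasurable]
  congr 1
  ext w j
  exact Finset.sum_congr rfl fun ⟨i, hi⟩ _ => by subst hi; rfl

lemma measurableSet_posOrthant (m : ℕ) : MeasurableSet (posOrthant m) := by
  unfold posOrthant
  measurability

lemma ae_blockSq_mem_posOrthant (hκ : Function.Surjective κ) :
    ∀ᵐ v : ι → ℝ, blockSq κ v ∈ posOrthant m := by
  refine ae_of_ae_map (measurable_blockSq κ).aemeasurable ?_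
  rw [map_blockSq_volume hκ]
  exact (withDensity_absolutelyContinuous _ _).ae_le (ae_restrict_mem (measurableSet_posOrthant m))

lemma lintegral_blockSq (hκ : Function.Surjective κ) {f : (Fin m → ℝ) → ℝ≥0∞}
    (hf : Measurable f) :
    ∫⁻ v : ι → ℝ, f (blockSq κ v) = ∫⁻ r in posOrthant m,
      (∏ j, sqNormDensity (Fintype.card {i // κ i = j}) (r j)) * f r := by
  rw [← lintegral_map hf (measurable_blockSq κ), map_blockSq_volume hκ,
    lintegral_withDensity_eq_lintegral_mul _ _ hf]
  · rfl
  · exact Finset.measurable_prod _ fun j _ =>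
      (measurable_sqNormDensity _).comp (measurable_pi_apply j)

lemma exists_measurable_rightInverse_blockSq (hκ : Function.Surjective κ) :
    ∃ g : (Fin m → ℝ) → ι → ℝ, Measurable g ∧ ∀ r ∈ posOrthant m, blockSq κ (g r) = r := by
  classical
  let rep (j : Fin m) : ι := (hκ j).choose
  have hrep (j : Fin m) : κ (rep j) = j := (hκ j).choose_spec
  refine ⟨fun r i => if i = rep (κ i) then √(r (κ i)) else 0, ?_, fun r hr => ?_⟩
  · refine measurable_pi_lambda _ fun i => ?_
    split_ifs <;> fun_prop
  · ext j
    rw [blockSq, Fintype.sum_eq_single ⟨rep j, hrep j⟩]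
    · simp only [hrep, if_true, Real.sq_sqrt (hr j).le]
    · rintro ⟨i, rfl⟩ hi
      have : i ≠ rep (κ i) := fun h => hi (Subtype.ext h)
      simp [this]

end BlockSquares

/-! ### The law of a corner -/

section CornerLaw

variable {N m : ℕ}

variable {κ : Fin (N + 1) → Fin (m + 1)} {a : Fin (m + 1) → ℝ}
  {D : Matrix (Fin (N + 1)) (Fin (N + 1)) ℝ} {T : (Fin m → ℝ) → Matrix (Fin N) (Fin N) ℝ}
  {Φ : Matrix (Fin N) (Fin N) ℝ → ℝ≥0∞}

lemma exists_corner_lastRowReflection_eq (ha : StrictMono a) (h0 : 0 ≤ a 0) (hD : Dᵀ = -D)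
    (hD2 : D * D = -diagonal fun i => a (κ i) ^ 2) (hT : IsSkewNormalForm T)
    {v : Fin (N + 1) → ℝ} {y : Fin (m + 1) → ℝ} (hy : y ∈ interlaceDomain a)
    (hvy : blockSq κ v = secularMap (fun j => a j ^ 2) y) :
    ∃ h : OG N, corner (orthConj (lastRowReflection v) D) = orthConj h (T fun i => y i.succ) := by
  have hα := strictMono_sq ha h0
  have hpos := hy.2.pos ha.monotone h0
  have hsq := (interlaces_sq_iff ha.monotone h0 fun i => (hpos i).le).2 hy.2
  have hv : v ≠ 0 := by
    rintro rfl
    have hsum := sum_secularWeight hα.injective (y 0) fun i => y i.succ ^ 2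
    rw [← secularMap, ← hvy] at hsum
    exact hy.1.ne (by simpa [blockSq] using hsum)
  refine hT _ (transpose_corner_of_skew (transpose_orthConj_of_skew _ hD)) _ hpos
    (hy.2.strictMono ha.monotone).injective fun l => ?_
  have hne (j) : y l.succ ^ 2 - a j ^ 2 ≠ 0 := hsq.sub_ne_zero hα.monotone l j
  refine exists_corner_eigenvector _ hD hD2 (fun i => hne (κ i)) ?_
  rw [lastRowReflection_last hv]
  simp only [unitVec, Pi.smul_apply, smul_eq_mul, mul_pow, mul_div_assoc]
  have hsec := sum_secularWeight_div hα.injective (y 0) (fun i => y i.succ ^ 2) l hne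
  rw [← secularMap, ← hvy] at hsec
  simp_rw [div_eq_mul_inv] at hsec ⊢
  rw [← Finset.mul_sum, ← sum_blockSq_mul κ fun j => (y l.succ ^ 2 - a j ^ 2)⁻¹, hsec, mul_zero]

lemma lintegral_gaussWeight_mul_corner (hκ : Function.Surjective κ) (ha : StrictMono a)
    (h0 : 0 ≤ a 0) (hD : Dᵀ = -D) (hD2 : D * D = -diagonal fun i => a (κ i) ^ 2)
    (hT : IsSkewNormalForm T) (hΦ : Measurable Φ) (hinv : ∀ (h : OG N) Y, Φ (orthConj h Y) = Φ Y) :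
    ∫⁻ v : Fin (N + 1) → ℝ, gaussWeight v * Φ (corner (orthConj (lastRowReflection v) D)) =
      ∫⁻ y in interlaceDomain a, ENNReal.ofReal (y 0 ^ m * (∏ i : Fin m, 2 * y i.succ) *
        (vdm (fun i : Fin m => y i.succ ^ 2) / vdm (fun j => a j ^ 2))) *
          ((∏ j, sqNormDensity (Fintype.card {i // κ i = j}) (secularMap (fun j => a j ^ 2) y j)) *
            (ENNReal.ofReal (Real.exp (-y 0)) * Φ (T fun i => y i.succ))) := by
  obtain ⟨g, hg, hgr⟩ := exists_measurable_rightInverse_blockSq hκ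
  have hΦv (v y) (hy : y ∈ interlaceDomain a)
      (hvy : blockSq κ v = secularMap (fun j => a j ^ 2) y) :
      Φ (corner (orthConj (lastRowReflection v) D)) = Φ (T fun i => y i.succ) := by
    obtain ⟨h, hh⟩ := exists_corner_lastRowReflection_eq ha h0 hD hD2 hT hy hvy
    rw [hh, hinv]
  let F (r : Fin (m + 1) → ℝ) : ℝ≥0∞ := ENNReal.ofReal (Real.exp (-∑ j, r j)) *
    Φ (corner (orthConj (lastRowReflection (g r)) D))
  have hF : Measurable F := .mul (by fun_prop)
    (hΦ.comp ((measurable_corner_orthConj D).comp (measurable_lastRowReflection.comp hg)))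
  have hFv : ∀ᵐ v : Fin (N + 1) → ℝ, gaussWeight v *
      Φ (corner (orthConj (lastRowReflection v) D)) = F (blockSq κ v) := by
    filter_upwards [ae_blockSq_mem_posOrthant hκ] with v hv
    obtain ⟨y, hy, hyv⟩ := (image_secularMap ha h0).symm ▸ hv
    have hsum := sum_blockSq_mul κ 1 v
    simp only [Pi.one_apply, mul_one] at hsum
    simp only [F, hsum, hΦv v y hy hyv.symm, hΦv _ y hy ((hgr _ hv).trans hyv.symm), gaussWeight,
      dotProduct, ← sq]
  rw [lintegral_congr_ae hFv, lintegral_blockSq hκ hF,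
    lintegral_posOrthant_eq_lintegral_secularMap ha h0]
  refine setLIntegral_congr_fun (measurableSet_interlaceDomain a) fun y hy => ?_
  have hr : secularMap (fun j => a j ^ 2) y ∈ posOrthant (m + 1) :=
    image_secularMap ha h0 ▸ Set.mem_image_of_mem _ hy
  have hsum : ∑ j, secularMap (fun j => a j ^ 2) y j = y 0 :=
    sum_secularWeight (strictMono_sq ha h0).injective _ _
  simp only [F, hΦv _ y hy (hgr _ hr), hsum]

lemma measurableSet_setOf_interlaces (a : Fin (m + 1) → ℝ) :
    MeasurableSet {x | Interlaces a x} := by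
  simp only [Interlaces]
  measurability

lemma lintegral_interlaceDomain_mul (a : Fin (m + 1) → ℝ) {G : ℝ → ℝ≥0∞}
    {H : (Fin m → ℝ) → ℝ≥0∞} (hG : Measurable G) (hH : Measurable H) :
    ∫⁻ y in interlaceDomain a, G (y 0) * H (fun i => y i.succ) =
      (∫⁻ t in Set.Ioi (0 : ℝ), G t) * ∫⁻ x in {x | Interlaces a x}, H x := by
  rw [← lintegral_prod_mul hG.aemeasurable hH.aemeasurable, Measure.prod_restrict]
  exact (volume_preserving_piFinSuccAbove (fun _ => ℝ) 0).setLIntegral_comp_preimage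
    (measurableSet_Ioi.prod (measurableSet_setOf_interlaces a))
    (f := fun p : ℝ × (Fin m → ℝ) => G p.1 * H p.2) (by fun_prop)

/-- The density on `{x | Interlaces a x}`, up to a constant, of the spectrum `x` of the corner of
a random conjugate of a skew-symmetric matrix with squared spectrum `-(a (κ i))²`. -/
def cornerDensity (κ : Fin (N + 1) → Fin (m + 1)) (a : Fin (m + 1) → ℝ) (x : Fin m → ℝ) : ℝ :=
  (∏ i, 2 * x i) * (vdm (fun i => x i ^ 2) / vdm (fun j => a j ^ 2)) *
    ∏ j, secularWeight (fun j => a j ^ 2) 1 (fun i => x i ^ 2) j ^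
      ((Fintype.card {i // κ i = j} : ℝ) / 2 - 1)

lemma measurable_cornerDensity (κ : Fin (N + 1) → Fin (m + 1)) (a : Fin (m + 1) → ℝ) :
    Measurable (cornerDensity κ a) := by
  unfold cornerDensity secularWeight vdm
  fun_prop

lemma prod_sqNormDensity_mul (hκ : Function.Surjective κ) {σ : ℝ} (hσ : 0 < σ)
    {w : Fin (m + 1) → ℝ} (hw : ∀ j, 0 < w j) :
    ENNReal.ofReal (σ ^ m) * ∏ j, sqNormDensity (Fintype.card {i // κ i = j}) (σ * w j) =
      ENNReal.ofReal (√Real.pi ^ (N + 1) /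
          (∏ j, Real.Gamma ((Fintype.card {i // κ i = j} : ℝ) / 2)) *
        (σ ^ (((N + 1 : ℕ) : ℝ) / 2 - 1) *
          ∏ j, w j ^ ((Fintype.card {i // κ i = j} : ℝ) / 2 - 1))) := by
  have hcard : ∑ j, Fintype.card {i // κ i = j} = N + 1 := by
    rw [← Fintype.card_sigma, Fintype.card_congr (Equiv.sigmaFiberEquiv κ), Fintype.card_fin]
  have hexp : (m : ℝ) + ∑ j, ((Fintype.card {i // κ i = j} : ℝ) / 2 - 1) =
      ((N + 1 : ℕ) : ℝ) / 2 - 1 := by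
    rw [Finset.sum_sub_distrib, ← Finset.sum_div, ← Nat.cast_sum, hcard]
    simp
    ring
  have hΓ (j : Fin (m + 1)) : 0 < Real.Gamma ((Fintype.card {i // κ i = j} : ℝ) / 2) := by
    have : Nonempty {i // κ i = j} := ⟨⟨_, (hκ j).choose_spec⟩⟩
    have := Fintype.card_pos (α := {i // κ i = j})
    exact Real.Gamma_pos_of_pos (by positivity)
  have hterm (j : Fin (m + 1)) : 0 ≤ √Real.pi ^ Fintype.card {i // κ i = j} /
      Real.Gamma ((Fintype.card {i // κ i = j} : ℝ) / 2) *
        (σ * w j) ^ ((Fintype.card {i // κ i = j} : ℝ) / 2 - 1) := by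
    have := hw j
    have := hΓ j
    positivity
  simp_rw [sqNormDensity]
  rw [← ENNReal.ofReal_prod_of_nonneg fun j _ => hterm j, ← ENNReal.ofReal_mul (by positivity),
    Finset.prod_mul_distrib, Finset.prod_div_distrib, Finset.prod_pow_eq_pow_sum, hcard]
  simp_rw [Real.mul_rpow hσ.le (hw _).le]
  rw [Finset.prod_mul_distrib, ← Real.rpow_sum_of_pos hσ, ← hexp, Real.rpow_add hσ,
    Real.rpow_natCast]
  ring_nf

lemma jacobian_mul_prod_sqNormDensity (hκ : Function.Surjective κ) (ha : StrictMono a)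
    (h0 : 0 ≤ a 0) {y : Fin (m + 1) → ℝ} (hy : y ∈ interlaceDomain a) :
    ENNReal.ofReal (y 0 ^ m * (∏ i : Fin m, 2 * y i.succ) *
        (vdm (fun i : Fin m => y i.succ ^ 2) / vdm (fun j => a j ^ 2))) *
      ∏ j, sqNormDensity (Fintype.card {i // κ i = j}) (secularMap (fun j => a j ^ 2) y j) =
    ENNReal.ofReal (√Real.pi ^ (N + 1) /
        (∏ j, Real.Gamma ((Fintype.card {i // κ i = j} : ℝ) / 2))) *
      (ENNReal.ofReal (y 0 ^ (((N + 1 : ℕ) : ℝ) / 2 - 1)) *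
        ENNReal.ofReal (cornerDensity κ a fun i => y i.succ)) := by
  have hσ := hy.1
  have hw := secularWeight_pos (strictMono_sq ha h0) one_pos
    ((interlaces_sq_iff ha.monotone h0 fun i => (hy.2.pos ha.monotone h0 i).le).2 hy.2)
  have hW : 0 ≤ ∏ j, secularWeight (fun j => a j ^ 2) 1 (fun i => y i.succ ^ 2) j ^
      ((Fintype.card {i // κ i = j} : ℝ) / 2 - 1) :=
    Finset.prod_nonneg fun j _ => Real.rpow_nonneg (hw j).le _
  have : 0 ≤ ∏ j, Real.Gamma ((Fintype.card {i // κ i = j} : ℝ) / 2) :=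
    Finset.prod_nonneg fun j _ => Real.Gamma_nonneg_of_nonneg (by positivity)
  have hsecular (j) : secularMap (fun j => a j ^ 2) y j =
      y 0 * secularWeight (fun j => a j ^ 2) 1 (fun i => y i.succ ^ 2) j := by
    simp only [secularMap, secularWeight]; ring
  simp_rw [hsecular]
  rw [mul_assoc (y 0 ^ m), ENNReal.ofReal_mul (by positivity), mul_right_comm,
    prod_sqNormDensity_mul hκ hσ hw, cornerDensity, ENNReal.ofReal_mul' hW,
    ENNReal.ofReal_mul (by positivity), ENNReal.ofReal_mul (by positivity)]
  ring

lemma lintegral_corner_eq_lintegral_cornerDensity (hκ : Function.Surjective κ) (ha : StrictMono a)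
    (h0 : 0 ≤ a 0) (hD : Dᵀ = -D) (hD2 : D * D = -diagonal fun i => a (κ i) ^ 2)
    (hT : IsSkewNormalForm T) (hTm : Measurable T) (hΦ : Measurable Φ)
    (hinv : ∀ (h : OG N) Y, Φ (orthConj h Y) = Φ Y) (μ : Measure (OG (N + 1)))
    [μ.IsHaarMeasure] [IsProbabilityMeasure μ] :
    ∫⁻ k, Φ (corner (orthConj k D)) ∂μ =
      ENNReal.ofReal (Real.Gamma (((N + 1 : ℕ) : ℝ) / 2) /
        ∏ j, Real.Gamma ((Fintype.card {i // κ i = j} : ℝ) / 2)) *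
      ∫⁻ x in {x | Interlaces a x}, ENNReal.ofReal (cornerDensity κ a x) * Φ (T x) := by
  have : 0 ≤ ∏ j, Real.Gamma ((Fintype.card {i // κ i = j} : ℝ) / 2) :=
    Finset.prod_nonneg fun j _ => Real.Gamma_nonneg_of_nonneg (by positivity)
  have hconst : ENNReal.ofReal (√Real.pi ^ (N + 1)) ≠ 0 :=
    (ENNReal.ofReal_pos.2 (by positivity)).ne'
  have hH : Measurable fun x => ENNReal.ofReal (cornerDensity κ a x) * Φ (T x) :=
    (measurable_cornerDensity κ a).ennreal_ofReal.mul (hΦ.comp hTm)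
  have hgauss := lintegral_gaussWeight_mul_lintegral_corner μ hΦ hinv D
  rw [lintegral_gaussWeight_mul_corner hκ ha h0 hD hD2 hT hΦ hinv, lintegral_gaussWeight,
    Fintype.card_fin] at hgauss
  rw [← ENNReal.mul_right_inj hconst ENNReal.ofReal_ne_top, hgauss, ← mul_assoc,
    ← ENNReal.ofReal_mul (by positivity), mul_div_left_comm, ENNReal.ofReal_mul' (by positivity),
    ← lintegral_Ioi_exp_neg_mul_rpow (by positivity), mul_assoc, mul_left_comm,
    ← lintegral_interlaceDomain_mul a (by fun_prop) hH,
    ← lintegral_const_mul' _ _ ENNReal.ofReal_ne_top]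
  refine setLIntegral_congr_fun (measurableSet_interlaceDomain a) fun y hy => ?_
  rw [← mul_assoc, jacobian_mul_prod_sqNormDensity hκ ha h0 hy, ENNReal.ofReal_mul (by positivity)]
  ring

end CornerLaw

/-! ### The laws of the corners of `D(a)` and `0 ⊕ D(b)` -/

section BlockIndex

variable {m : ℕ}

lemma surjective_blockOf : Function.Surjective (blockOf (m := m)) := fun j =>
  ⟨pairEquiv m (0, j), blockOf_pairEquiv _⟩

lemma card_blockOf_eq (j : Fin m) : Fintype.card {i // blockOf i = j} = 2 := by
  have hcard : Fintype.card {i // blockOf i = j} =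
      Fintype.card {p : Fin 2 × Fin m // p.2 = j} :=
    Fintype.card_congr ((pairEquiv m).symm.subtypeEquiv fun _ => Iff.rfl)
  have hprod : (Finset.univ.filter fun p : Fin 2 × Fin m => p.2 = j) =
      Finset.univ ×ˢ {j} := by
    ext p
    simp only [Finset.mem_filter_univ, Finset.mem_product, Finset.mem_singleton, Finset.mem_univ,
      true_and]
  rw [hcard, Fintype.card_subtype, hprod, Finset.card_product]
  simp

/-- The block of a row of `0 ⊕ D(b)`; row `0` forms a block by itself. -/
def oddBlockOf : Fin (2 * m + 1) → Fin (m + 1) := Fin.cons 0 fun i => (blockOf i).succ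

lemma surjective_oddBlockOf : Function.Surjective (oddBlockOf (m := m)) := by
  intro j
  cases j using Fin.cases with
  | zero => exact ⟨0, rfl⟩
  | succ j =>
    obtain ⟨i, hi⟩ := surjective_blockOf j
    exact ⟨i.succ, congrArg Fin.succ hi⟩

lemma card_oddBlockOf_eq_zero : Fintype.card {i // oddBlockOf (m := m) i = 0} = 1 := by
  rw [Fintype.card_subtype, Fin.card_filter_univ_succ]
  simp [oddBlockOf]

lemma card_oddBlockOf_eq_succ (j : Fin m) :
    Fintype.card {i // oddBlockOf i = j.succ} = 2 := by
  refine Eq.trans ?_ (card_blockOf_eq j)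
  rw [Fintype.card_subtype, Fintype.card_subtype, Fin.card_filter_univ_succ]
  simp [oddBlockOf, (Fin.succ_ne_zero _).symm]

end BlockIndex

section TwoCorners

variable {m : ℕ}

lemma measurable_Dmat : Measurable (Dmat (n := m)) := by
  refine measurable_matrix_iff.2 fun i j => ?_
  unfold Dmat
  simp only [of_apply]
  split_ifs <;> fun_prop

lemma measurable_oddDmat : Measurable (oddDmat (m := m)) := by
  refine measurable_matrix_iff.2 fun i j => ?_
  cases i using Fin.cases with
  | zero => simp
  | succ i =>
    cases j using Fin.cases with
    | zero => simp
    | succ j => simpa using measurable_matrix_iff.1 measurable_Dmat i j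

lemma cornerDensity_blockOf (a : Fin (m + 1) → ℝ) (b : Fin m → ℝ) :
    cornerDensity (N := 2 * m + 1) (blockOf (m := m + 1)) a b =
      (∏ i, 2 * b i) * (vdm (fun i => b i ^ 2) / vdm (fun j => a j ^ 2)) := by
  have hcard (j : Fin (m + 1)) :
      Fintype.card {i : Fin (2 * m + 1 + 1) // blockOf (m := m + 1) i = j} = 2 := card_blockOf_eq j
  have hexp : ((2 : ℕ) : ℝ) / 2 - 1 = 0 := by norm_num
  simp only [cornerDensity, hcard, hexp, Real.rpow_zero, Finset.prod_const_one, mul_one]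

lemma cornerDensity_oddBlockOf {b x : Fin m → ℝ} (hb : ∀ i, 0 < b i) (hx : ∀ i, 0 < x i) :
    cornerDensity oddBlockOf (Fin.cons 0 b) x =
      2 ^ m * (vdm (fun i => x i ^ 2) / (vdm (fun j => b j ^ 2) * ∏ i, b i)) := by
  have hsq : (fun j => (Fin.cons 0 b : Fin (m + 1) → ℝ) j ^ 2) = Fin.cons 0 fun i => b i ^ 2 := by
    ext j
    cases j using Fin.cases <;> simp
  have hweight : secularWeight (Fin.cons 0 fun i => b i ^ 2) 1 (fun i => x i ^ 2) 0 =
      ((∏ i, x i) / ∏ i, b i) ^ 2 := by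
    rw [secularWeight, nodalWeight_eq_prod_succAbove]
    simp only [Fin.cons_zero, Fin.succAbove_zero, Fin.cons_succ, zero_sub, one_mul]
    rw [← Finset.prod_mul_distrib, ← Finset.prod_div_distrib, ← Finset.prod_pow]
    refine Finset.prod_congr rfl fun i _ => ?_
    have := (hb i).ne'
    field_simp
  have hvdm : vdm (Fin.cons 0 fun i => b i ^ 2 : Fin (m + 1) → ℝ) =
      (∏ i, b i) ^ 2 * vdm (fun j => b j ^ 2) := by
    simp_rw [vdm_cons, sub_zero, Finset.prod_pow]
  have hbp : 0 < ∏ i, b i := Finset.prod_pos fun i _ => hb i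
  have hxp : 0 < ∏ i, x i := Finset.prod_pos fun i _ => hx i
  rw [cornerDensity, hsq, Fin.prod_univ_succ, hweight, hvdm, card_oddBlockOf_eq_zero]
  simp_rw [card_oddBlockOf_eq_succ]
  have hodd : (((∏ i, x i) / ∏ i, b i) ^ 2) ^ (((1 : ℕ) : ℝ) / 2 - 1) =
      (∏ i, b i) / ∏ i, x i := by
    have hexp : ((2 : ℕ) : ℝ) * (((1 : ℕ) : ℝ) / 2 - 1) = -1 := by norm_num
    rw [← Real.rpow_natCast_mul (by positivity), hexp, Real.rpow_neg_one, inv_div]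
  have heven : ((2 : ℕ) : ℝ) / 2 - 1 = 0 := by norm_num
  simp only [hodd, heven, Real.rpow_zero, Finset.prod_const_one, mul_one, Finset.prod_mul_distrib,
    Finset.prod_const, Finset.card_univ, Fintype.card_fin]
  field_simp

lemma lintegral_corner_Dmat {a : Fin (m + 1) → ℝ} (ha : StrictMono a) (h0 : 0 ≤ a 0)
    {Φ : Matrix (Fin (2 * m + 1)) (Fin (2 * m + 1)) ℝ → ℝ≥0∞} (hΦ : Measurable Φ)
    (hinv : ∀ (h : OG (2 * m + 1)) Y, Φ (orthConj h Y) = Φ Y) (μ : Measure (OG (2 * m + 1 + 1)))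
    [μ.IsHaarMeasure] [IsProbabilityMeasure μ] :
    ∫⁻ k, Φ (corner (orthConj k (Dmat a))) ∂μ =
      ENNReal.ofReal m.factorial * ∫⁻ b in {b | Interlaces a b},
        ENNReal.ofReal ((∏ i, 2 * b i) * (vdm (fun i => b i ^ 2) / vdm (fun j => a j ^ 2))) *
          Φ (oddDmat b) := by
  have hcard (j : Fin (m + 1)) :
      Fintype.card {i : Fin (2 * m + 1 + 1) // blockOf (m := m + 1) i = j} = 2 := card_blockOf_eq j
  have hconst : Real.Gamma (((2 * m + 1 + 1 : ℕ) : ℝ) / 2) = m.factorial := by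
    rw [← Real.Gamma_nat_eq_factorial]
    congr 1
    push_cast
    ring
  rw [lintegral_corner_eq_lintegral_cornerDensity (N := 2 * m + 1) (surjective_blockOf (m := m + 1))
    ha h0 (transpose_Dmat a) (Dmat_mul_self a) isSkewNormalForm_oddDmat measurable_oddDmat hΦ
    hinv μ]
  simp only [cornerDensity_blockOf, hconst, hcard, Nat.cast_ofNat, div_self (two_ne_zero (α := ℝ)),
    Real.Gamma_one, Finset.prod_const_one, div_one]

lemma lintegral_corner_oddDmat {b : Fin m → ℝ} (hb : StrictMono b) (h0 : ∀ i, 0 < b i)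
    {Φ : Matrix (Fin (2 * m)) (Fin (2 * m)) ℝ → ℝ≥0∞} (hΦ : Measurable Φ)
    (hinv : ∀ (h : OG (2 * m)) Y, Φ (orthConj h Y) = Φ Y) (μ : Measure (OG (2 * m + 1)))
    [μ.IsHaarMeasure] [IsProbabilityMeasure μ] :
    ∫⁻ k, Φ (corner (orthConj k (oddDmat b))) ∂μ =
      ENNReal.ofReal (Real.Gamma (m + 1 / 2) / √Real.pi) *
        ∫⁻ x in {x | Interlaces (Fin.cons 0 b) x}, ENNReal.ofReal
          (2 ^ m * (vdm (fun i => x i ^ 2) / (vdm (fun j => b j ^ 2) * ∏ i, b i))) *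
            Φ (Dmat x) := by
  have hmono : StrictMono (Fin.cons 0 b : Fin (m + 1) → ℝ) :=
    Fin.strictMono_cons.2 ⟨h0, hb⟩
  have hsq : oddDmat b * oddDmat b =
      -diagonal fun i => (Fin.cons 0 b : Fin (m + 1) → ℝ) (oddBlockOf i) ^ 2 := by
    rw [oddDmat_mul_self]
    congr 2
    ext i
    cases i using Fin.cases <;> simp [oddBlockOf]
  have hconst : ((2 * m + 1 : ℕ) : ℝ) / 2 = m + 1 / 2 := by push_cast; ring
  rw [lintegral_corner_eq_lintegral_cornerDensity surjective_oddBlockOf hmono le_rfl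
    (transpose_oddDmat b) hsq isSkewNormalForm_Dmat measurable_Dmat hΦ hinv μ, hconst,
    Fin.prod_univ_succ]
  simp only [card_oddBlockOf_eq_zero, card_oddBlockOf_eq_succ, Nat.cast_ofNat, Nat.cast_one,
    div_self (two_ne_zero (α := ℝ)), Real.Gamma_one, Finset.prod_const_one, mul_one,
    Real.Gamma_one_half_eq]
  congr 1
  refine setLIntegral_congr_fun (measurableSet_setOf_interlaces _) fun x hx => ?_
  simp only [cornerDensity_oddBlockOf h0 (hx.pos hmono.monotone le_rfl)]

end TwoCorners

/-! ### The determinant of the hinge matrix -/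

section Determinants

variable {R : Type*} [CommRing R] {m : ℕ}

lemma det_eq_of_forall_row_eq_add_succ {A B : Matrix (Fin (m + 1)) (Fin (m + 1)) R}
    (hlast : ∀ j, A (Fin.last m) j = B (Fin.last m) j)
    (hcast : ∀ (i : Fin m) j, A i.castSucc j = B i.castSucc j + A i.succ j) : A.det = B.det := by
  rw [← det_submatrix_equiv_self Fin.revPerm A, ← det_submatrix_equiv_self Fin.revPerm B]
  refine det_eq_of_forall_row_eq_smul_add_pred (fun _ => 1) (fun j => ?_) fun i j => ?_
  · simp [hlast]
  · simp [Fin.rev_succ, Fin.rev_castSucc, hcast]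

/-- Every permutation but the identity has an inversion, so its term in the determinant vanishes. -/
lemma det_eq_prod_diag_of_inversion {M : Matrix (Fin m) (Fin m) R}
    (hM : ∀ ⦃i j k l⦄, i < j → l < k → M k i * M l j = 0) : M.det = ∏ i, M i i := by
  rw [det_apply, Finset.sum_eq_single 1 (fun σ _ hσ => ?_) (by simp)]
  · simp
  · obtain ⟨i, j, hij, hσij⟩ : ∃ i j, i < j ∧ σ j < σ i := by
      by_contra! hmono
      exact hσ (σ.monotone_iff.1 (monotone_iff_forall_lt.2 hmono))
    rw [← Finset.mul_prod_erase _ _ (Finset.mem_univ i), ← Finset.mul_prod_erase _ _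
      (Finset.mem_erase.2 ⟨hij.ne', Finset.mem_univ j⟩), ← mul_assoc, hM hij hσij, zero_mul,
      smul_zero]

end Determinants

section Hinge

variable {m : ℕ}

/-- The matrix `M(x, a)` for `n = m + 1`, with `(a_k - x_j) · 1{a_k ≥ x_j}` written as the positive
part of `a_k - x_j`. -/
def hingeMatrix (x : Fin m → ℝ) (a : Fin (m + 1) → ℝ) : Matrix (Fin (m + 1)) (Fin (m + 1)) ℝ :=
  of fun b c => (Fin.cons 1 fun j => (a c - x j)⁺ : Fin (m + 1) → ℝ) b

lemma Mxa_eq_hingeMatrix (x : Fin m → ℝ) (a : Fin (m + 1) → ℝ) (hm : 2 ≤ m + 1) :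
    Mxa (n := m + 1) x a hm = hingeMatrix x a := by
  ext b c
  cases b using Fin.cases with
  | zero => simp [Mxa, hingeMatrix]
  | succ j =>
    rw [hingeMatrix, of_apply, Fin.cons_succ, posPart_eq_ite, Mxa]
    simp

lemma det_hingeMatrix (x : Fin m → ℝ) (a : Fin (m + 1) → ℝ) :
    (hingeMatrix x a).det =
      (of fun j k : Fin m => (a k.succ - x j)⁺ - (a k.castSucc - x j)⁺).det := by
  rw [det_eq_of_forall_col_eq_smul_add_pred (A := hingeMatrix x a) (B := of fun b c =>
    (Fin.cons (hingeMatrix x a b 0)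
      (fun k : Fin m => hingeMatrix x a b k.succ - hingeMatrix x a b k.castSucc) :
        Fin (m + 1) → ℝ) c) (fun _ => 1) (by simp) (by simp), det_succ_row_zero, Fin.sum_univ_succ]
  simp [hingeMatrix, submatrix]

/-- The matrix of lengths of the intersections `[y_j, y_{j+1}] ∩ [a_k, a_{k+1}]`. -/
def overlapMatrix (y a : Fin (m + 1) → ℝ) : Matrix (Fin m) (Fin m) ℝ :=
  of fun j k => (min (a k.succ) (y j.succ) - max (a k.castSucc) (y j.castSucc))⁺

lemma posPart_min_sub_max {p q u v : ℝ} (hpq : p ≤ q) (huv : u ≤ v) :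
    (min q v - max p u)⁺ = (q - u)⁺ - (p - u)⁺ - ((q - v)⁺ - (p - v)⁺) := by
  simp only [posPart_def, max_def, min_def]
  split_ifs <;> linarith

variable {y a : Fin (m + 1) → ℝ}

lemma det_overlapMatrix (hy : Monotone y) (ha : Monotone a) :
    (overlapMatrix y a).det = ∏ j, overlapMatrix y a j j := by
  refine det_eq_prod_diag_of_inversion fun i j k l hij hlk => ?_
  have hay : a i.succ ≤ a j.castSucc := ha (Fin.succ_le_castSucc_iff.2 hij)
  have hyl : y l.succ ≤ y k.castSucc := hy (Fin.succ_le_castSucc_iff.2 hlk)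
  simp only [overlapMatrix, of_apply, mul_eq_zero, posPart_eq_zero, sub_nonpos, min_le_iff,
    le_max_iff]
  grind

lemma det_hingeMatrix_eq_prod_overlapMatrix (hy : Monotone y) (ha : Monotone a)
    (hay : a (Fin.last m) ≤ y (Fin.last m)) :
    (hingeMatrix (fun j => y j.castSucc) a).det = ∏ j, overlapMatrix y a j j := by
  have hoverlap (j k : Fin m) : overlapMatrix y a j k = (a k.succ - y j.castSucc)⁺ -
      (a k.castSucc - y j.castSucc)⁺ - ((a k.succ - y j.succ)⁺ - (a k.castSucc - y j.succ)⁺) :=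
    posPart_min_sub_max (ha k.castSucc_le_succ) (hy j.castSucc_le_succ)
  rw [det_hingeMatrix, ← det_overlapMatrix hy ha]
  cases m with
  | zero => simp
  | succ m =>
    refine det_eq_of_forall_row_eq_add_succ (fun k => ?_) fun j k => ?_
    · have hzero (i : Fin (m + 1 + 1)) : (a i - y (Fin.last (m + 1)))⁺ = 0 :=
        posPart_eq_zero.2 (sub_nonpos.2 ((ha (Fin.le_last i)).trans hay))
      rw [of_apply, hoverlap, Fin.succ_last, hzero, hzero]
      simp
    · rw [hoverlap, of_apply, of_apply, Fin.succ_castSucc]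
      ring

lemma setOf_interlaces_and_interlaces :
    {b | Interlaces a b ∧ Interlaces y b} = Set.univ.pi fun i =>
      Set.Ioo (max (a i.castSucc) (y i.castSucc)) (min (a i.succ) (y i.succ)) := by
  ext b
  simp only [Interlaces, Set.mem_ofPred_eq, Set.mem_univ_pi, Set.mem_Ioo, max_lt_iff, lt_min_iff,
    ← forall_and]
  exact forall_congr' fun i => by tauto

lemma volume_setOf_interlaces_and_interlaces :
    volume {b | Interlaces a b ∧ Interlaces y b} = ENNReal.ofReal (∏ j, overlapMatrix y a j j) := by
  rw [setOf_interlaces_and_interlaces, Real.volume_pi_Ioo,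
    ENNReal.ofReal_prod_of_nonneg fun j _ => by exact posPart_nonneg _]
  exact Finset.prod_congr rfl fun j _ => by simp [overlapMatrix, posPart_def, ENNReal.ofReal_max]

end Hinge

section Sections

variable {m : ℕ} {a : Fin (m + 1) → ℝ} {x : Fin m → ℝ}

/-- The points of the positive orthant with increasing coordinates. -/
def sortedOrthant (m : ℕ) : Set (Fin m → ℝ) := {x | StrictMono x ∧ ∀ i, 0 < x i}

lemma measurableSet_sortedOrthant (m : ℕ) : MeasurableSet (sortedOrthant m) := by
  simp only [sortedOrthant, StrictMono]
  measurability

lemma interlaces_snoc_iff {C : ℝ} {b : Fin m → ℝ} (hx : ∀ i, 0 < x i) (hb : ∀ i, b i < C) :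
    Interlaces (Fin.snoc x C) b ↔ Interlaces (Fin.cons 0 b) x := by
  cases m with
  | zero => simp [Interlaces]
  | succ m =>
    simp only [Interlaces, forall_and, Fin.snoc_castSucc, Fin.cons_succ]
    have hleft : (∀ i : Fin (m + 1), (Fin.cons 0 b : Fin (m + 2) → ℝ) i.castSucc < x i) ↔
        ∀ i : Fin m, b i.castSucc < x i.succ := by
      simp [Fin.forall_fin_succ, hx]
    have hright : (∀ i : Fin (m + 1), b i < (Fin.snoc x C : Fin (m + 2) → ℝ) i.succ) ↔
        ∀ i : Fin m, b i.castSucc < x i.succ := by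
      simp [Fin.forall_fin_succ', Fin.succ_castSucc, hb, -Fin.castSucc_succ]
    rw [hleft, hright, and_comm]

lemma Interlaces.mem_sortedOrthant {b : Fin m → ℝ} (hb : Interlaces a b) (ha : StrictMono a)
    (h0 : 0 ≤ a 0) : b ∈ sortedOrthant m :=
  ⟨hb.strictMono ha.monotone, hb.pos ha.monotone h0⟩

lemma exists_monotone_snoc_le (hx : Monotone x) (c : ℝ) :
    ∃ C, c ≤ C ∧ Monotone (Fin.snoc x C : Fin (m + 1) → ℝ) := by
  obtain ⟨B, hB⟩ := (Set.finite_range x).bddAbove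
  refine ⟨max c B, le_max_left _ _, fun i j hij => ?_⟩
  cases j using Fin.lastCases with
  | last =>
    cases i using Fin.lastCases with
    | last => simp
    | cast i => simpa using .inr (hB ⟨i, rfl⟩)
  | cast j =>
    cases i using Fin.lastCases with
    | last => exact absurd hij (Fin.castSucc_lt_last j).not_ge
    | cast i => simpa using hx hij

lemma exists_det_hingeMatrix_eq (hx : x ∈ sortedOrthant m) (ha : Monotone a) :
    ∃ y : Fin (m + 1) → ℝ, (hingeMatrix x a).det = ∏ j, overlapMatrix y a j j ∧
      ∀ b, Interlaces a b → (Interlaces y b ↔ Interlaces (Fin.cons 0 b) x) := by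
  obtain ⟨C, hC, hmono⟩ := exists_monotone_snoc_le hx.1.monotone (a (Fin.last m))
  refine ⟨Fin.snoc x C, ?_, fun b hb => interlaces_snoc_iff hx.2 fun i => ?_⟩
  · simpa using det_hingeMatrix_eq_prod_overlapMatrix hmono ha (by simpa using hC)
  · exact ((hb i).2.trans_le (ha (Fin.le_last _))).trans_le hC

lemma det_hingeMatrix_nonneg (hx : x ∈ sortedOrthant m) (ha : Monotone a) :
    0 ≤ (hingeMatrix x a).det := by
  obtain ⟨y, hdet, -⟩ := exists_det_hingeMatrix_eq hx ha
  exact hdet ▸ Finset.prod_nonneg fun j _ => posPart_nonneg _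

lemma volume_setOf_interlaces_cons (ha : StrictMono a) (h0 : 0 ≤ a 0) (x : Fin m → ℝ) :
    volume {b | Interlaces a b ∧ Interlaces (Fin.cons 0 b) x} =
      (sortedOrthant m).indicator (fun x => ENNReal.ofReal (hingeMatrix x a).det) x := by
  by_cases hx : x ∈ sortedOrthant m
  · obtain ⟨y, hdet, hy⟩ := exists_det_hingeMatrix_eq hx ha.monotone
    rw [Set.indicator_of_mem hx, hdet, ← volume_setOf_interlaces_and_interlaces]
    congr 1
    ext b
    exact and_congr_right fun hb => (hy b hb).symm
  · rw [Set.indicator_of_notMem hx]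
    refine (congrArg volume (Set.eq_empty_of_forall_notMem fun b hb => hx ?_)).trans measure_empty
    have hb' := hb.1.mem_sortedOrthant ha h0
    exact hb.2.mem_sortedOrthant (Fin.strictMono_cons.2 hb'.symm) le_rfl

lemma lintegral_setLIntegral_prodMk_preimage {α β : Type*} [MeasurableSpace α] [MeasurableSpace β]
    {μ : Measure α} {ν : Measure β} [SFinite μ] [SFinite ν] {S : Set (α × β)}
    (hS : MeasurableSet S) {H : β → ℝ≥0∞} (hH : Measurable H) :
    ∫⁻ a, ∫⁻ b in Prod.mk a ⁻¹' S, H b ∂ν ∂μ = ∫⁻ b, H b * μ ((·, b) ⁻¹' S) ∂ν := by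
  have hfst (a : α) : ∫⁻ b in Prod.mk a ⁻¹' S, H b ∂ν =
      ∫⁻ b, S.indicator (fun p => H p.2) (a, b) ∂ν :=
    (lintegral_indicator (measurable_prodMk_left hS) _).symm
  have hsnd (b : β) : ∫⁻ a, S.indicator (fun p => H p.2) (a, b) ∂μ = H b * μ ((·, b) ⁻¹' S) :=
    lintegral_indicator_const (s := (·, b) ⁻¹' S) (measurable_prodMk_right hS) (H b)
  simp_rw [hfst]
  rw [lintegral_lintegral_swap (f := fun a b => S.indicator (fun p => H p.2) (a, b))
    ((hH.comp measurable_snd).indicator hS).aemeasurable]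
  simp_rw [hsnd]

lemma measurableSet_setOf_interlaces_cons (m : ℕ) :
    MeasurableSet {p : (Fin m → ℝ) × (Fin m → ℝ) | Interlaces (Fin.cons 0 p.1) p.2} := by
  simp only [Interlaces]
  measurability

lemma setLIntegral_interlaces_setLIntegral_interlaces (ha : StrictMono a) (h0 : 0 ≤ a 0)
    {H : (Fin m → ℝ) → ℝ≥0∞} (hH : Measurable H) :
    ∫⁻ b in {b | Interlaces a b}, ∫⁻ x in {x | Interlaces (Fin.cons 0 b) x}, H x =
      ∫⁻ x in sortedOrthant m, H x * ENNReal.ofReal (hingeMatrix x a).det := by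
  have hS := measurableSet_setOf_interlaces_cons m
  have hsec (x : Fin m → ℝ) : volume.restrict {b | Interlaces a b} ((·, x) ⁻¹'
        {p : (Fin m → ℝ) × (Fin m → ℝ) | Interlaces (Fin.cons 0 p.1) p.2}) =
      (sortedOrthant m).indicator (fun x => ENNReal.ofReal (hingeMatrix x a).det) x := by
    rw [Measure.restrict_apply (measurable_prodMk_right hS), Set.inter_comm,
      ← volume_setOf_interlaces_cons ha h0]
    rfl
  refine (lintegral_setLIntegral_prodMk_preimage hS hH).trans ?_
  simp_rw [hsec]
  rw [← lintegral_indicator (measurableSet_sortedOrthant m)]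
  simp only [Set.indicator_mul_right]

end Sections

/-! ### The law of the `2m × 2m` corner of `D(a)` -/

section TwoCornersComposed

variable {m : ℕ}

lemma factorial_mul_four_pow_mul_Gamma_add_half (m : ℕ) :
    m.factorial * (4 ^ m * (Real.Gamma (m + 1 / 2) / √Real.pi)) = (2 * m).factorial := by
  have hdup := Real.Gamma_mul_Gamma_add_half (m + 1 / 2)
  have hone : (m : ℝ) + 1 / 2 + 1 / 2 = m + 1 := by ring
  have htwo : 2 * ((m : ℝ) + 1 / 2) = (2 * m : ℕ) + 1 := by push_cast; ring
  have hpow : (2 : ℝ) ^ (1 - ((2 * m : ℕ) + 1 : ℝ)) = (4 ^ m)⁻¹ := by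
    rw [sub_add_cancel_right, Real.rpow_neg zero_le_two, Real.rpow_natCast, pow_mul]
    norm_num
  rw [hone, htwo, Real.Gamma_nat_eq_factorial, Real.Gamma_nat_eq_factorial, hpow] at hdup
  field_simp at hdup ⊢
  linear_combination hdup

/-- The upper-left `2m × 2m` block of `k D(a) kᵀ`. -/
def conjCorner (a : Fin (m + 1) → ℝ) (k : OG (2 * (m + 1))) :
    Matrix (Fin (2 * m)) (Fin (2 * m)) ℝ :=
  corner (corner (orthConj (N := 2 * m + 1 + 1) k (Dmat a)))

/-- The density, up to a constant and the spherical factor, of the recursion in the dimension. -/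
def recursionDensity (a : Fin (m + 1) → ℝ) (x : Fin m → ℝ) : ℝ :=
  vdm (fun i => x i ^ 2) / vdm (fun j => a j ^ 2) * (hingeMatrix x a).det

lemma measurable_vdm_sq : Measurable fun x : Fin m → ℝ => vdm fun i => x i ^ 2 := by
  unfold vdm
  fun_prop

lemma vdm_sq_pos {x : Fin m → ℝ} (hx : x ∈ sortedOrthant m) : 0 < vdm fun i => x i ^ 2 :=
  vdm_pos fun _ _ hij => pow_lt_pow_left₀ (hx.1 hij) (hx.2 _).le two_ne_zero

lemma ofReal_mul_lintegral_corner_oddDmat {a : Fin (m + 1) → ℝ}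
    (hva : 0 < vdm fun j => a j ^ 2) {b : Fin m → ℝ} (hb : b ∈ sortedOrthant m)
    (ν : Measure (OG (2 * m + 1))) [ν.IsHaarMeasure] [IsProbabilityMeasure ν]
    {Φ : Matrix (Fin (2 * m)) (Fin (2 * m)) ℝ → ℝ≥0∞} (hΦ : Measurable Φ)
    (hinv : ∀ (h : OG (2 * m)) Y, Φ (orthConj h Y) = Φ Y) :
    ENNReal.ofReal ((∏ i, 2 * b i) * (vdm (fun i => b i ^ 2) / vdm (fun j => a j ^ 2))) *
        ∫⁻ k, Φ (corner (orthConj k (oddDmat b))) ∂ν =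
      ENNReal.ofReal (4 ^ m * (Real.Gamma (m + 1 / 2) / √Real.pi)) *
        ∫⁻ x in {x | Interlaces (Fin.cons 0 b) x},
          ENNReal.ofReal (vdm (fun i => x i ^ 2) / vdm (fun j => a j ^ 2)) * Φ (Dmat x) := by
  have hprod : 0 < ∏ i, b i := Finset.prod_pos fun i _ => hb.2 i
  have hvb := vdm_sq_pos hb
  have : 0 < Real.Gamma (m + 1 / 2) := Real.Gamma_pos_of_pos (by positivity)
  rw [lintegral_corner_oddDmat hb.1 hb.2 hΦ hinv, ← mul_assoc, Finset.prod_mul_distrib,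
    ← ENNReal.ofReal_mul (by positivity), ← lintegral_const_mul' _ _ ENNReal.ofReal_ne_top,
    ← lintegral_const_mul' _ _ ENNReal.ofReal_ne_top]
  refine lintegral_congr fun x => ?_
  rw [← mul_assoc, ← mul_assoc, ← ENNReal.ofReal_mul (by positivity),
    ← ENNReal.ofReal_mul (by positivity)]
  simp only [Finset.prod_const, Finset.card_univ, Fintype.card_fin]
  congr 2
  have hfour : (4 : ℝ) ^ m = 2 ^ m * 2 ^ m := by rw [← mul_pow]; norm_num
  rw [hfour]
  field_simp

lemma lintegral_conjCorner_of_strictMono {a : Fin (m + 1) → ℝ} (ha : StrictMono a) (h0 : 0 ≤ a 0)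
    (μ : Measure (OG (2 * (m + 1)))) [μ.IsHaarMeasure] [IsProbabilityMeasure μ]
    (μ' : Measure (OG (2 * m))) [μ'.IsHaarMeasure] [IsProbabilityMeasure μ']
    {φ : Matrix (Fin (2 * m)) (Fin (2 * m)) ℝ → ℝ≥0∞} (hφ : Measurable φ) :
    ∫⁻ k, φ (conjCorner a k) ∂μ = ENNReal.ofReal (2 * m).factorial *
      ∫⁻ x in sortedOrthant m,
        ENNReal.ofReal (recursionDensity a x) * orbitAvg μ' φ (Dmat x) := by
  obtain ⟨ν, _, _⟩ := exists_isHaarMeasure_isProbabilityMeasure (OG (2 * m + 1))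
  have := isMulRightInvariant_of_isHaarMeasure ν
  have := isMulRightInvariant_of_isHaarMeasure μ'
  have hva : 0 < vdm fun j => a j ^ 2 := vdm_pos (strictMono_sq ha h0)
  have hφc : Measurable fun Y : Matrix (Fin (2 * m + 1)) (Fin (2 * m + 1)) ℝ => φ (corner Y) :=
    hφ.comp measurable_corner
  have hinner (b : Fin m → ℝ) (hb : b ∈ {b | Interlaces a b}) :
      ENNReal.ofReal ((∏ i, 2 * b i) * (vdm (fun i => b i ^ 2) / vdm (fun j => a j ^ 2))) *
        orbitAvg ν (fun Y => φ (corner Y)) (oddDmat b) = _ :=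
    (congrArg _ (lintegral_corner_eq_lintegral_orbitAvg ν μ' hφ (oddDmat b))).trans
      (ofReal_mul_lintegral_corner_oddDmat hva (Interlaces.mem_sortedOrthant hb ha h0) ν
        (measurable_orbitAvg μ' hφ) (orbitAvg_orthConj μ' φ))
  have hmeas : Measurable fun x : Fin m → ℝ =>
      ENNReal.ofReal (vdm (fun i => x i ^ 2) / vdm fun j => a j ^ 2) * orbitAvg μ' φ (Dmat x) :=
    (measurable_vdm_sq.div_const _).ennreal_ofReal.mul
      ((measurable_orbitAvg μ' hφ).comp measurable_Dmat)
  calc ∫⁻ k, φ (conjCorner a k) ∂μ = ENNReal.ofReal m.factorial * ∫⁻ b in {b | Interlaces a b},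
        ENNReal.ofReal ((∏ i, 2 * b i) * (vdm (fun i => b i ^ 2) / vdm (fun j => a j ^ 2))) *
          orbitAvg ν (fun Y => φ (corner Y)) (oddDmat b) :=
        (lintegral_corner_eq_lintegral_orbitAvg (N := 2 * m + 1) μ ν hφc (Dmat a)).trans
          (lintegral_corner_Dmat ha h0 (measurable_orbitAvg ν hφc) (orbitAvg_orthConj ν _) μ)
    _ = ENNReal.ofReal (2 * m).factorial * ∫⁻ x in sortedOrthant m,
        (ENNReal.ofReal (vdm (fun i => x i ^ 2) / vdm fun j => a j ^ 2) * orbitAvg μ' φ (Dmat x)) *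
          ENNReal.ofReal (hingeMatrix x a).det := by
        rw [setLIntegral_congr_fun (measurableSet_setOf_interlaces a) hinner,
          lintegral_const_mul' _ _ ENNReal.ofReal_ne_top, ← mul_assoc,
          ← ENNReal.ofReal_mul (by positivity), factorial_mul_four_pow_mul_Gamma_add_half,
          setLIntegral_interlaces_setLIntegral_interlaces ha h0 hmeas]
    _ = _ := by
        congr 1
        refine setLIntegral_congr_fun (measurableSet_sortedOrthant m) fun x hx => ?_
        rw [recursionDensity, ENNReal.ofReal_mul (div_pos (vdm_sq_pos hx) hva).le, mul_right_comm]

end TwoCornersComposed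

/-! ### Symmetrization over the order of the entries -/

section SortedCone

variable {m : ℕ}

lemma ae_injective_pi (m : ℕ) : ∀ᵐ x : Fin m → ℝ, Function.Injective x := by
  have hne (i j : Fin m) (hij : i ≠ j) : ∀ᵐ x : Fin m → ℝ, x i ≠ x j := by
    let L : (Fin m → ℝ) →ₗ[ℝ] ℝ := .proj (φ := fun _ => ℝ) i - .proj (φ := fun _ => ℝ) j
    have hL : L.ker ≠ ⊤ := fun h => by
      have hmem : (Pi.single i 1 : Fin m → ℝ) ∈ L.ker := h ▸ Submodule.mem_top
      simp [L, hij] at hmem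
    refine (congrArg volume ?_).trans (Measure.addHaar_submodule volume _ hL)
    ext x
    simp [L, sub_eq_zero]
  have hall : ∀ᵐ x : Fin m → ℝ, ∀ i j, i ≠ j → x i ≠ x j :=
    ae_all_iff.2 fun i => ae_all_iff.2 fun j => Filter.eventually_imp_distrib_left.2 (hne i j)
  filter_upwards [hall] with x hx i j hij
  exact not_imp_not.1 (hx i j) hij

lemma measurePreserving_comp_perm (σ : Equiv.Perm (Fin m)) :
    MeasurePreserving fun x : Fin m → ℝ => x ∘ σ :=
  volume_preserving_arrowCongr' σ.symm (MeasurableEquiv.refl ℝ) (.id volume)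

lemma strictMono_comp_perm_iff {x : Fin m → ℝ} (hx : Function.Injective x)
    (σ : Equiv.Perm (Fin m)) : StrictMono (x ∘ σ) ↔ σ = Tuple.sort x := by
  refine ⟨fun h => Tuple.eq_sort_iff.2 ⟨h.monotone, fun i j hij heq => ?_⟩, ?_⟩
  · exact absurd heq (h hij).ne
  · rintro rfl
    exact (Tuple.monotone_sort x).strictMono_of_injective (hx.comp (Equiv.injective _))

lemma measurableSet_setOf_strictMono (m : ℕ) : MeasurableSet {x : Fin m → ℝ | StrictMono x} := by
  simp only [StrictMono]
  measurability

/-- Up to a null set, the permuted copies of the sorted cone partition the space. -/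
lemma lintegral_eq_factorial_mul_setLIntegral_strictMono {G : (Fin m → ℝ) → ℝ≥0∞}
    (hG : Measurable G)
    (hsymm : ∀ (σ : Equiv.Perm (Fin m)) (x : Fin m → ℝ), Function.Injective x → G (x ∘ σ) = G x) :
    ∫⁻ x, G x = m.factorial * ∫⁻ x in {x : Fin m → ℝ | StrictMono x}, G x := by
  let cone (σ : Equiv.Perm (Fin m)) : Set (Fin m → ℝ) := (· ∘ σ) ⁻¹' {x | StrictMono x}
  have hcone (σ) : MeasurableSet (cone σ) :=
    (measurePreserving_comp_perm σ).measurable (measurableSet_setOf_strictMono m)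
  have hcover : ⋃ σ, cone σ =ᵐ[volume] Set.univ := by
    refine Filter.eventuallyEq_univ.2 ?_
    filter_upwards [ae_injective_pi m] with x hx
    exact Set.mem_iUnion.2 ⟨_, (strictMono_comp_perm_iff hx _).2 rfl⟩
  have hinj {σ x} (hx : x ∈ cone σ) : Function.Injective x :=
    (Equiv.injective_comp σ x).1 (StrictMono.injective hx)
  have hdisj : Pairwise (Function.onFun Disjoint cone) := fun σ τ hστ =>
    Set.disjoint_left.2 fun x hσ hτ => hστ <|
      ((strictMono_comp_perm_iff (hinj hσ) σ).1 hσ).trans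
        ((strictMono_comp_perm_iff (hinj hσ) τ).1 hτ).symm
  have hsection (σ) : ∫⁻ x in cone σ, G x = ∫⁻ x in {x : Fin m → ℝ | StrictMono x}, G x :=
    (setLIntegral_congr_fun (hcone σ) fun x hx => (hsymm σ x (hinj hx)).symm).trans
      ((measurePreserving_comp_perm σ).setLIntegral_comp_preimage
        (measurableSet_setOf_strictMono m) hG)
  rw [← setLIntegral_univ, ← setLIntegral_congr hcover, lintegral_iUnion hcone hdisj]
  simp [hsection, tsum_fintype, Fintype.card_perm]

lemma setLIntegral_posOrthant_eq_factorial_mul {G : (Fin m → ℝ) → ℝ≥0∞} (hG : Measurable G)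
    (hsymm : ∀ (σ : Equiv.Perm (Fin m)), ∀ x ∈ posOrthant m, Function.Injective x →
      G (x ∘ σ) = G x) :
    ∫⁻ x in posOrthant m, G x = m.factorial * ∫⁻ x in sortedOrthant m, G x := by
  have hposOrthant := measurableSet_posOrthant m
  have hmem (σ : Equiv.Perm (Fin m)) (x : Fin m → ℝ) : x ∘ σ ∈ posOrthant m ↔ x ∈ posOrthant m :=
    σ.forall_congr_left.trans (by simp [posOrthant])
  rw [← lintegral_indicator hposOrthant, lintegral_eq_factorial_mul_setLIntegral_strictMono
    (hG.indicator hposOrthant), lintegral_indicator hposOrthant,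
    Measure.restrict_restrict hposOrthant, Set.inter_comm]
  · rfl
  · intro σ x hx
    by_cases hpos : x ∈ posOrthant m
    · rw [Set.indicator_of_mem hpos, Set.indicator_of_mem ((hmem σ x).2 hpos), hsymm σ x hpos hx]
    · rw [Set.indicator_of_notMem hpos, Set.indicator_of_notMem (mt (hmem σ x).1 hpos)]

end SortedCone

section RecursionDensity

variable {m : ℕ}

lemma vdm_comp_perm {R : Type*} [CommRing R] (x : Fin m → R) (σ : Equiv.Perm (Fin m)) :
    vdm (x ∘ σ) = (Equiv.Perm.sign σ : ℤ) * vdm x := by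
  rw [vdm_eq_det_vandermonde, vdm_eq_det_vandermonde, ← det_permute]
  rfl

lemma det_hingeMatrix_comp_perm_left (x : Fin m → ℝ) (a : Fin (m + 1) → ℝ)
    (σ : Equiv.Perm (Fin m)) :
    (hingeMatrix (x ∘ σ) a).det = (Equiv.Perm.sign σ : ℤ) * (hingeMatrix x a).det := by
  rw [det_hingeMatrix, det_hingeMatrix, ← det_permute]
  rfl

lemma det_hingeMatrix_comp_perm_right (x : Fin m → ℝ) (a : Fin (m + 1) → ℝ)
    (σ : Equiv.Perm (Fin (m + 1))) :
    (hingeMatrix x (a ∘ σ)).det = (Equiv.Perm.sign σ : ℤ) * (hingeMatrix x a).det := by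
  rw [← det_permute']
  rfl

lemma sign_mul_sign_cast (σ : Equiv.Perm (Fin m)) :
    ((Equiv.Perm.sign σ : ℤ) : ℝ) * (Equiv.Perm.sign σ : ℤ) = 1 := by
  rcases Int.units_eq_one_or (Equiv.Perm.sign σ) with h | h <;> simp [h]

lemma recursionDensity_comp_perm_right (a : Fin (m + 1) → ℝ) (x : Fin m → ℝ)
    (σ : Equiv.Perm (Fin m)) : recursionDensity a (x ∘ σ) = recursionDensity a x := by
  have hvdm := vdm_comp_perm (fun i => x i ^ 2) σ
  simp only [Function.comp_def] at hvdm
  simp only [recursionDensity, det_hingeMatrix_comp_perm_left, Function.comp_apply, hvdm]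
  rw [mul_div_assoc, mul_mul_mul_comm, sign_mul_sign_cast, one_mul]

lemma recursionDensity_comp_perm_left (a : Fin (m + 1) → ℝ) (x : Fin m → ℝ)
    (σ : Equiv.Perm (Fin (m + 1))) : recursionDensity (a ∘ σ) x = recursionDensity a x := by
  have hvdm := vdm_comp_perm (fun i => a i ^ 2) σ
  have hsign : ((Equiv.Perm.sign σ : ℤ) : ℝ) ≠ 0 :=
    left_ne_zero_of_mul_eq_one (sign_mul_sign_cast σ)
  simp only [Function.comp_def] at hvdm
  simp only [recursionDensity, det_hingeMatrix_comp_perm_right, Function.comp_apply, hvdm]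
  field_simp

lemma recursionDensity_eq_zero_of_not_injective (a : Fin (m + 1) → ℝ) {x : Fin m → ℝ}
    (hx : ¬Function.Injective x) : recursionDensity a x = 0 := by
  obtain ⟨i, j, hxij, hij⟩ := Function.not_injective_iff.1 hx
  have hvdm : vdm (fun i => x i ^ 2) = 0 := by
    rw [vdm_eq_det_vandermonde]
    exact det_zero_of_row_eq hij (by ext k; simp [vandermonde_apply, hxij])
  rw [recursionDensity, hvdm, zero_div, zero_mul]

lemma recursionDensity_nonneg {a : Fin (m + 1) → ℝ} (ha : a ∈ posOrthant (m + 1))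
    (hinj : Function.Injective a) {x : Fin m → ℝ} (hx : x ∈ posOrthant m) :
    0 ≤ recursionDensity a x := by
  by_cases hxinj : Function.Injective x
  · rw [← recursionDensity_comp_perm_left a x (Tuple.sort a),
      ← recursionDensity_comp_perm_right _ x (Tuple.sort x)]
    have ha' := (strictMono_comp_perm_iff hinj _).2 rfl
    have hx' := (strictMono_comp_perm_iff hxinj _).2 rfl
    exact mul_nonneg (div_nonneg (vdm_sq_pos ⟨hx', fun _ => hx _⟩).le
      (vdm_sq_pos ⟨ha', fun _ => ha _⟩).le)
      (det_hingeMatrix_nonneg ⟨hx', fun _ => hx _⟩ ha'.monotone)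
  · exact (recursionDensity_eq_zero_of_not_injective a hxinj).ge

lemma measurable_recursionDensity (a : Fin (m + 1) → ℝ) : Measurable (recursionDensity a) := by
  have hdet : Measurable fun x : Fin m → ℝ => (hingeMatrix x a).det := by
    simp only [det_hingeMatrix]
    exact (Continuous.matrix_det (by fun_prop)).measurable
  exact (measurable_vdm_sq.div_const _).mul hdet

lemma exists_Dmat_comp_perm_eq_orthConj {x : Fin m → ℝ} (hx : x ∈ posOrthant m)
    (hinj : Function.Injective x) (σ : Equiv.Perm (Fin m)) :
    ∃ h : OG (2 * m), Dmat (x ∘ σ) = orthConj h (Dmat x) := by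
  refine isSkewNormalForm_Dmat _ (transpose_Dmat _) x hx hinj fun j => ?_
  obtain ⟨i, hi⟩ := surjective_blockOf (σ.symm j)
  refine ⟨Pi.single i 1, by simp, ?_⟩
  rw [mulVec_mulVec, Dmat_mul_self, neg_mulVec, diagonal_mulVec_single, Function.comp_apply, hi,
    σ.apply_symm_apply, neg_smul, ← Pi.single_smul, smul_eq_mul]

lemma orbitAvg_Dmat_comp_perm {x : Fin m → ℝ} (hx : x ∈ posOrthant m)
    (hinj : Function.Injective x) (σ : Equiv.Perm (Fin m)) (μ : Measure (OG (2 * m)))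
    [μ.IsMulRightInvariant] (φ : Matrix (Fin (2 * m)) (Fin (2 * m)) ℝ → ℝ≥0∞) :
    orbitAvg μ φ (Dmat (x ∘ σ)) = orbitAvg μ φ (Dmat x) := by
  obtain ⟨h, hh⟩ := exists_Dmat_comp_perm_eq_orthConj hx hinj σ
  rw [hh, orbitAvg_orthConj]

lemma lintegral_conjCorner {a : Fin (m + 1) → ℝ} (ha : a ∈ posOrthant (m + 1))
    (hinj : Function.Injective a) (μ : Measure (OG (2 * (m + 1)))) [μ.IsHaarMeasure]
    [IsProbabilityMeasure μ] (μ' : Measure (OG (2 * m))) [μ'.IsHaarMeasure]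
    [IsProbabilityMeasure μ'] {φ : Matrix (Fin (2 * m)) (Fin (2 * m)) ℝ → ℝ≥0∞}
    (hφ : Measurable φ) :
    ∫⁻ k, φ (conjCorner a k) ∂μ = ENNReal.ofReal ((2 * m).factorial / m.factorial) *
      ∫⁻ x in posOrthant m, ENNReal.ofReal (recursionDensity a x) * orbitAvg μ' φ (Dmat x) := by
  have := isMulRightInvariant_of_isHaarMeasure μ
  have := isMulRightInvariant_of_isHaarMeasure μ'
  have hsort : ∫⁻ k, φ (conjCorner a k) ∂μ = ∫⁻ k, φ (conjCorner (a ∘ Tuple.sort a) k) ∂μ :=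
    (orbitAvg_Dmat_comp_perm ha hinj (Tuple.sort a) μ
      fun Y => φ (corner (N := 2 * m) (corner (N := 2 * m + 1) Y))).symm
  have hmeas : Measurable fun x =>
      ENNReal.ofReal (recursionDensity a x) * orbitAvg μ' φ (Dmat x) :=
    (measurable_recursionDensity a).ennreal_ofReal.mul
      ((measurable_orbitAvg μ' hφ).comp measurable_Dmat)
  rw [hsort, lintegral_conjCorner_of_strictMono ((strictMono_comp_perm_iff hinj _).2 rfl)
    (ha _).le μ μ' hφ, setLIntegral_posOrthant_eq_factorial_mul hmeas, ← mul_assoc,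
    ← ENNReal.ofReal_natCast m.factorial, ← ENNReal.ofReal_mul (by positivity),
    div_mul_cancel₀ _ (by positivity)]
  · simp only [recursionDensity_comp_perm_left]
  · intro σ x hx hxinj
    rw [recursionDensity_comp_perm_right, orbitAvg_Dmat_comp_perm hx hxinj]

end RecursionDensity

/-! ### The integrand of `f_n(s, ·)` -/

section ComplexPower

lemma measurable_cpw (w : ℂ) : Measurable (cpw · w) := by
  unfold cpw
  exact .ite (measurableSet_singleton 0) measurable_const (by fun_prop)

lemma norm_cpw_le {w : ℂ} (hw : 0 ≤ w.re) {t C : ℝ} (ht : |t| ≤ C) :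
    ‖cpw t w‖ ≤ Real.exp (w.re * Real.log C) := by
  unfold cpw
  split_ifs with h
  · simpa using (Real.exp_pos _).le
  · rw [Complex.norm_exp, Complex.re_mul_ofReal, Real.exp_le_exp, ← Real.log_abs]
    exact mul_le_mul_of_nonneg_left (Real.log_le_log (abs_pos.2 h) ht) hw

lemma det_Dmat_sq {m : ℕ} (a : Fin m → ℝ) : (Dmat a).det ^ 2 = (∏ j, a j) ^ 4 := by
  rw [sq, ← det_mul, Dmat_mul_self, diagonal_neg, det_diagonal, ← (pairEquiv m).prod_comp,
    Fintype.prod_prod_type, Fin.prod_univ_two]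
  simp only [blockOf_pairEquiv, ← Finset.prod_mul_distrib, ← Finset.prod_pow]
  exact Finset.prod_congr rfl fun j _ => by ring

lemma cpw_det_Dmat {m : ℕ} (a : Fin m → ℝ) (w : ℂ) :
    cpw (Dmat a).det w = cpw (∏ j, a j) (2 * w) := by
  have hsq := det_Dmat_sq a
  have hzero : (Dmat a).det = 0 ↔ ∏ j, a j = 0 := by
    rw [← pow_eq_zero_iff two_ne_zero, hsq, pow_eq_zero_iff four_ne_zero]
  have hlog : Real.log (Dmat a).det = 2 * Real.log (∏ j, a j) := by
    have hlogsq := congrArg Real.log hsq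
    rw [Real.log_pow, Real.log_pow] at hlogsq
    push_cast at hlogsq
    linarith
  simp only [cpw, hzero, hlog]
  push_cast
  rw [mul_left_comm, mul_assoc]

end ComplexPower

section Integrand

variable {m n : ℕ}

/-- The minor `det Y_{[2(j+1)]}`, with `j` counted from `0`. -/
def leadingMinor (Y : Matrix (Fin (2 * n)) (Fin (2 * n)) ℝ) (j : Fin n) : ℝ :=
  (Y.submatrix (Fin.castLE (by have := j.isLt; omega : 2 * (j.val + 1) ≤ 2 * n))
    (Fin.castLE (by have := j.isLt; omega : 2 * (j.val + 1) ≤ 2 * n))).det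

lemma leadingMinor_eq_det (Y : Matrix (Fin (2 * n)) (Fin (2 * n)) ℝ) {j : Fin n}
    (hj : j.val + 1 = n) : leadingMinor Y j = Y.det := by
  obtain ⟨j, hjn⟩ := j
  obtain rfl : j + 1 = n := hj
  rfl

lemma leadingMinor_castSucc_orthConj_Dmat (a : Fin (m + 1) → ℝ) (k : OG (2 * (m + 1))) (j : Fin m) :
    leadingMinor (orthConj k (Dmat a)) j.castSucc = leadingMinor (conjCorner a k) j := rfl

lemma continuous_leadingMinor (j : Fin n) : Continuous (leadingMinor · j) :=
  (continuous_id.matrix_submatrix _ _).matrix_det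

/-- The integrand of `f_n(s, X)` as a function of `Y = k X kᵀ`. -/
def sphIntegrand (s : Fin n → ℂ) (Y : Matrix (Fin (2 * n)) (Fin (2 * n)) ℝ) : ℂ :=
  ∏ j, cpw (leadingMinor Y j) (expo n s j)

lemma sphInt_eq_integral_sphIntegrand (μ : Measure (OG (2 * n))) (s : Fin n → ℂ)
    (X : Matrix (Fin (2 * n)) (Fin (2 * n)) ℝ) :
    sphInt n μ s X = ∫ k, sphIntegrand s (orthConj k X) ∂μ := rfl

lemma measurable_sphIntegrand (s : Fin n → ℂ) : Measurable (sphIntegrand s) :=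
  Finset.measurable_prod _ fun j _ =>
    (measurable_cpw _).comp (continuous_leadingMinor j).measurable

lemma integrable_sphIntegrand_orthConj {s : Fin n → ℂ}
    (hs : ∀ j : Fin n, j.val + 1 < n → 0 ≤ (expo n s j).re)
    (X : Matrix (Fin (2 * n)) (Fin (2 * n)) ℝ) (μ : Measure (OG (2 * n))) [IsFiniteMeasure μ] :
    Integrable (fun k => sphIntegrand s (orthConj k X)) μ := by
  have hfactor (j : Fin n) :
      ∃ C, ∀ k : OG (2 * n), ‖cpw (leadingMinor (orthConj k X) j) (expo n s j)‖ ≤ C := by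
    by_cases hj : j.val + 1 < n
    · have hcont : Continuous fun k : OG (2 * n) => leadingMinor (orthConj k X) j := by
        refine (continuous_leadingMinor j).comp ?_
        unfold orthConj
        fun_prop
      obtain ⟨C, hC⟩ := isCompact_univ.exists_bound_of_continuousOn hcont.continuousOn
      exact ⟨_, fun k => norm_cpw_le (hs j hj) (hC k (Set.mem_univ k))⟩
    · have hlast : j.val + 1 = n := by omega
      exact ⟨_, fun k => by rw [leadingMinor_eq_det _ hlast, det_orthConj]⟩
  choose C hC using hfactor
  refine .of_bound (((measurable_sphIntegrand s).comp
    (measurable_orthConj measurable_id measurable_const)).aestronglyMeasurable) (∏ j, C j)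
    (ae_of_all _ fun k => ?_)
  rw [sphIntegrand, norm_prod]
  exact Finset.prod_le_prod (fun _ _ => norm_nonneg _) fun j _ => hC j k

lemma expo_re_of_lt (s : Fin n → ℂ) {j : Fin n} (hj : j.val + 1 < n) :
    (expo n s j).re = (s j - s ⟨j.val + 1, hj⟩).re / 2 - 1 := by
  rw [expo, dif_pos hj]
  simp

/-- The parameter `s'` of the recursion. -/
def recursionParam (s : Fin (m + 1) → ℂ) (j : Fin m) : ℂ :=
  s j.castSucc - s (Fin.last m) - (m + 1 : ℕ)

lemma expo_castSucc (s : Fin (m + 1) → ℂ) (j : Fin m) :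
    expo (m + 1) s j.castSucc = expo m (recursionParam s) j := by
  rw [expo, expo, dif_pos (by simp)]
  split_ifs with h
  · simp only [recursionParam, Fin.val_castSucc, Fin.castSucc_mk]
    ring
  · have hlast : (⟨j.castSucc.val + 1, by simp⟩ : Fin (m + 1)) = Fin.last m := by
      ext
      simp
      omega
    simp only [recursionParam, hlast]
    push_cast
    ring

lemma two_mul_expo_last (s : Fin (m + 1) → ℂ) :
    2 * expo (m + 1) s (Fin.last m) = s (Fin.last m) + (m + 1 : ℕ) - 1 := by
  rw [expo, dif_neg (by simp)]
  push_cast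
  ring

lemma sphIntegrand_orthConj_Dmat (s : Fin (m + 1) → ℂ) (a : Fin (m + 1) → ℝ)
    (k : OG (2 * (m + 1))) : sphIntegrand s (orthConj k (Dmat a)) =
      cpw (∏ j, a j) (s (Fin.last m) + (m + 1 : ℕ) - 1) *
        sphIntegrand (recursionParam s) (conjCorner a k) := by
  rw [sphIntegrand, Fin.prod_univ_castSucc, leadingMinor_eq_det _ (by simp), det_orthConj,
    cpw_det_Dmat, two_mul_expo_last, mul_comm]
  simp only [leadingMinor_castSucc_orthConj_Dmat, expo_castSucc, sphIntegrand]

end Integrand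

/-! ### The recursion -/

section Recursion

variable {m : ℕ} {a : Fin (m + 1) → ℝ}

/-- The measure with density `recursionDensity a` on the positive orthant: up to a constant, the
law of the normal form of the `2m × 2m` corner of `k D(a) kᵀ` for Haar distributed `k`. -/
def recursionMeasure (a : Fin (m + 1) → ℝ) : Measure (Fin m → ℝ) :=
  (volume.restrict (posOrthant m)).withDensity fun x => ENNReal.ofReal (recursionDensity a x)

instance sigmaFinite_recursionMeasure : SigmaFinite (recursionMeasure a) := by
  unfold recursionMeasure
  infer_instance

lemma measurable_orthConj_Dmat :
    Measurable fun p : (Fin m → ℝ) × OG (2 * m) => orthConj p.2 (Dmat p.1) :=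
  measurable_orthConj measurable_snd (measurable_Dmat.comp measurable_fst)

lemma measurable_conjCorner (a : Fin (m + 1) → ℝ) : Measurable (conjCorner a) :=
  measurable_corner.comp (measurable_corner_orthConj (N := 2 * m + 1) (Dmat a))

lemma map_conjCorner (ha : a ∈ posOrthant (m + 1)) (hinj : Function.Injective a)
    (μ : Measure (OG (2 * (m + 1)))) [μ.IsHaarMeasure] [IsProbabilityMeasure μ]
    (μ' : Measure (OG (2 * m))) [μ'.IsHaarMeasure] [IsProbabilityMeasure μ'] :
    μ.map (conjCorner a) = ENNReal.ofReal ((2 * m).factorial / m.factorial) •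
      ((recursionMeasure a).prod μ').map fun p => orthConj p.2 (Dmat p.1) := by
  refine Measure.ext_of_lintegral _ fun φ hφ => ?_
  have horbit := measurable_orbitAvg μ' hφ
  rw [lintegral_map hφ (measurable_conjCorner a), lintegral_smul_measure,
    lintegral_map hφ measurable_orthConj_Dmat,
    lintegral_prod (fun p => φ (orthConj p.2 (Dmat p.1)))
      (hφ.comp measurable_orthConj_Dmat).aemeasurable,
    recursionMeasure, lintegral_conjCorner ha hinj μ μ' hφ]
  exact congrArg _ (lintegral_withDensity_eq_lintegral_mul _
    (measurable_recursionDensity a).ennreal_ofReal (horbit.comp measurable_Dmat)).symm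

lemma integral_conjCorner {E : Type*} [NormedAddCommGroup E] [NormedSpace ℝ E]
    (ha : a ∈ posOrthant (m + 1)) (hinj : Function.Injective a)
    (μ : Measure (OG (2 * (m + 1)))) [μ.IsHaarMeasure] [IsProbabilityMeasure μ]
    (μ' : Measure (OG (2 * m))) [μ'.IsHaarMeasure] [IsProbabilityMeasure μ']
    {F : Matrix (Fin (2 * m)) (Fin (2 * m)) ℝ → E} (hF : StronglyMeasurable F)
    (hint : Integrable (fun k => F (conjCorner a k)) μ) :
    ∫ k, F (conjCorner a k) ∂μ = ((2 * m).factorial / m.factorial : ℝ) •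
      ∫ x in posOrthant m, recursionDensity a x • ∫ k, F (orthConj k (Dmat x)) ∂μ' := by
  have hconst : (0 : ℝ) < (2 * m).factorial / m.factorial := by positivity
  have hmap := map_conjCorner ha hinj μ μ'
  have hintProd : Integrable (fun p => F (orthConj p.2 (Dmat p.1)))
      ((recursionMeasure a).prod μ') := by
    have hintMap := (integrable_map_measure hF.aestronglyMeasurable
      (measurable_conjCorner a).aemeasurable).2 hint
    rw [hmap, integrable_smul_measure (ENNReal.ofReal_pos.2 hconst).ne' ENNReal.ofReal_ne_top]
      at hintMap
    exact (integrable_map_measure hF.aestronglyMeasurable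
      measurable_orthConj_Dmat.aemeasurable).1 hintMap
  rw [← integral_map (measurable_conjCorner a).aemeasurable hF.aestronglyMeasurable, hmap,
    integral_smul_measure, ENNReal.toReal_ofReal hconst.le,
    integral_map measurable_orthConj_Dmat.aemeasurable hF.aestronglyMeasurable,
    integral_prod _ hintProd, recursionMeasure, integral_withDensity_eq_integral_toReal_smul
      (measurable_recursionDensity a).ennreal_ofReal (ae_of_all _ fun _ => ENNReal.ofReal_lt_top)]
  congr 1
  refine setIntegral_congr_fun (measurableSet_posOrthant m) fun x hx => ?_
  simp only [ENNReal.toReal_ofReal (recursionDensity_nonneg ha hinj hx)]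

theorem sphInt_recursion_general (ha : a ∈ posOrthant (m + 1)) (hinj : Function.Injective a)
    (μ : Measure (OG (2 * (m + 1)))) [μ.IsHaarMeasure] [IsProbabilityMeasure μ]
    (μ' : Measure (OG (2 * m))) [μ'.IsHaarMeasure] [IsProbabilityMeasure μ']
    (s : Fin (m + 1) → ℂ)
    (hint : Integrable (fun k => sphIntegrand s (orthConj k (Dmat a))) μ) :
    sphInt (m + 1) μ s (Dmat a) = ((2 * m).factorial / m.factorial : ℂ) *
      cpw (∏ j, a j) (s (Fin.last m) + (m + 1 : ℕ) - 1) *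
        ∫ x in posOrthant m,
          (recursionDensity a x : ℂ) * sphInt m μ' (recursionParam s) (Dmat x) := by
  have hne : cpw (∏ j, a j) (s (Fin.last m) + (m + 1 : ℕ) - 1) ≠ 0 := by
    rw [cpw, if_neg (Finset.prod_pos fun j _ => ha j).ne']
    exact Complex.exp_ne_zero _
  simp only [sphIntegrand_orthConj_Dmat] at hint
  rw [integrable_const_mul_iff hne.isUnit] at hint
  rw [sphInt_eq_integral_sphIntegrand]
  simp only [sphIntegrand_orthConj_Dmat]
  rw [integral_const_mul, integral_conjCorner ha hinj μ μ'
    (measurable_sphIntegrand _).stronglyMeasurable hint, Complex.real_smul, mul_left_comm,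
    ← mul_assoc]
  simp only [Complex.real_smul, sphInt_eq_integral_sphIntegrand]
  push_cast
  rfl

end Recursion

/-- Lemma A.4: recursion in the dimension for `f_n(s, D(a))`. -/
theorem sphInt_recursion (n : ℕ) (hn : 2 ≤ n)
    (μ : Measure (OG (2 * n))) (hμ : μ.IsHaarMeasure) (hμ1 : IsProbabilityMeasure μ)
    (μ' : Measure (OG (2 * (n - 1)))) (hμ' : μ'.IsHaarMeasure)
    (hμ1' : IsProbabilityMeasure μ')
    (a : Fin n → ℝ) (ha : ∀ j, 0 < a j) (ha' : Function.Injective a)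
    (s : Fin n → ℂ)
    (hre : ∀ j : Fin n, ∀ h : j.val + 1 < n, 2 ≤ (s j - s ⟨j.val + 1, h⟩).re) :
    sphInt n μ s (Dmat a) =
      ((Nat.factorial (2 * n - 2) : ℂ) / (Nat.factorial (n - 1) : ℂ)) *
        cpw (∏ j, a j) (s ⟨n - 1, by omega⟩ + (n : ℂ) - 1) *
          ∫ x in {x : Fin (n - 1) → ℝ | ∀ j, 0 < x j},
            (((vdm fun j => (x j) ^ 2) / (vdm fun j => (a j) ^ 2) * (Mxa x a hn).det : ℝ) : ℂ) *
              sphInt (n - 1) μ'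
                (fun j : Fin (n - 1) =>
                  s ⟨j.val, by have := j.isLt; omega⟩ - s ⟨n - 1, by omega⟩ - (n : ℂ))
                (Dmat x) := by
  obtain ⟨m, rfl⟩ : ∃ m, n = m + 1 := ⟨n - 1, by omega⟩
  have hint := integrable_sphIntegrand_orthConj
    (fun j hj => by linarith [expo_re_of_lt s hj, hre j hj]) (Dmat a) μ
  have h := sphInt_recursion_general ha ha' μ μ' s hint
  simp only [recursionDensity, ← Mxa_eq_hingeMatrix _ a hn] at h
  exact h

end
end

section
/- Let ν > −1/2 be real. Then for every bounded measurable ψ : (0,∞) → ℝ, ∫_{M₂(ℝ)} ψ(|det z|) · |det z|^{2ν} · exp(−Tr(z zᵀ)/2) dz = 4π² · ∫₀^∞ ψ(t) · t^{2ν} · e^{−t} dt, where the left integral is with respect to Lebesgue measure on the space M₂(ℝ) ≅ ℝ⁴ of 2×2 real matrices. -/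
open MeasureTheory Matrix

noncomputable section

/-!
Identify a row vector in `ℝ²` with a complex number. The matrix `z` then acts by
`w ↦ u * w + v * conj w`, and `det z = |u|² - |v|²` while `Tr (z zᵀ) / 2 = |u|² + |v|²`. In polar
coordinates `|u|²` and `|v|²` turn Lebesgue measure into `4 π²` times Lebesgue measure on the
quadrant, so under the Gaussian weight they become independent exponential variables of rate `1`.
By memorylessness the absolute difference of two such variables is again exponential of rate `1`.
-/

open Measure ProbabilityTheory Set Module
open scoped ENNReal NNReal

section General

theorem map_withDensity_comp {α β : Type*} [MeasurableSpace α] [MeasurableSpace β] (μ : Measure α)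
    {f : α → β} (hf : Measurable f) {g : β → ℝ≥0∞} (hg : Measurable g) :
    (μ.withDensity (g ∘ f)).map f = (μ.map f).withDensity g := by
  ext s hs
  rw [map_apply hf hs, withDensity_apply _ (hf hs), withDensity_apply _ hs,
    setLIntegral_map hs hg hf]
  rfl

variable {E : Type*} [NormedAddCommGroup E] [NormedSpace ℝ E] [FiniteDimensional ℝ E]
  [MeasurableSpace E] [BorelSpace E] (μ : Measure E) [μ.IsAddHaarMeasure]

theorem map_half_add_half_sub_prod :
    (μ.prod μ).map (fun p ↦ ((2⁻¹ : ℝ) • (p.1 + p.2), (2⁻¹ : ℝ) • (p.1 - p.2))) =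
      (2 ^ finrank ℝ E : ℝ≥0∞) • μ.prod μ := by
  have half : (μ.prod μ).map (Prod.map id ((2⁻¹ : ℝ) • ·)) =
      (2 ^ finrank ℝ E : ℝ≥0∞) • μ.prod μ := by
    rw [← map_prod_map _ _ measurable_id (measurable_const_smul _), Measure.map_id,
      map_addHaar_smul μ (by norm_num), prod_smul_right]
    simp [abs_of_pos]
  have factor : (fun p : E × E ↦ ((2⁻¹ : ℝ) • (p.1 + p.2), (2⁻¹ : ℝ) • (p.1 - p.2))) =
      (fun p ↦ (p.2, -p.2 + p.1)) ∘ Prod.map id ((2⁻¹ : ℝ) • ·) ∘ fun p ↦ (p.1, p.1 + p.2) := by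
    funext p
    simp only [Function.comp_apply, Prod.map, id, Prod.mk.injEq, true_and]
    module
  rw [factor, ← map_map (by fun_prop) (by fun_prop), ← map_map (by fun_prop) (by fun_prop),
    (measurePreserving_prod_add μ μ).map_eq, half, Measure.map_smul,
    (measurePreserving_prod_neg_add_swap μ μ).map_eq]

theorem map_norm_pow_finrank [Nontrivial E] :
    μ.map (fun x ↦ ‖x‖ ^ finrank ℝ E) = μ (Metric.ball 0 1) • volume.restrict (Ioi (0 : ℝ)) := by
  have hd : finrank ℝ E ≠ 0 := finrank_pos.ne'
  have measure_Iic (r : ℝ) : μ.map (fun x ↦ ‖x‖ ^ finrank ℝ E) (Iic r) =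
      (μ (Metric.ball 0 1) • volume.restrict (Ioi (0 : ℝ))) (Iic r) := by
    rw [map_apply (by fun_prop) measurableSet_Iic, Measure.smul_apply,
      Measure.restrict_apply measurableSet_Iic, Iic_inter_Ioi, Real.volume_Ioc, sub_zero,
      smul_eq_mul]
    rcases lt_or_ge r 0 with hr | hr
    · have : (fun x : E ↦ ‖x‖ ^ finrank ℝ E) ⁻¹' Iic r = ∅ :=
        eq_empty_of_forall_notMem fun x hx ↦ (hr.trans_le (by positivity)).not_ge hx
      rw [this, measure_empty, ENNReal.ofReal_of_nonpos hr.le, mul_zero]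
    · obtain ⟨ρ, hρ, rfl⟩ : ∃ ρ : ℝ, 0 ≤ ρ ∧ ρ ^ finrank ℝ E = r :=
        ⟨_, by positivity, Real.rpow_inv_natCast_pow hr hd⟩
      have : (fun x : E ↦ ‖x‖ ^ finrank ℝ E) ⁻¹' Iic (ρ ^ finrank ℝ E) =
          Metric.closedBall 0 ρ := by
        ext x
        simp [pow_le_pow_iff_left₀ (norm_nonneg x) hρ hd]
      rw [this, addHaar_closedBall μ 0 hρ, mul_comm]
  have measure_Iic_ne_top (r : ℝ) :
      (μ (Metric.ball 0 1) • volume.restrict (Ioi (0 : ℝ))) (Iic r) ≠ ∞ := by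
    rw [Measure.smul_apply, Measure.restrict_apply measurableSet_Iic, Iic_inter_Ioi]
    exact ENNReal.mul_ne_top measure_ball_lt_top.ne measure_Ioc_lt_top.ne
  refine (ext_of_Ioc' _ _ (fun a b _ ↦ ?_) fun a b hab ↦ ?_).symm
  · exact measure_ne_top_of_subset Ioc_subset_Iic_self (measure_Iic_ne_top b)
  · rw [← Iic_sdiff_Iic, measure_sdiff (Iic_subset_Iic.2 hab.le) nullMeasurableSet_Iic,
      measure_sdiff (Iic_subset_Iic.2 hab.le) nullMeasurableSet_Iic, measure_Iic, measure_Iic]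
    · rw [measure_Iic]; exact measure_Iic_ne_top a
    · exact measure_Iic_ne_top a

theorem map_norm_sq_volume_complex :
    (volume : Measure ℂ).map (fun w ↦ ‖w‖ ^ 2) =
      (NNReal.pi : ℝ≥0∞) • volume.restrict (Ioi (0 : ℝ)) := by
  simpa using map_norm_pow_finrank (volume : Measure ℂ)

end General

section Exponential

theorem expMeasure_eq_withDensity (r : ℝ) :
    expMeasure r =
      (volume.restrict (Ioi 0)).withDensity fun t ↦ ENNReal.ofReal (r * Real.exp (-(r * t))) := by
  have pdf_eq : exponentialPDF r =
      (Ici 0).indicator fun t ↦ ENNReal.ofReal (r * Real.exp (-(r * t))) := by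
    funext t
    by_cases ht : 0 ≤ t <;> simp [exponentialPDF_eq, ht]
  rw [restrict_congr_set Ioi_ae_eq_Ici, ← withDensity_indicator measurableSet_Ici, ← pdf_eq]
  rfl

variable {r : ℝ}

theorem lintegral_expMeasure {f : ℝ → ℝ≥0∞} (hf : Measurable f) :
    ∫⁻ t, f t ∂expMeasure r =
      ∫⁻ t in Ioi 0, ENNReal.ofReal (r * Real.exp (-(r * t))) * f t := by
  rw [expMeasure_eq_withDensity, lintegral_withDensity_eq_lintegral_mul _ (by fun_prop) hf]
  rfl

theorem expMeasure_Ioi (hr : 0 < r) {t : ℝ} (ht : 0 ≤ t) :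
    expMeasure r (Ioi t) = ENNReal.ofReal (Real.exp (-(r * t))) := by
  have := isProbabilityMeasure_expMeasure hr
  rw [← compl_Iic, prob_compl_eq_one_sub measurableSet_Iic, ← ofReal_cdf,
    cdf_expMeasure_eq hr, if_pos ht, ← ENNReal.ofReal_one, ← ENNReal.ofReal_sub]
  · simp
  · simp only [sub_nonneg, Real.exp_le_one_iff]; nlinarith

theorem expMeasure_prod_add_lt (hr : 0 < r) {t : ℝ} (ht : 0 ≤ t) :
    (expMeasure r).prod (expMeasure r) {p | p.2 + t < p.1} =
      ENNReal.ofReal (Real.exp (-(r * t)) / 2) := by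
  have := isProbabilityMeasure_expMeasure hr
  have integral_exp : ∫ y in Ioi (0 : ℝ), r * Real.exp (-(r * t)) * Real.exp (-(2 * r) * y) =
      Real.exp (-(r * t)) / 2 := by
    rw [integral_const_mul, integral_exp_mul_Ioi (by linarith)]
    field_simp
    simp
  calc (expMeasure r).prod (expMeasure r) {p | p.2 + t < p.1}
      = ∫⁻ y, expMeasure r (Ioi (y + t)) ∂expMeasure r :=
        prod_apply_symm (measurableSet_lt (by fun_prop) (by fun_prop))
    _ = ∫⁻ y in Ioi 0, ENNReal.ofReal (r * Real.exp (-(r * t)) * Real.exp (-(2 * r) * y)) := by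
        rw [lintegral_expMeasure (Antitone.measurable fun _ _ h ↦ by gcongr)]
        refine setLIntegral_congr_fun measurableSet_Ioi fun y (hy : 0 < y) ↦ ?_
        rw [expMeasure_Ioi hr (by positivity), ← ENNReal.ofReal_mul (by positivity),
          mul_assoc, mul_assoc, ← Real.exp_add, ← Real.exp_add]
        ring_nf
    _ = ENNReal.ofReal (Real.exp (-(r * t)) / 2) := by
        rw [← integral_exp, ofReal_integral_eq_lintegral_ofReal]
        · exact (integrableOn_exp_mul_Ioi (by linarith) 0).const_mul _
        · exact .of_forall fun y ↦ by positivity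

theorem expMeasure_prod_lt_abs_sub (hr : 0 < r) {t : ℝ} (ht : 0 ≤ t) :
    (expMeasure r).prod (expMeasure r) {p | t < |p.1 - p.2|} =
      ENNReal.ofReal (Real.exp (-(r * t))) := by
  have := isProbabilityMeasure_expMeasure hr
  have hmeas : MeasurableSet {p : ℝ × ℝ | p.2 + t < p.1} :=
    measurableSet_lt (by fun_prop) (by fun_prop)
  have hunion : {p : ℝ × ℝ | t < |p.1 - p.2|} =
      {p | p.2 + t < p.1} ∪ Prod.swap ⁻¹' {p | p.2 + t < p.1} := by
    ext p
    simp only [lt_abs, mem_ofPred_eq, mem_union, mem_preimage, Prod.fst_swap, Prod.snd_swap]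
    grind
  have hdisj : Disjoint {p : ℝ × ℝ | p.2 + t < p.1} (Prod.swap ⁻¹' {p | p.2 + t < p.1}) :=
    disjoint_left.2 fun p (hp : p.2 + t < p.1) (hp' : p.1 + t < p.2) ↦ by linarith
  rw [hunion, measure_union hdisj (measurable_swap hmeas),
    measurePreserving_swap.measure_preimage hmeas.nullMeasurableSet,
    expMeasure_prod_add_lt hr ht, ← ENNReal.ofReal_add (by positivity) (by positivity),
    add_halves]

theorem map_abs_sub_expMeasure_prod (hr : 0 < r) :
    ((expMeasure r).prod (expMeasure r)).map (fun p ↦ |p.1 - p.2|) = expMeasure r := by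
  have := isProbabilityMeasure_expMeasure hr
  have hm : Measurable fun p : ℝ × ℝ ↦ |p.1 - p.2| := by fun_prop
  have := isProbabilityMeasure_map (μ := (expMeasure r).prod (expMeasure r)) hm.aemeasurable
  refine ext_of_Iic _ _ fun t ↦ ?_
  rcases lt_or_ge t 0 with ht | ht
  · have hempty : (fun p : ℝ × ℝ ↦ |p.1 - p.2|) ⁻¹' Iic t = ∅ :=
      eq_empty_of_forall_notMem fun p hp ↦ (ht.trans_le (abs_nonneg _)).not_ge hp
    rw [map_apply hm measurableSet_Iic, hempty, measure_empty, ← ofReal_cdf,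
      cdf_expMeasure_eq hr, if_neg ht.not_ge, ENNReal.ofReal_zero]
  · rw [← compl_Ioi, prob_compl_eq_one_sub measurableSet_Ioi,
      prob_compl_eq_one_sub measurableSet_Ioi, map_apply hm measurableSet_Ioi,
      expMeasure_Ioi hr ht]
    exact congrArg (1 - ·) (expMeasure_prod_lt_abs_sub hr ht)

end Exponential

section Ginibre

/-- The complex numbers `(u, v)` such that right multiplication by `z` sends the row vector
`w ∈ ℂ ≅ ℝ²` to `u * w + v * conj w`: the conformal and anticonformal parts of `z`.
They are recovered from `x = u + v`, the first row of `z`, and `y = u - v`, its second row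
divided by `I`. -/
def conformalParts (z : Fin 2 → Fin 2 → ℝ) : ℂ × ℂ :=
  let x : ℂ := z 0 0 + z 0 1 * Complex.I
  let y : ℂ := -Complex.I * (z 1 0 + z 1 1 * Complex.I)
  ((2⁻¹ : ℝ) • (x + y), (2⁻¹ : ℝ) • (x - y))

theorem measurable_conformalParts : Measurable conformalParts := by
  unfold conformalParts
  fun_prop

theorem conformalParts_eq_mk (z : Fin 2 → Fin 2 → ℝ) :
    conformalParts z = (⟨(z 0 0 + z 1 1) / 2, (z 0 1 - z 1 0) / 2⟩,
      ⟨(z 0 0 - z 1 1) / 2, (z 0 1 + z 1 0) / 2⟩) := by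
  refine Prod.ext (Complex.ext ?_ ?_) (Complex.ext ?_ ?_) <;>
  · simp [conformalParts]
    ring

theorem norm_sq_conformalParts_sub (z : Fin 2 → Fin 2 → ℝ) :
    ‖(conformalParts z).1‖ ^ 2 - ‖(conformalParts z).2‖ ^ 2 = (Matrix.of z).det := by
  simp only [conformalParts_eq_mk, Complex.sq_norm, Complex.normSq_mk, det_fin_two, of_apply]
  ring

theorem norm_sq_conformalParts_add (z : Fin 2 → Fin 2 → ℝ) :
    ‖(conformalParts z).1‖ ^ 2 + ‖(conformalParts z).2‖ ^ 2 =
      (Matrix.of z * (Matrix.of z)ᵀ).trace / 2 := by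
  simp only [conformalParts_eq_mk, Complex.sq_norm, Complex.normSq_mk, trace_fin_two, mul_apply,
    Fin.sum_univ_two, transpose_apply, of_apply]
  ring

theorem measurePreserving_row_rotatedRow :
    MeasurePreserving fun z : Fin 2 → Fin 2 → ℝ ↦
      ((z 0 0 + z 0 1 * Complex.I, -Complex.I * (z 1 0 + z 1 1 * Complex.I)) : ℂ × ℂ) := by
  have rows : MeasurePreserving fun z : Fin 2 → Fin 2 → ℝ ↦
      (Complex.measurableEquivPi.symm (z 0), Complex.measurableEquivPi.symm (z 1)) :=
    (volume_preserving_finTwoArrow ℂ).comp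
      (volume_preserving_pi fun _ ↦ Complex.volume_preserving_equiv_pi.symm)
  have hI : -Complex.I ∈ Submonoid.unitSphere ℂ := by simp [Submonoid.unitSphere]
  exact ((MeasurePreserving.id volume).prod
    (rotation ⟨-Complex.I, hI⟩).measurePreserving).comp rows

theorem map_conformalParts_volume :
    (volume : Measure (Fin 2 → Fin 2 → ℝ)).map conformalParts = (4 : ℝ≥0∞) • volume := by
  have hhalf : Measurable fun p : ℂ × ℂ ↦ ((2⁻¹ : ℝ) • (p.1 + p.2), (2⁻¹ : ℝ) • (p.1 - p.2)) := by
    fun_prop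
  have comp := map_map (μ := volume) hhalf measurePreserving_row_rotatedRow.measurable
  rw [measurePreserving_row_rotatedRow.map_eq, volume_eq_prod ℂ ℂ, map_half_add_half_sub_prod,
    Complex.finrank_real_complex] at comp
  calc volume.map conformalParts
      = (2 ^ 2 : ℝ≥0∞) • volume := comp.symm
    _ = (4 : ℝ≥0∞) • volume := by norm_num

theorem map_norm_sq_conformalParts_volume :
    (volume : Measure (Fin 2 → Fin 2 → ℝ)).map
        (fun z ↦ (‖(conformalParts z).1‖ ^ 2, ‖(conformalParts z).2‖ ^ 2)) =
      (4 * NNReal.pi ^ 2 : ℝ≥0∞) •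
        (volume.restrict (Ioi (0 : ℝ))).prod (volume.restrict (Ioi (0 : ℝ))) := by
  change volume.map (Prod.map (fun w : ℂ ↦ ‖w‖ ^ 2) (fun w ↦ ‖w‖ ^ 2) ∘ conformalParts) = _
  rw [← map_map (by fun_prop) measurable_conformalParts, map_conformalParts_volume,
    Measure.map_smul, volume_eq_prod, ← map_prod_map _ _ (by fun_prop) (by fun_prop),
    map_norm_sq_volume_complex, prod_smul_left, prod_smul_right, smul_smul, smul_smul]
  ring_nf

/-- The unnormalized Gaussian measure `exp (-Tr (z zᵀ) / 2) dz` on real `2 × 2` matrices. -/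
def ginibreMeasure : Measure (Fin 2 → Fin 2 → ℝ) :=
  volume.withDensity fun z ↦
    ENNReal.ofReal (Real.exp (-(Matrix.of z * (Matrix.of z)ᵀ).trace / 2))

theorem map_norm_sq_conformalParts_ginibreMeasure :
    ginibreMeasure.map (fun z ↦ (‖(conformalParts z).1‖ ^ 2, ‖(conformalParts z).2‖ ^ 2)) =
      (4 * NNReal.pi ^ 2 : ℝ≥0∞) • (expMeasure 1).prod (expMeasure 1) := by
  have density : ginibreMeasure = volume.withDensity
      ((fun p : ℝ × ℝ ↦ ENNReal.ofReal (Real.exp (-p.1)) * ENNReal.ofReal (Real.exp (-p.2))) ∘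
        fun z ↦ (‖(conformalParts z).1‖ ^ 2, ‖(conformalParts z).2‖ ^ 2)) := by
    refine congrArg _ (funext fun z ↦ ?_)
    rw [neg_div, ← norm_sq_conformalParts_add, neg_add, Real.exp_add,
      ENNReal.ofReal_mul (Real.exp_nonneg _)]
    rfl
  have := measurable_conformalParts
  rw [density, map_withDensity_comp _ (by fun_prop) (by fun_prop),
    map_norm_sq_conformalParts_volume, withDensity_smul_measure,
    ← prod_withDensity (f := fun s ↦ ENNReal.ofReal (Real.exp (-s)))
      (g := fun s ↦ ENNReal.ofReal (Real.exp (-s))) (by fun_prop) (by fun_prop)]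
  simp only [expMeasure_eq_withDensity, one_mul]

theorem map_abs_det_ginibreMeasure :
    ginibreMeasure.map (fun z ↦ |(Matrix.of z).det|) =
      (4 * NNReal.pi ^ 2 : ℝ≥0∞) • expMeasure 1 := by
  have := measurable_conformalParts
  simp only [← norm_sq_conformalParts_sub]
  rw [← map_abs_sub_expMeasure_prod one_pos, ← Measure.map_smul,
    ← map_norm_sq_conformalParts_ginibreMeasure, map_map (by fun_prop) (by fun_prop)]
  rfl

theorem ginibre_det_density_general {E : Type*} [NormedAddCommGroup E] [NormedSpace ℝ E]
    {f : ℝ → E} (hf : AEStronglyMeasurable f (volume.restrict (Ioi 0))) :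
    (Integrable (fun z : Fin 2 → Fin 2 → ℝ ↦
        Real.exp (-(Matrix.of z * (Matrix.of z)ᵀ).trace / 2) • f |(Matrix.of z).det|) ↔
      IntegrableOn (fun t ↦ Real.exp (-t) • f t) (Ioi 0)) ∧
    ∫ z : Fin 2 → Fin 2 → ℝ,
        Real.exp (-(Matrix.of z * (Matrix.of z)ᵀ).trace / 2) • f |(Matrix.of z).det| =
      (4 * Real.pi ^ 2) • ∫ t in Ioi 0, Real.exp (-t) • f t := by
  have hdet : Measurable fun z : Fin 2 → Fin 2 → ℝ ↦ |(Matrix.of z).det| := by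
    simp only [det_fin_two, of_apply]
    fun_prop
  have hweight : Measurable fun z : Fin 2 → Fin 2 → ℝ ↦
      ENNReal.ofReal (Real.exp (-(Matrix.of z * (Matrix.of z)ᵀ).trace / 2)) := by
    simp only [trace_fin_two, mul_apply, Fin.sum_univ_two, transpose_apply, of_apply]
    fun_prop
  have hexp : Measurable fun t ↦ ENNReal.ofReal (Real.exp (-t)) := by fun_prop
  have hf' : AEStronglyMeasurable f (ginibreMeasure.map fun z ↦ |(Matrix.of z).det|) := by
    rw [map_abs_det_ginibreMeasure, expMeasure_eq_withDensity]
    exact (hf.mono_ac (withDensity_absolutelyContinuous _ _)).smul_measure _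
  constructor
  · have := integrable_map_measure hf' hdet.aemeasurable
    rw [map_abs_det_ginibreMeasure,
      integrable_smul_measure (by simp [NNReal.pi_ne_zero]) (by finiteness),
      expMeasure_eq_withDensity, ginibreMeasure] at this
    simpa [integrable_withDensity_iff_integrable_smul', hweight, hexp, IntegrableOn,
      Real.exp_nonneg] using this.symm
  · have := integral_map hdet.aemeasurable hf'
    rw [map_abs_det_ginibreMeasure, integral_smul_measure,
      expMeasure_eq_withDensity, ginibreMeasure] at this
    simpa [integral_withDensity_eq_integral_toReal_smul, hweight, hexp,
      Real.exp_nonneg] using this.symm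

end Ginibre

/-- Eq. (4.4): the density of `|det z|` in the induced `2×2` real
Ginibre ensemble. -/
theorem ginibre_det_density (ν : ℝ) (hν : -(1 / 2 : ℝ) < ν) :
    ∀ ψ : ℝ → ℝ, Measurable ψ → (∃ C, ∀ t, |ψ t| ≤ C) →
      (∫ z : Fin 2 → Fin 2 → ℝ,
          ψ |(Matrix.of z).det| * |(Matrix.of z).det| ^ (2 * ν) *
            Real.exp (-(Matrix.of z * (Matrix.of z)ᵀ).trace / 2)) =
        4 * Real.pi ^ 2 *
          ∫ t in Set.Ioi (0 : ℝ), ψ t * t ^ (2 * ν) * Real.exp (-t) := by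
  intro ψ hψ _
  have hf : Measurable fun t ↦ ψ t * t ^ (2 * ν) := by fun_prop
  simpa only [smul_eq_mul, mul_comm] using
    (ginibre_det_density_general hf.aestronglyMeasurable).2

end
end
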